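/- Let c₀ ∈ {1,2}. Define ν(0;3,c₀) = 1/3, ν(1;3,c₀) = (2/3)·(π/√3 − ln 3 − 1/2), ν(2;3,c₀) = (8/3)·(ln 3 − 1), ν(3;3,c₀) = 626/105 − 2π/√3 − 2·ln 3, ν(4;3,c₀) = (4/3)·(π/√3 − 23/35 − ln 3), ν(5;3,c₀) = (4/3)·ln 3 − 193/135, and ν(r;3,c₀) = 8/(3(2r−5)(2r−3)(2r−1)) for r ≥ 6. Then there is an absolute constant C such that for all integers Q ≥ 2 and r ≥ 0 with r ≤ (Q/ln Q)^{1/3}, one has |ν(Q;r,3,c₀) − ν(r;3,c₀)| ≤ C·(ln Q)/Q. -/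

import Mathlib

open MeasureTheory

/-- The Farey series Φ_Q: all irreducible fractions a/q with 0 ≤ a ≤ q ≤ Q, as a finset of ℚ
(rationals in [0,1] with denominator at most Q). -/
def farey (Q : ℕ) : Finset ℚ :=
  (Finset.Icc 1 Q).biUnion fun q => (Finset.range (q + 1)).image fun a : ℕ => (a : ℚ) / (q : ℚ)

/-- N(Q;r,D,c₀): the number of tuples of r+2 consecutive fractions of Φ_Q whose first and last
denominators are ≡ c₀ (mod D) and whose r interior denominators are ≢ c₀ (mod D). -/
noncomputable def NN (Q r D c0 : ℕ) : ℕ :=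
  Set.ncard {f : Fin (r + 2) → ℚ |
    (∀ i, f i ∈ farey Q) ∧
    (∀ i : Fin (r + 1), f i.castSucc < f i.succ ∧
      ∀ z ∈ farey Q, ¬ (f i.castSucc < z ∧ z < f i.succ)) ∧
    (f 0).den % D = c0 % D ∧
    (f (Fin.last (r + 1))).den % D = c0 % D ∧
    ∀ i : Fin (r + 2), i ≠ 0 → i ≠ Fin.last (r + 1) → (f i).den % D ≠ c0 % D}

/-- N(Q;D,c₀): the number of fractions of Φ_Q whose denominator is ≡ c₀ (mod D). -/
def ND (Q D c0 : ℕ) : ℕ :=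
  ((farey Q).filter fun x => x.den % D = c0 % D).card

/-- The proportion ν(Q;r,D,c₀). -/
noncomputable def nuQ (Q r D c0 : ℕ) : ℝ :=
  (NN Q r D c0 : ℝ) / (ND Q D c0 : ℝ)

/-- The limiting proportions ν(r;3,c₀). -/
noncomputable def nulim : ℕ → ℝ
  | 0 => 1 / 3
  | 1 => 2 / 3 * (Real.pi / Real.sqrt 3 - Real.log 3 - 1 / 2)
  | 2 => 8 / 3 * (Real.log 3 - 1)
  | 3 => 626 / 105 - 2 * Real.pi / Real.sqrt 3 - 2 * Real.log 3
  | 4 => 4 / 3 * (Real.pi / Real.sqrt 3 - 23 / 35 - Real.log 3)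
  | 5 => 4 / 3 * Real.log 3 - 193 / 135
  | r => 8 / (3 * (2 * (r : ℝ) - 5) * (2 * (r : ℝ) - 3) * (2 * (r : ℝ) - 1))

namespace FareyGap

open Filter Topology Finset

lemma tendsto_sum_sub_mod_three :
    Tendsto (fun N : ℕ => ∑ j ∈ range N, (1 / (3 * (j : ℝ) + 1) - 1 / (3 * (j : ℝ) + 2)))
      atTop (𝓝 (Real.pi / (3 * √3))) := by
  have h3 : √3 * √3 = (3 : ℝ) := Real.mul_self_sqrt (by norm_num)
  have h3p : 0 < √(3 : ℝ) := Real.sqrt_pos.2 (by norm_num)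
  have hpos : ∀ x : ℝ, 0 < 1 + x + x ^ 2 := fun x => by nlinarith [sq_nonneg (x + 1 / 2)]
  have hcont : Continuous fun x : ℝ => 1 / (1 + x + x ^ 2) :=
    continuous_const.div (by fun_prop) fun x => (hpos x).ne'
  have h_integral : ∫ x in (0 : ℝ)..1, 1 / (1 + x + x ^ 2) = Real.pi / (3 * √3) := by
    have hd : ∀ x ∈ Set.uIcc (0 : ℝ) 1, HasDerivAt
        (fun x : ℝ => 2 / √3 * Real.arctan ((2 * x + 1) / √3)) (1 / (1 + x + x ^ 2)) x := by
      intro x _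
      have h1 : HasDerivAt (fun x : ℝ => (2 * x + 1) / √3) (2 / √3) x := by
        have := (((hasDerivAt_id x).const_mul 2).add_const 1).div_const √3
        simpa using this
      refine ((h1.arctan).const_mul (2 / √3)).congr_deriv ?_
      have : 1 + ((2 * x + 1) / √3) ^ 2 = 4 / 3 * (1 + x + x ^ 2) := by
        rw [div_pow, sq √3, h3]; ring
      rw [this]
      have := (hpos x).ne'
      field_simp
      rw [sq √3, h3]
      norm_num
    rw [intervalIntegral.integral_eq_sub_of_hasDerivAt hd (hcont.intervalIntegrable _ _)]
    have e1 : (2 * (1 : ℝ) + 1) / √3 = √3 := by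
      rw [div_eq_iff h3p.ne', h3]; norm_num
    have e2 : (2 * (0 : ℝ) + 1) / √3 = (√3)⁻¹ := by
      simp
    rw [e1, e2, Real.arctan_sqrt_three, Real.arctan_inv_sqrt_three]
    field_simp
    norm_num
  have hsum : ∀ N : ℕ, ∑ j ∈ range N, (1 / (3 * (j : ℝ) + 1) - 1 / (3 * (j : ℝ) + 2))
      = ∫ x in (0 : ℝ)..1, (1 / (1 + x + x ^ 2) - x ^ (3 * N) * (1 / (1 + x + x ^ 2))) := by
    intro N
    have e : ∀ x : ℝ, (1 / (1 + x + x ^ 2) - x ^ (3 * N) * (1 / (1 + x + x ^ 2)))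
        = ∑ j ∈ range N, (x ^ (3 * j) - x ^ (3 * j + 1)) := by
      intro x
      have := (hpos x).ne'
      induction N with
      | zero => simp
      | succ n ih =>
        rw [sum_range_succ, ← ih]
        field_simp
        ring
    simp_rw [e]
    rw [intervalIntegral.integral_finsetSum]
    · refine sum_congr rfl fun j _ => ?_
      rw [intervalIntegral.integral_sub ((continuous_pow _).intervalIntegrable _ _)
        ((continuous_pow _).intervalIntegrable _ _), integral_pow, integral_pow]
      simp
      ring
    · intro j _
      exact (by fun_prop : Continuous fun x : ℝ => x ^ (3 * j) - x ^ (3 * j + 1)).intervalIntegrable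
        _ _
  have hb : ∀ N : ℕ, |∫ x in (0 : ℝ)..1, x ^ (3 * N) * (1 / (1 + x + x ^ 2))|
      ≤ 1 / ((N : ℝ) + 1) := by
    intro N
    have h0 : 0 ≤ ∫ x in (0 : ℝ)..1, x ^ (3 * N) * (1 / (1 + x + x ^ 2)) :=
      intervalIntegral.integral_nonneg (by norm_num) fun x hx => by
        have := hpos x
        have := hx.1
        positivity
    rw [abs_of_nonneg h0]
    calc _ ≤ ∫ x in (0 : ℝ)..1, x ^ (3 * N) := by
          refine intervalIntegral.integral_mono_on (by norm_num)
            (((continuous_pow _).mul hcont).intervalIntegrable _ _)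
            ((continuous_pow _).intervalIntegrable _ _) fun x hx => ?_
          have h1 : 1 / (1 + x + x ^ 2) ≤ 1 := by
            rw [div_le_one (hpos x)]
            nlinarith [hx.1, sq_nonneg x]
          have := pow_nonneg hx.1 (3 * N)
          nlinarith
      _ ≤ _ := by
          rw [integral_pow]
          simp only [one_pow, ne_eq, Nat.add_eq_zero_iff, one_ne_zero, and_false,
            not_false_eq_true, zero_pow, sub_zero]
          have : (0 : ℝ) ≤ N := Nat.cast_nonneg N
          apply one_div_le_one_div_of_le (by positivity)
          push_cast
          linarith
  have hz : Tendsto (fun N : ℕ => ∫ x in (0 : ℝ)..1, x ^ (3 * N) * (1 / (1 + x + x ^ 2)))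
      atTop (𝓝 0) :=
    squeeze_zero_norm (fun N => by simpa using hb N)
      (tendsto_one_div_add_atTop_nhds_zero_nat (𝕜 := ℝ))
  have : Tendsto (fun N : ℕ => Real.pi / (3 * √3)
      - ∫ x in (0 : ℝ)..1, x ^ (3 * N) * (1 / (1 + x + x ^ 2))) atTop
      (𝓝 (Real.pi / (3 * √3) - 0)) := tendsto_const_nhds.sub hz
  rw [sub_zero] at this
  refine this.congr fun N => ?_
  have hc : Continuous fun x : ℝ => x ^ (3 * N) * (1 / (1 + x + x ^ 2)) :=
    (continuous_pow _).mul hcont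
  rw [hsum, intervalIntegral.integral_sub (hcont.intervalIntegrable _ _)
    (hc.intervalIntegrable _ _), h_integral]

lemma tendsto_sum_log_three :
    Tendsto (fun N : ℕ => ∑ j ∈ range N,
      (1 / (3 * (j : ℝ) + 1) + 1 / (3 * (j : ℝ) + 2) - 2 / (3 * (j : ℝ) + 3)))
      atTop (𝓝 (Real.log 3)) := by
  have hs : ∀ N : ℕ, ∑ j ∈ range N,
      (1 / (3 * (j : ℝ) + 1) + 1 / (3 * (j : ℝ) + 2) - 2 / (3 * (j : ℝ) + 3))
      = (harmonic (3 * N) : ℝ) - harmonic N := by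
    intro N
    induction N with
    | zero => simp
    | succ n ih =>
      rw [sum_range_succ, ih, show 3 * (n + 1) = 3 * n + 1 + 1 + 1 by ring, harmonic_succ,
        harmonic_succ, harmonic_succ, harmonic_succ]
      push_cast
      have : (3 * (n : ℝ) + 3) = 3 * (n + 1) := by ring
      rw [this, show (3 * (n : ℝ) + 1 + 1) = 3 * n + 2 by ring,
        show (3 * (n : ℝ) + 2 + 1) = 3 * (n + 1) by ring]
      have : (0 : ℝ) < n + 1 := by positivity
      field_simp
      ring
  have h1 := Real.tendsto_harmonic_sub_log
  have h2 : Tendsto (fun N : ℕ => 3 * N) atTop atTop :=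
    tendsto_id.const_mul_atTop' (by norm_num)
  have h3 := ((h1.comp h2).sub h1).add_const (Real.log 3)
  rw [sub_self, zero_add] at h3
  refine h3.congr' ?_
  filter_upwards [eventually_gt_atTop 0] with N hN
  have hN' : (N : ℝ) ≠ 0 := by positivity
  rw [hs]
  simp only [Function.comp_apply]
  push_cast
  rw [Real.log_mul (by norm_num) hN']
  ring

/-- The area of the cell of the Farey triangle on which the index equals `k`. -/
noncomputable def cellArea (k : ℕ) : ℝ := 4 / ((k : ℝ) * (k + 1) * (k + 2))

lemma cellArea_eq {k : ℕ} (hk : 0 < k) :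
    cellArea k = 2 / (k : ℝ) - 4 / (k + 1) + 2 / (k + 2) := by
  have : (0 : ℝ) < k := by exact_mod_cast hk
  unfold cellArea
  field_simp
  ring

/-- The total area of the cells of index `≡ i + 2` modulo `3`, index at least `2`. -/
noncomputable def classArea : Fin 3 → ℝ
  | 0 => 2 * (Real.log 3 - 1)
  | 1 => 3 - Real.pi / √3 - Real.log 3
  | 2 => Real.pi / √3 - Real.log 3 - 2 / 3

lemma tendsto_sum_cellArea (i : Fin 3) :
    Tendsto (fun N : ℕ => ∑ j ∈ range N, cellArea (3 * j + 2 + i)) atTop (𝓝 (classArea i)) := by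
  have h1 := tendsto_sum_sub_mod_three
  have h2 := tendsto_sum_log_three
  have hpi : 3 * (Real.pi / (3 * √3)) = Real.pi / √3 := by
    have : 0 < √(3 : ℝ) := Real.sqrt_pos.2 (by norm_num)
    field_simp
  have hN : Tendsto (fun N : ℕ => 3 * (N : ℝ)) atTop atTop :=
    tendsto_natCast_atTop_atTop.const_mul_atTop (by norm_num)
  have hz : ∀ c : ℝ, Tendsto (fun N : ℕ => 1 / (3 * (N : ℝ) + c)) atTop (𝓝 0) := fun c => by
    simpa [Function.comp_def] using
      tendsto_inv_atTop_zero.comp (tendsto_atTop_add_const_right _ c hN)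
  have hz1 := hz 1
  have hz2 := hz 2
  have hz3 := hz 3
  fin_cases i
  · have := (h2.const_mul 2).add ((hz1.sub_const 1).const_mul 2)
    simp only [classArea]
    rw [show 2 * (Real.log 3 - 1) = 2 * Real.log 3 + 2 * (0 - 1) by ring]
    refine this.congr fun N => ?_
    induction N with
    | zero => simp
    | succ n ih =>
      rw [sum_range_succ, sum_range_succ, ← ih, cellArea_eq (by positivity)]
      push_cast
      simp only [add_zero]
      have : (0 : ℝ) ≤ n := Nat.cast_nonneg n
      have e1 : (3 * ((n : ℝ) + 1) + 1) = 3 * n + 4 := by ring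
      have e2 : (3 * (n : ℝ) + 2 + 1) = 3 * n + 3 := by ring
      have e3 : (3 * (n : ℝ) + 2 + 2) = 3 * n + 4 := by ring
      rw [e1, e2, e3]
      field_simp
      ring
  · have := ((h1.const_mul (-3)).sub h2).add
      (((hz1.const_mul (-4)).add (hz2.const_mul 2)).add_const 3)
    simp only [classArea]
    rw [show 3 - Real.pi / √3 - Real.log 3
      = -3 * (Real.pi / (3 * √3)) - Real.log 3 + (-4 * 0 + 2 * 0 + 3) by rw [← hpi]; ring]
    refine this.congr fun N => ?_
    induction N with
    | zero => norm_num
    | succ n ih =>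
      rw [sum_range_succ, sum_range_succ, sum_range_succ, ← ih, cellArea_eq (by positivity)]
      push_cast
      have : (0 : ℝ) ≤ n := Nat.cast_nonneg n
      have e1 : (3 * ((n : ℝ) + 1) + 1) = 3 * n + 4 := by ring
      have e2 : (3 * ((n : ℝ) + 1) + 2) = 3 * n + 5 := by ring
      have e3 : (3 * (n : ℝ) + 2 + 1) = 3 * n + 3 := by ring
      have e4 : (3 * (n : ℝ) + 3 + 1) = 3 * n + 4 := by ring
      have e5 : (3 * (n : ℝ) + 3 + 2) = 3 * n + 5 := by ring
      rw [e1, e2, e3, e4, e5]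
      field_simp
      ring
  · have := ((h1.const_mul 3).sub h2).add
      (((hz1.const_mul 2).add (hz2.const_mul (-4))).add ((hz3.const_mul 2).sub_const (2 / 3)))
    simp only [classArea]
    rw [show Real.pi / √3 - Real.log 3 - 2 / 3
      = 3 * (Real.pi / (3 * √3)) - Real.log 3 + (2 * 0 + -4 * 0 + (2 * 0 - 2 / 3)) by
        rw [← hpi]; ring]
    refine this.congr fun N => ?_
    induction N with
    | zero => norm_num
    | succ n ih =>
      rw [sum_range_succ, sum_range_succ, sum_range_succ, ← ih, cellArea_eq (by positivity)]
      push_cast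
      have : (0 : ℝ) ≤ n := Nat.cast_nonneg n
      have e1 : (3 * ((n : ℝ) + 1) + 1) = 3 * n + 4 := by ring
      have e2 : (3 * ((n : ℝ) + 1) + 2) = 3 * n + 5 := by ring
      have e3 : (3 * ((n : ℝ) + 1) + 3) = 3 * n + 6 := by ring
      have e4 : (3 * (n : ℝ) + 2 + 2) = 3 * n + 4 := by ring
      have e5 : (3 * (n : ℝ) + 4 + 1) = 3 * n + 5 := by ring
      have e6 : (3 * (n : ℝ) + 4 + 2) = 3 * n + 6 := by ring
      rw [e1, e2, e3, e4, e5, e6]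
      field_simp
      ring

lemma cellArea_nonneg (k : ℕ) : 0 ≤ cellArea k := by
  unfold cellArea
  positivity

lemma sum_cellArea_le (i : Fin 3) (N M : ℕ) :
    ∑ j ∈ range M, cellArea (3 * (N + j) + 2 + i)
      ≤ 1 / ((N : ℝ) + 1) ^ 2 - 1 / ((N : ℝ) + M + 1) ^ 2 := by
  induction M with
  | zero => simp
  | succ M ih =>
    rw [sum_range_succ]
    have hle : cellArea (3 * (N + M) + 2 + i)
        ≤ 1 / ((N : ℝ) + M + 1) ^ 2 - 1 / ((N : ℝ) + (M + 1 : ℕ) + 1) ^ 2 := by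
      have hi : (0 : ℝ) ≤ ((i : ℕ) : ℝ) := Nat.cast_nonneg _
      have hx : (0 : ℝ) ≤ (N : ℝ) + M := by positivity
      unfold cellArea
      push_cast
      rw [← add_assoc (N : ℝ) (M : ℝ) 1]
      generalize (N : ℝ) + M = x at hx
      calc 4 / ((3 * x + 2 + (i : ℕ)) * (3 * x + 2 + (i : ℕ) + 1) * (3 * x + 2 + (i : ℕ) + 2))
          ≤ 4 / ((3 * x + 2) * (3 * x + 2 + 1) * (3 * x + 2 + 2)) := by
            have h1 : 3 * x + 2 ≤ 3 * x + 2 + ((i : ℕ) : ℝ) := by linarith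
            gcongr
        _ ≤ 1 / (x + 1) ^ 2 - 1 / (x + 1 + 1) ^ 2 := by
            rw [div_sub_div _ _ (by positivity) (by positivity),
              div_le_div_iff₀ (by positivity) (by positivity)]
            have : 0 ≤ x ^ 2 := by positivity
            have : 0 ≤ x ^ 3 := by positivity
            have : 0 ≤ x ^ 4 := by positivity
            nlinarith
    linarith

lemma abs_classArea_sub_sum_le (i : Fin 3) (N : ℕ) :
    |classArea i - ∑ j ∈ range N, cellArea (3 * j + 2 + i)| ≤ 1 / ((N : ℝ) + 1) ^ 2 := by
  have ht := tendsto_sum_cellArea i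
  have hsplit : ∀ M, ∑ j ∈ range (N + M), cellArea (3 * j + 2 + i)
      = ∑ j ∈ range N, cellArea (3 * j + 2 + i)
        + ∑ j ∈ range M, cellArea (3 * (N + j) + 2 + i) := fun M => sum_range_add _ _ _
  have hle : classArea i ≤ ∑ j ∈ range N, cellArea (3 * j + 2 + i) + 1 / ((N : ℝ) + 1) ^ 2 := by
    refine le_of_tendsto ht ?_
    filter_upwards [eventually_ge_atTop N] with K hK
    obtain ⟨M, rfl⟩ := Nat.exists_eq_add_of_le hK
    have := sum_cellArea_le i N M
    have h2 : 0 ≤ 1 / ((N : ℝ) + M + 1) ^ 2 := by positivity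
    rw [hsplit]
    linarith
  have hge : ∑ j ∈ range N, cellArea (3 * j + 2 + i) ≤ classArea i := by
    refine ge_of_tendsto ht ?_
    filter_upwards [eventually_ge_atTop N] with K hK
    obtain ⟨M, rfl⟩ := Nat.exists_eq_add_of_le hK
    rw [hsplit]
    have : 0 ≤ ∑ j ∈ range M, cellArea (3 * (N + j) + 2 + i) :=
      sum_nonneg fun j _ => cellArea_nonneg _
    linarith
  rw [abs_of_nonneg (by linarith)]
  linarith

lemma exists_class_mem_Ioc (β : ZMod 3) (n : ℕ) : ∃ x : ℕ, n < x ∧ x ≤ n + 3 ∧ (x : ZMod 3) = β := by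
  have h : ∀ a b : ZMod 3, a + 1 = b ∨ a + 2 = b ∨ a + 3 = b := by decide
  rcases h n β with h | h | h
  · exact ⟨n + 1, by omega, by omega, by exact_mod_cast h⟩
  · exact ⟨n + 2, by omega, by omega, by exact_mod_cast h⟩
  · exact ⟨n + 3, by omega, by omega, by exact_mod_cast h⟩

lemma abs_card_class_sub_le {S : Finset ℕ} {β : ZMod 3} {L U : ℝ} (hL : 0 ≤ L)
    (h1 : ∀ x ∈ S, (x : ZMod 3) = β ∧ L ≤ x ∧ (x : ℝ) ≤ U)
    (h2 : ∀ x : ℕ, (x : ZMod 3) = β → L < x → (x : ℝ) < U → x ∈ S) :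
    |(#S : ℝ) - max (U - L) 0 / 3| ≤ 1 := by
  have hlow : (U - L) / 3 - 1 ≤ #S := by
    obtain ⟨x₀, hx1, hx2, hx3⟩ := exists_class_mem_Ioc β ⌊L⌋₊
    have hx1' : L < x₀ := (Nat.floor_lt hL).1 hx1
    have hx2' : (x₀ : ℝ) ≤ L + 3 := by
      have := Nat.floor_le hL
      have : (x₀ : ℝ) ≤ (⌊L⌋₊ : ℝ) + 3 := by exact_mod_cast hx2
      linarith
    have hsub : (range ⌈(U - L) / 3 - 1⌉₊).image (fun j => x₀ + 3 * j) ⊆ S := by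
      intro x hx
      obtain ⟨j, hj, rfl⟩ := mem_image.1 hx
      have hj' : (j : ℝ) < (U - L) / 3 - 1 := Nat.lt_ceil.1 (mem_range.1 hj)
      have hz : (3 : ZMod 3) = 0 := by decide
      refine h2 _ ?_ ?_ ?_
      · push_cast
        rw [hx3, hz]; ring
      · push_cast
        have : (0 : ℝ) ≤ j := Nat.cast_nonneg j
        linarith
      · push_cast
        linarith
    have hc := card_le_card hsub
    rw [card_image_of_injective _ (fun a b h => by simpa using h), card_range] at hc
    calc _ ≤ (⌈(U - L) / 3 - 1⌉₊ : ℝ) := Nat.le_ceil _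
      _ ≤ _ := by exact_mod_cast hc
  have hup : (#S : ℝ) ≤ max (U - L) 0 / 3 + 1 := by
    rcases S.eq_empty_or_nonempty with rfl | hS
    · simp only [card_empty, Nat.cast_zero]
      positivity
    · set m := S.min' hS
      set M := S.max' hS
      have hm := h1 _ (S.min'_mem hS)
      have hM := h1 _ (S.max'_mem hS)
      have hc : #S ≤ #(range ((M - m) / 3 + 1)) := by
        refine card_le_card_of_injOn (fun x => (x - m) / 3) ?_ ?_
        · intro x hx
          have a1 := S.min'_le x hx
          have a2 := S.le_max' x hx
          have : (x - m) / 3 ≤ (M - m) / 3 := Nat.div_le_div_right (by omega)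
          simpa using Nat.lt_succ_of_le this
        · intro x hx y hy hxy
          have a1 := S.min'_le x hx
          have a2 := S.min'_le y hy
          have e1 := (ZMod.natCast_eq_natCast_iff' x m 3).1 ((h1 x hx).1.trans hm.1.symm)
          have e2 := (ZMod.natCast_eq_natCast_iff' y m 3).1 ((h1 y hy).1.trans hm.1.symm)
          simp only at hxy
          change m ≤ x at a1
          change m ≤ y at a2
          omega
      rw [card_range] at hc
      have hmM : m ≤ M := S.min'_le _ (S.max'_mem hS)
      have h3 : 3 * ((M - m) / 3) ≤ M - m := Nat.mul_div_le _ _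
      have h3' : 3 * ((((M - m) / 3 : ℕ)) : ℝ) ≤ (M : ℝ) - m := by
        rw [← Nat.cast_sub hmM]; exact_mod_cast h3
      have hc' : (#S : ℝ) ≤ ((M - m) / 3 : ℕ) + 1 := by exact_mod_cast hc
      have := le_max_left (U - L) 0
      linarith [hm.2.1, hM.2.2]
  rw [abs_le]
  constructor
  · rcases le_total (U - L) 0 with h | h
    · rw [max_eq_right h]
      have : (0 : ℝ) ≤ #S := Nat.cast_nonneg _
      linarith
    · rw [max_eq_left h]
      linarith
  · linarith

lemma abs_sum_range_sub_le {h : ℝ} (hh : 0 < h) (n : ℕ) (S : ℝ) (h0 : 0 ≤ S) (hS : S ≤ n * h) :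
    |∑ j ∈ range n, max (S - h * j) 0 - S ^ 2 / (2 * h) - S / 2| ≤ h / 8 := by
  induction n generalizing S with
  | zero =>
    have : S = 0 := le_antisymm (by simpa using hS) h0
    subst this
    simp
    positivity
  | succ n ih =>
    rw [sum_range_succ']
    simp only [Nat.cast_zero, mul_zero, sub_zero, max_eq_left h0]
    have e : ∀ j : ℕ, S - h * ((j + 1 : ℕ) : ℝ) = (S - h) - h * j := fun j => by push_cast; ring
    simp_rw [e]
    rcases le_total h S with hle | hle
    · have := ih (S - h) (by linarith) (by push_cast at hS; linarith)
      convert this using 2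
      field_simp
      ring
    · have : ∑ j ∈ range n, max (S - h - h * j) 0 = 0 := by
        refine sum_eq_zero fun j _ => max_eq_right ?_
        have : (0 : ℝ) ≤ h * j := by positivity
        linarith
      rw [this]
      have e : 0 + S - S ^ 2 / (2 * h) - S / 2 = h / 8 - (2 * S - h) ^ 2 / (8 * h) := by
        field_simp
        ring
      have e2 : 0 + S - S ^ 2 / (2 * h) - S / 2 = S * (h - S) / (2 * h) := by
        field_simp
        ring
      rw [abs_of_nonneg]
      · rw [e]
        have : 0 ≤ (2 * S - h) ^ 2 / (8 * h) := by positivity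
        linarith
      · rw [e2]
        have : 0 ≤ h - S := by linarith
        positivity

/-- The positive integers up to `M` in the residue class `α` modulo `3`. -/
def classUpTo (α : ZMod 3) (M : ℕ) : Finset ℕ := {y ∈ Icc 1 M | (y : ZMod 3) = α}

lemma mem_classUpTo {α : ZMod 3} {M y : ℕ} :
    y ∈ classUpTo α M ↔ (1 ≤ y ∧ y ≤ M) ∧ (y : ZMod 3) = α := by
  simp [classUpTo]

lemma sum_classUpTo_eq (α : ZMod 3) {r : ℕ} (hr : (r : ZMod 3) = α) (hr1 : 1 ≤ r) (hr3 : r ≤ 3)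
    (M : ℕ) (g : ℕ → ℝ) (hg : ∀ y, M < y → g y = 0) :
    ∑ y ∈ classUpTo α M, g y = ∑ j ∈ range (M + 1), g (r + 3 * j) := by
  have hz : (3 : ZMod 3) = 0 := by decide
  have hinj : Function.Injective fun j : ℕ => r + 3 * j := fun a b h => by simpa using h
  rw [← sum_image (s := range (M + 1)) (g := fun j => r + 3 * j) (f := g)
    (fun a _ b _ h => hinj h)]
  refine sum_subset (fun y hy => ?_) fun y hy hy' => ?_
  · rw [mem_classUpTo] at hy
    have := (ZMod.natCast_eq_natCast_iff' y r 3).1 (hy.2.trans hr.symm)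
    exact mem_image.2 ⟨(y - r) / 3, mem_range.2 (by omega), by omega⟩
  · obtain ⟨j, -, rfl⟩ := mem_image.1 hy
    apply hg
    by_contra hlt
    refine hy' (mem_classUpTo.2 ⟨⟨by omega, by omega⟩, ?_⟩)
    push_cast
    rw [hr, hz]; ring

lemma exists_abs_sum_max_sub_le (α : ZMod 3) : ∃ c : ℝ, |c| ≤ 1 / 2 ∧ ∀ (S b : ℝ) (M : ℕ),
    0 ≤ S → 0 < b → S ≤ b * (M + 1) →
    |∑ y ∈ classUpTo α M, max (S - b * y) 0 - S ^ 2 / (6 * b) - c * S| ≤ b := by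
  obtain ⟨r, hr0, hr3, hr⟩ := exists_class_mem_Ioc α 0
  refine ⟨1 / 2 - r / 3, ?_, ?_⟩
  · have : r = 1 ∨ r = 2 ∨ r = 3 := by omega
    rcases this with rfl | rfl | rfl <;> norm_num [abs_le]
  intro S b M hS hb hSM
  have hrr : (1 : ℝ) ≤ r := by exact_mod_cast hr0
  have hrr3 : (r : ℝ) ≤ 3 := by exact_mod_cast (by omega : r ≤ 3)
  have hr12 : (r : ℝ) = 1 ∨ (r : ℝ) = 2 ∨ (r : ℝ) = 3 := by
    have : r = 1 ∨ r = 2 ∨ r = 3 := by omega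
    rcases this with rfl | rfl | rfl <;> norm_num
  have hg : ∀ y : ℕ, M < y → max (S - b * y) 0 = 0 := by
    intro y hy
    apply max_eq_right
    have : (M : ℝ) + 1 ≤ y := by exact_mod_cast hy
    nlinarith
  rw [sum_classUpTo_eq α hr (by omega) (by omega) M _ hg]
  rcases le_total (b * r) S with hle | hle
  · have key := abs_sum_range_sub_le (h := 3 * b) (by positivity) (M + 1) (S - b * r)
      (by linarith) (by push_cast; nlinarith)
    have e : ∀ j : ℕ, S - b * ((r + 3 * j : ℕ) : ℝ) = S - b * r - 3 * b * j := fun j => by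
      push_cast; ring
    simp_rw [e]
    have e2 : (S - b * r) ^ 2 / (2 * (3 * b)) + (S - b * r) / 2
        = S ^ 2 / (6 * b) + (1 / 2 - r / 3) * S + b * (r * (r - 3)) / 6 := by
      field_simp
      ring
    have h1 : r * ((r : ℝ) - 3) ≤ 0 := by nlinarith
    have h2 : -9 / 4 ≤ r * ((r : ℝ) - 3) := by nlinarith [sq_nonneg ((r : ℝ) - 3 / 2)]
    have h3 : b * (r * (r - 3)) ≤ 0 := by nlinarith
    have h4 : -9 / 4 * b ≤ b * (r * (r - 3)) := by nlinarith
    rw [abs_le] at key ⊢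
    constructor <;> linarith [key.1, key.2]
  · have : ∑ j ∈ range (M + 1), max (S - b * ((r + 3 * j : ℕ) : ℝ)) 0 = 0 := by
      refine sum_eq_zero fun j _ => max_eq_right ?_
      push_cast
      have : (0 : ℝ) ≤ b * j := by positivity
      nlinarith
    rw [this]
    obtain ⟨s, rfl⟩ : ∃ s, S = b * s := ⟨S / b, by field_simp⟩
    have hs0 : 0 ≤ s := nonneg_of_mul_nonneg_right hS hb
    have hs : s ≤ r := le_of_mul_le_mul_left hle hb
    have e : 0 - (b * s) ^ 2 / (6 * b) - (1 / 2 - r / 3) * (b * s)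
        = b * (-(s ^ 2 / 6) - (1 / 2 - r / 3) * s) := by
      field_simp
      ring
    rw [e, abs_mul, abs_of_pos hb]
    refine mul_le_of_le_one_right hb.le ?_
    rw [abs_le]
    rcases hr12 with h | h | h <;> rw [h] at hs ⊢ <;> constructor <;> nlinarith

lemma abs_sum_max_sub_le (α : ZMod 3) {S b : ℝ} {M : ℕ} (hS : 0 ≤ S) (hb : 0 < b)
    (hM : S ≤ b * (M + 1)) :
    |∑ y ∈ classUpTo α M, max (S - b * y) 0 - S ^ 2 / (6 * b)| ≤ 2 * S := by
  rcases le_total b S with hle | hle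
  · obtain ⟨c, hc, h⟩ := exists_abs_sum_max_sub_le α
    have h1 := h S b M hS hb hM
    have h2 : |c * S| ≤ 1 / 2 * S := by
      rw [abs_mul, abs_of_nonneg hS]
      exact mul_le_mul_of_nonneg_right hc hS
    rw [abs_le] at h1 h2 ⊢
    constructor <;> linarith [h1.1, h1.2, h2.1, h2.2]
  · have h0 : ∑ y ∈ classUpTo α M, max (S - b * y) 0 = 0 := by
      refine sum_eq_zero fun y hy => max_eq_right ?_
      have : (1 : ℝ) ≤ y := by exact_mod_cast (mem_classUpTo.1 hy).1.1
      nlinarith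
    rw [h0, zero_sub, abs_neg, abs_of_nonneg (by positivity), div_le_iff₀ (by positivity)]
    nlinarith

lemma abs_card_classUpTo_sub_le (α : ZMod 3) {X : ℝ} (hX : 0 ≤ X) :
    |(#(classUpTo α ⌊X⌋₊) : ℝ) - X / 3| ≤ 1 := by
  have := abs_card_class_sub_le (S := classUpTo α ⌊X⌋₊) (β := α) (L := 0) (U := X) le_rfl
    (fun x hx => ?_) (fun x h1 h2 h3 => ?_)
  · simpa [hX] using this
  · rw [mem_classUpTo, Nat.le_floor_iff hX] at hx
    exact ⟨hx.2, Nat.cast_nonneg _, hx.1.2⟩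
  · rw [mem_classUpTo, Nat.le_floor_iff hX]
    exact ⟨⟨by exact_mod_cast h2, h3.le⟩, h1⟩

open Classical in
/-- The lattice points of the dilate `X • R` with positive coordinates at most `X`, in the residue
class `(α, β)` modulo `3`. -/
noncomputable def latticePoints (R : Set (ℝ × ℝ)) (α β : ZMod 3) (X : ℝ) : Finset (ℕ × ℕ) :=
  {p ∈ Icc 1 ⌊X⌋₊ ×ˢ Icc 1 ⌊X⌋₊ |
    (p.1 : ZMod 3) = α ∧ (p.2 : ZMod 3) = β ∧ ((p.1 : ℝ) / X, (p.2 : ℝ) / X) ∈ R}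

lemma mem_latticePoints {R : Set (ℝ × ℝ)} {α β : ZMod 3} {X : ℝ} {p : ℕ × ℕ} :
    p ∈ latticePoints R α β X ↔ ((1 ≤ p.1 ∧ p.1 ≤ ⌊X⌋₊) ∧ (1 ≤ p.2 ∧ p.2 ≤ ⌊X⌋₊)) ∧
      (p.1 : ZMod 3) = α ∧ (p.2 : ZMod 3) = β ∧ ((p.1 : ℝ) / X, (p.2 : ℝ) / X) ∈ R := by
  simp [latticePoints]

/-- The lattice points of `X • R` in any residue class modulo `3` number `a X² / 9`, up to an
error at most `E X`. -/
def HasDensity (R : Set (ℝ × ℝ)) (a E : ℝ) : Prop :=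
  ∀ (α β : ZMod 3) (X : ℝ), 1 ≤ X → |(#(latticePoints R α β X) : ℝ) - a * X ^ 2 / 9| ≤ E * X

lemma HasDensity.union {R R' : Set (ℝ × ℝ)} {a a' E E' : ℝ} (h : HasDensity R a E)
    (h' : HasDensity R' a' E') (hd : Disjoint R R') : HasDensity (R ∪ R') (a + a') (E + E') := by
  intro α β X hX
  have e : latticePoints (R ∪ R') α β X = latticePoints R α β X ∪ latticePoints R' α β X := by
    ext p
    simp only [mem_union, mem_latticePoints, Set.mem_union]
    tauto
  have hdis : Disjoint (latticePoints R α β X) (latticePoints R' α β X) := by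
    rw [Finset.disjoint_left]
    intro p hp hp'
    rw [mem_latticePoints] at hp hp'
    exact Set.disjoint_left.1 hd hp.2.2.2 hp'.2.2.2
  rw [e, card_union_of_disjoint hdis]
  have h1 := abs_le.1 (h α β X hX)
  have h2 := abs_le.1 (h' α β X hX)
  push_cast
  rw [abs_le]
  constructor <;> linarith [h1.1, h1.2, h2.1, h2.2]

lemma HasDensity.diff {R R' : Set (ℝ × ℝ)} {a a' E E' : ℝ} (h : HasDensity R a E)
    (h' : HasDensity R' a' E') (hd : R' ⊆ R) : HasDensity (R \ R') (a - a') (E + E') := by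
  intro α β X hX
  have e : latticePoints (R \ R') α β X = latticePoints R α β X \ latticePoints R' α β X := by
    ext p
    simp only [Finset.mem_sdiff, mem_latticePoints, Set.mem_sdiff]
    tauto
  have hsub : latticePoints R' α β X ⊆ latticePoints R α β X := by
    intro p hp
    rw [mem_latticePoints] at hp ⊢
    exact ⟨hp.1, hp.2.1, hp.2.2.1, hd hp.2.2.2⟩
  rw [e, card_sdiff_of_subset hsub, Nat.cast_sub (card_le_card hsub)]
  have h1 := abs_le.1 (h α β X hX)
  have h2 := abs_le.1 (h' α β X hX)
  rw [abs_le]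
  constructor <;> linarith [h1.1, h1.2, h2.1, h2.2]

lemma HasDensity.mono {R : Set (ℝ × ℝ)} {a E E' : ℝ} (h : HasDensity R a E) (hE : E ≤ E') :
    HasDensity R a E' := fun α β X hX =>
  (h α β X hX).trans (mul_le_mul_of_nonneg_right hE (by linarith))

/-- Over `(0, 1]` in the first coordinate, `R` is the region between the graphs of `lo` and `hi`,
up to its boundary. -/
structure IsBetween (R : Set (ℝ × ℝ)) (lo hi : ℝ → ℝ) : Prop where
  lo_nonneg : ∀ t, 0 < t → t ≤ 1 → 0 ≤ lo t
  hi_le : ∀ t, 0 < t → t ≤ 1 → hi t ≤ 1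
  le_of_mem : ∀ t x, 0 < t → t ≤ 1 → 0 < x → x ≤ 1 → (t, x) ∈ R → lo t ≤ x ∧ x ≤ hi t
  mem_of_lt : ∀ t x, 0 < t → t ≤ 1 → lo t < x → x < hi t → (t, x) ∈ R

lemma IsBetween.abs_card_sub_le {R : Set (ℝ × ℝ)} {lo hi : ℝ → ℝ} (h : IsBetween R lo hi)
    (α β : ZMod 3) {X : ℝ} (hX : 1 ≤ X) (B : Finset ℕ)
    (hB : ∀ y : ℕ, 1 ≤ y → (y : ℝ) ≤ X → y ∉ B → hi (y / X) < lo (y / X)) :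
    |(#(latticePoints R α β X) : ℝ)
      - (∑ y ∈ classUpTo α ⌊X⌋₊, X * max (hi (y / X) - lo (y / X)) 0) / 3| ≤ #B := by
  have hX0 : 0 < X := by linarith
  have hcard : #(latticePoints R α β X) = ∑ y ∈ classUpTo α ⌊X⌋₊,
      #{p ∈ latticePoints R α β X | p.1 = y} := by
    refine card_eq_sum_card_fiberwise fun p hp => ?_
    have hp := mem_latticePoints.1 hp
    exact mem_classUpTo.2 ⟨hp.1.1, hp.2.1⟩
  have hrow : ∀ y ∈ classUpTo α ⌊X⌋₊,
      |(#{p ∈ latticePoints R α β X | p.1 = y} : ℝ) - X * max (hi (y / X) - lo (y / X)) 0 / 3|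
        ≤ if y ∈ B then 1 else 0 := by
    intro y hy
    rw [mem_classUpTo, Nat.le_floor_iff hX0.le] at hy
    have ht0 : 0 < (y : ℝ) / X := by
      have : (0 : ℝ) < y := by exact_mod_cast hy.1.1
      positivity
    have ht1 : (y : ℝ) / X ≤ 1 := (div_le_one hX0).2 hy.1.2
    have hmem : ∀ p ∈ latticePoints R α β X, p.1 = y →
        lo (y / X) ≤ p.2 / X ∧ (p.2 : ℝ) / X ≤ hi (y / X) := by
      intro p hp hpy
      rw [mem_latticePoints, Nat.le_floor_iff hX0.le, Nat.le_floor_iff hX0.le, hpy] at hp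
      have : (0 : ℝ) < p.2 := by exact_mod_cast hp.1.2.1
      exact h.le_of_mem _ _ ht0 ht1 (by positivity) ((div_le_one hX0).2 hp.1.2.2) hp.2.2.2
    split_ifs with hyB
    · have := abs_card_class_sub_le (S := ({p ∈ latticePoints R α β X | p.1 = y}).image Prod.snd)
        (β := β) (L := X * lo (y / X)) (U := X * hi (y / X))
        (mul_nonneg hX0.le (h.lo_nonneg _ ht0 ht1)) ?_ ?_
      · rw [card_image_of_injOn] at this
        · rw [← mul_sub, ← mul_zero X, ← mul_max_of_nonneg _ _ hX0.le] at this
          simpa using this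
        · intro p hp p' hp' e
          simp only [coe_filter, Set.mem_ofPred_eq] at hp hp'
          exact Prod.ext (hp.2.trans hp'.2.symm) e
      · intro x hx
        obtain ⟨p, hp, rfl⟩ := mem_image.1 hx
        rw [mem_filter] at hp
        have hm := hmem p hp.1 hp.2
        rw [le_div_iff₀ hX0, div_le_iff₀ hX0] at hm
        exact ⟨(mem_latticePoints.1 hp.1).2.2.1, by linarith, by linarith⟩
      · intro x hxβ hxL hxU
        refine mem_image.2 ⟨(y, x), mem_filter.2 ⟨mem_latticePoints.2 ⟨⟨⟨hy.1.1, ?_⟩, ?_, ?_⟩,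
          hy.2, hxβ, ?_⟩, rfl⟩, rfl⟩
        · exact Nat.le_floor hy.1.2
        · have h1 := mul_nonneg hX0.le (h.lo_nonneg _ ht0 ht1)
          have : (0 : ℝ) < x := by linarith
          exact_mod_cast this
        · refine Nat.le_floor ?_
          have := mul_le_mul_of_nonneg_left (h.hi_le _ ht0 ht1) hX0.le
          show (x : ℝ) ≤ X
          linarith
        · refine h.mem_of_lt _ _ ht0 ht1 ?_ ?_
          · rw [lt_div_iff₀ hX0]
            linarith
          · rw [div_lt_iff₀ hX0]
            linarith
    · have hlt := hB y hy.1.1 hy.1.2 hyB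
      rw [max_eq_right (by linarith)]
      have : ({p ∈ latticePoints R α β X | p.1 = y} : Finset _) = ∅ := by
        rw [filter_eq_empty_iff]
        intro p hp hpy
        have := hmem p hp hpy
        linarith
      rw [this]
      simp
  rw [hcard, sum_div]
  push_cast
  rw [← sum_sub_distrib]
  calc _ ≤ ∑ y ∈ classUpTo α ⌊X⌋₊, if y ∈ B then (1 : ℝ) else 0 :=
        (abs_sum_le_sum_abs _ _).trans (sum_le_sum hrow)
    _ ≤ #B := by
        rw [← sum_filter, sum_const, nsmul_eq_mul, mul_one]
        exact_mod_cast card_le_card fun y hy => (mem_filter.1 hy).2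

/-- A region whose vertical sections have piecewise linear length has a density. -/
lemma IsBetween.hasDensity {R : Set (ℝ × ℝ)} {lo hi : ℝ → ℝ} (h : IsBetween R lo hi) {n : ℕ}
    (c₀ : ℝ) (c s b : Fin n → ℝ) (hs : ∀ i, 0 ≤ s i) (hb : ∀ i, 0 < b i) (hsb : ∀ i, s i ≤ b i)
    (hlen : ∀ t, 0 < t → t ≤ 1 →
      max (hi t - lo t) 0 = c₀ + ∑ i, c i * max (s i - b i * t) 0) :
    HasDensity R (c₀ + ∑ i, c i * (s i ^ 2 / (2 * b i))) (1 + |c₀| + ∑ i, |c i| * s i) := by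
  intro α β X hX
  have hX0 : 0 < X := by linarith
  have hrows := h.abs_card_sub_le α β hX (Icc 1 ⌊X⌋₊) fun y h1 h2 h3 =>
    absurd (mem_Icc.2 ⟨h1, Nat.le_floor h2⟩) h3
  have hfl : (#(Icc 1 ⌊X⌋₊) : ℝ) ≤ X := by
    rw [Nat.card_Icc, Nat.add_sub_cancel]
    exact Nat.floor_le hX0.le
  have hsum : ∑ y ∈ classUpTo α ⌊X⌋₊, X * max (hi (y / X) - lo (y / X)) 0
      = c₀ * X * #(classUpTo α ⌊X⌋₊)
        + ∑ i, c i * ∑ y ∈ classUpTo α ⌊X⌋₊, max (s i * X - b i * y) 0 := by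
    simp_rw [mul_sum]
    rw [sum_comm, ← nsmul_eq_mul', ← sum_const, ← sum_add_distrib]
    refine sum_congr rfl fun y hy => ?_
    rw [mem_classUpTo, Nat.le_floor_iff hX0.le] at hy
    have : (0 : ℝ) < y := by exact_mod_cast hy.1.1
    rw [hlen _ (by positivity) ((div_le_one hX0).2 hy.1.2), mul_add, mul_sum]
    congr 1
    · ring
    · refine sum_congr rfl fun i _ => ?_
      have : s i * X - b i * y = X * (s i - b i * (y / X)) := by field_simp
      rw [this, ← mul_zero X, ← mul_max_of_nonneg _ _ hX0.le]
      simp only [mul_zero]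
      ring
  have hterm : ∀ i, |c i * ∑ y ∈ classUpTo α ⌊X⌋₊, max (s i * X - b i * y) 0
      - c i * (s i ^ 2 / (2 * b i)) * X ^ 2 / 3| ≤ 2 * (|c i| * s i) * X := by
    intro i
    have hM : s i * X ≤ b i * ((⌊X⌋₊ : ℝ) + 1) := by
      have := (Nat.lt_floor_add_one X).le
      have h1 := hb i
      exact (mul_le_mul_of_nonneg_right (hsb i) hX0.le).trans
        (mul_le_mul_of_nonneg_left this h1.le)
    have := abs_sum_max_sub_le α (mul_nonneg (hs i) hX0.le) (hb i) hM
    have e : c i * ∑ y ∈ classUpTo α ⌊X⌋₊, max (s i * X - b i * y) 0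
        - c i * (s i ^ 2 / (2 * b i)) * X ^ 2 / 3
        = c i * (∑ y ∈ classUpTo α ⌊X⌋₊, max (s i * X - b i * y) 0
          - (s i * X) ^ 2 / (6 * b i)) := by
      have := (hb i).ne'
      field_simp
      ring
    rw [e, abs_mul]
    calc _ ≤ |c i| * (2 * (s i * X)) := mul_le_mul_of_nonneg_left this (abs_nonneg _)
      _ = _ := by ring
  have hterms : |∑ i, (c i * ∑ y ∈ classUpTo α ⌊X⌋₊, max (s i * X - b i * y) 0
      - c i * (s i ^ 2 / (2 * b i)) * X ^ 2 / 3)| ≤ 2 * (∑ i, |c i| * s i) * X := by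
    refine (abs_sum_le_sum_abs _ _).trans ((sum_le_sum fun i _ => hterm i).trans ?_)
    rw [mul_sum, sum_mul]
  rw [sum_sub_distrib, ← sum_div, ← sum_mul] at hterms
  have hconst : |c₀ * X * (#(classUpTo α ⌊X⌋₊) - X / 3)| ≤ |c₀| * X := by
    rw [abs_mul, abs_mul, abs_of_pos hX0]
    exact mul_le_of_le_one_right (by positivity) (abs_card_classUpTo_sub_le α hX0.le)
  rw [hsum] at hrows
  have hnn : 0 ≤ |c₀| * X := by positivity
  have hnn' : 0 ≤ (∑ i, |c i| * s i) * X :=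
    mul_nonneg (sum_nonneg fun i _ => mul_nonneg (abs_nonneg _) (hs i)) hX0.le
  rw [abs_le] at hrows hterms hconst ⊢
  constructor <;> linarith [hrows.1, hrows.2, hterms.1, hterms.2, hconst.1, hconst.2]

/-- The Farey triangle, with the coordinates `(t, x)` of a pair of consecutive denominators. -/
def fareyTriangle : Set (ℝ × ℝ) := {p | 0 < p.1 ∧ p.1 ≤ 1 ∧ p.2 ≤ 1 ∧ 1 < p.1 + p.2}

/-- The part of the Farey triangle where the index is at least `k`. -/
def indexGE (k : ℝ) : Set (ℝ × ℝ) := {p | p ∈ fareyTriangle ∧ k * p.1 ≤ 1 + p.2}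

/-- The part of the Farey triangle cut out by `a x - b t > 1`. -/
def wedge (a b : ℝ) : Set (ℝ × ℝ) := {p | p ∈ fareyTriangle ∧ 1 < a * p.2 - b * p.1}

lemma hasDensity_fareyTriangle : HasDensity fareyTriangle (1 / 2) 3 := by
  have h : IsBetween fareyTriangle (fun t => 1 - t) (fun _ => 1) := by
    refine ⟨fun t _ h => by linarith, fun _ _ _ => le_rfl, fun t x _ _ _ hx h => ⟨?_, hx⟩,
      fun t x h0 h1 h2 h3 => ⟨h0, h1, h3.le, by dsimp only; linarith⟩⟩
    have := h.2.2.2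
    dsimp only at this
    linarith
  have := h.hasDensity (n := 1) 1 (fun _ => -1) (fun _ => 1) (fun _ => 1) (by simp) (by simp)
    (by simp) (fun t h0 h1 => by
      rw [Fin.sum_univ_one, max_eq_left (by linarith), max_eq_left (by linarith)]; ring)
  norm_num at this
  exact this

lemma max_sub_max_eq {s b t : ℝ} (ht : 0 < t) :
    max (1 - max (1 - t) (1 - s + b * t)) 0
      = max (s - b * t) 0 - max (s - (b + 1) * t) 0 := by
  rcases le_total (s - b * t) 0 with h | h
  · rw [max_eq_right (a := 1 - t) (by linarith), max_eq_right (by linarith), max_eq_right h,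
      max_eq_right (by linarith)]
    ring
  · rcases le_total (s - b * t) t with h' | h'
    · rw [max_eq_right (a := 1 - t) (by linarith), max_eq_left (by linarith), max_eq_left h,
        max_eq_right (by linarith)]
      ring
    · rw [max_eq_left (a := 1 - t) (by linarith), max_eq_left (by linarith), max_eq_left h,
        max_eq_left (by linarith)]
      ring

lemma IsBetween.hasDensity_fan {R : Set (ℝ × ℝ)} {s b : ℝ}
    (h : IsBetween R (fun t => max (1 - t) (1 - s + b * t)) (fun _ => 1)) (hs : 0 ≤ s)
    (hb : 0 < b) (hsb : s ≤ b) :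
    HasDensity R (s ^ 2 / (2 * b * (b + 1))) (1 + 2 * s) := by
  have := h.hasDensity (n := 2) 0 ![1, -1] ![s, s] ![b, b + 1]
    (by simp [Fin.forall_fin_two, hs])
    (by simp only [Fin.forall_fin_two]; constructor <;> simp <;> linarith)
    (by simp only [Fin.forall_fin_two]; constructor <;> simp <;> linarith)
    (fun t h0 h1 => by
      rw [max_sub_max_eq h0]
      simp
      ring)
  simp only [Fin.sum_univ_two, Matrix.cons_val_zero, Matrix.cons_val_one] at this
  convert this using 1
  · field_simp
    ring
  · simp
    ring

lemma hasDensity_indexGE {k : ℝ} (hk : 2 ≤ k) : HasDensity (indexGE k) (2 / (k * (k + 1))) 5 := by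
  have h : IsBetween (indexGE k) (fun t => max (1 - t) (1 - 2 + k * t)) (fun _ => 1) := by
    refine ⟨fun t _ h => le_max_of_le_left (by linarith), fun _ _ _ => le_rfl,
      fun t x _ _ _ hx h => ⟨?_, hx⟩,
      fun t x h0 h1 h2 h3 => ⟨⟨h0, h1, h3.le, ?_⟩, ?_⟩⟩
    · obtain ⟨⟨_, _, _, h⟩, h'⟩ := h
      dsimp only at h h'
      exact max_le (by linarith) (by linarith)
    · have := (max_lt_iff.1 h2).1
      dsimp only
      linarith
    · have := (max_lt_iff.1 h2).2
      dsimp only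
      linarith
  convert h.hasDensity_fan (by norm_num) (by linarith) hk using 1
  · field_simp
  · norm_num

lemma hasDensity_wedge {a b : ℝ} (ha : 1 < a) (hb : a - 1 ≤ b) :
    HasDensity (wedge a b) ((a - 1) ^ 2 / (2 * b * (a + b))) 3 := by
  have ha0 : 0 < a := by linarith
  have h : IsBetween (wedge a b) (fun t => max (1 - t) (1 - (1 - 1 / a) + b / a * t))
      (fun _ => 1) := by
    refine ⟨fun t _ h => le_max_of_le_left (by linarith), fun _ _ _ => le_rfl,
      fun t x _ _ _ hx h => ⟨?_, hx⟩,
      fun t x h0 h1 h2 h3 => ⟨⟨h0, h1, h3.le, ?_⟩, ?_⟩⟩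
    · obtain ⟨⟨_, _, _, h⟩, h'⟩ := h
      dsimp only at h h'
      refine max_le (by linarith) ?_
      have : 1 - (1 - 1 / a) + b / a * t = (1 + b * t) / a := by field_simp; ring
      rw [this, div_le_iff₀ ha0]
      linarith
    · have := (max_lt_iff.1 h2).1
      dsimp only
      linarith
    · have h3 := (max_lt_iff.1 h2).2
      have : 1 - (1 - 1 / a) + b / a * t = (1 + b * t) / a := by field_simp; ring
      rw [this, div_lt_iff₀ ha0] at h3
      dsimp only
      linarith
  have hs : 1 - 1 / a = (a - 1) / a := by field_simp
  have h1 : 0 ≤ 1 - 1 / a := by rw [hs]; exact div_nonneg (by linarith) ha0.le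
  have h2 : 1 - 1 / a ≤ b / a := by rw [hs]; exact div_le_div_of_nonneg_right hb ha0.le
  have hb0 : 0 < b := by linarith
  have := h.hasDensity_fan h1 (by positivity) h2
  have e : (1 - 1 / a) ^ 2 / (2 * (b / a) * (b / a + 1)) = (a - 1) ^ 2 / (2 * b * (a + b)) := by
    rw [hs]
    have : b / a + 1 = (a + b) / a := by field_simp; ring
    rw [this]
    field_simp
  rw [e] at this
  refine this.mono ?_
  have : 0 < 1 / a := by positivity
  linarith

lemma isBetween_indexGE_inter_wedge (k : ℝ) :
    IsBetween (indexGE k ∩ wedge 2 1)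
      (fun t => max (1 - t) (max (k * t - 1) ((1 + t) / 2))) (fun _ => 1) := by
  refine ⟨fun t _ h => le_max_of_le_left (by linarith), fun _ _ _ => le_rfl,
    fun t x _ _ _ hx h => ⟨?_, hx⟩,
    fun t x h0 h1 h2 h3 => ?_⟩
  · obtain ⟨⟨⟨_, _, _, h⟩, h'⟩, -, h''⟩ := h
    dsimp only at h h' h''
    exact max_le (by linarith) (max_le (by linarith) (by linarith))
  · simp only [max_lt_iff] at h2
    have : (t, x) ∈ fareyTriangle := ⟨h0, h1, h3.le, by dsimp only; linarith⟩
    exact ⟨⟨this, by dsimp only; linarith⟩, this, by dsimp only; linarith⟩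

lemma hasDensity_indexGE_three_inter_wedge :
    HasDensity (indexGE 3 ∩ wedge 2 1) (2 / 15) 5 := by
  have := (isBetween_indexGE_inter_wedge 3).hasDensity (n := 3) 0 ![1, -1 / 2, -1 / 2] ![2, 3, 1]
    ![3, 5, 3] (by simp [Fin.forall_fin_succ]) (by simp [Fin.forall_fin_succ])
    (by simp [Fin.forall_fin_succ]; norm_num) (fun t h0 h1 => by
      simp only [Fin.sum_univ_three, Matrix.cons_val_zero, Matrix.cons_val_one, Matrix.cons_val]
      grind)
  simp only [Fin.sum_univ_three, Matrix.cons_val_zero, Matrix.cons_val_one, Matrix.cons_val]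
    at this
  norm_num [abs_of_neg] at this
  exact this

lemma hasDensity_indexGE_four_inter_wedge :
    HasDensity (indexGE 4 ∩ wedge 2 1) (2 / 21) 5 := by
  have := (isBetween_indexGE_inter_wedge 4).hasDensity (n := 3) 0 ![1, -1, -1] ![2, 3 / 2, 1 / 2]
    ![4, 7 / 2, 3 / 2] (by simp [Fin.forall_fin_succ]; norm_num) (by simp [Fin.forall_fin_succ])
    (by simp [Fin.forall_fin_succ]; norm_num) (fun t h0 h1 => by
      simp only [Fin.sum_univ_three, Matrix.cons_val_zero, Matrix.cons_val_one, Matrix.cons_val]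
      grind)
  simp only [Fin.sum_univ_three, Matrix.cons_val_zero, Matrix.cons_val_one, Matrix.cons_val]
    at this
  norm_num [abs_of_neg] at this
  exact this

lemma HasDensity.diff_of_inter {R R' : Set (ℝ × ℝ)} {a a' E E' : ℝ} (h : HasDensity R a E)
    (h' : HasDensity (R ∩ R') a' E') : HasDensity (R \ R') (a - a') (E + E') := by
  have := h.diff h' Set.inter_subset_left
  rwa [Set.sdiff_self_inter] at this

lemma hasDensity_indexGE_three_diff : HasDensity (indexGE 3 \ wedge 2 1) (1 / 30) 10 := by
  have := (hasDensity_indexGE (k := 3) (by norm_num)).diff_of_inter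
    hasDensity_indexGE_three_inter_wedge
  norm_num at this
  exact this

lemma hasDensity_indexGE_four_diff : HasDensity (indexGE 4 \ wedge 2 1) (1 / 210) 10 := by
  have := (hasDensity_indexGE (k := 4) (by norm_num)).diff_of_inter
    hasDensity_indexGE_four_inter_wedge
  norm_num at this
  exact this

/-- The part of the Farey triangle where the index is exactly `k`. -/
def indexCell (k : ℕ) : Set (ℝ × ℝ) :=
  {p | p ∈ fareyTriangle ∧ k * p.1 ≤ 1 + p.2 ∧ 1 + p.2 < (k + 1) * p.1}

/-- The part of the Farey triangle where the index is at least `2` and congruent to `2 + i`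
modulo `3`. -/
def indexClass (i : Fin 3) : Set (ℝ × ℝ) := {p | ∃ j : ℕ, p ∈ indexCell (3 * j + 2 + i)}

lemma isBetween_indexCell {k : ℕ} :
    IsBetween (indexCell k) (fun t => max (1 - t) (k * t - 1))
      (fun t => min 1 ((k + 1) * t - 1)) := by
  refine ⟨fun t _ h => le_max_of_le_left (by linarith), fun _ _ _ => min_le_left _ _,
    fun t x _ _ _ hx h => ?_, fun t x h0 h1 h2 h3 => ?_⟩
  · obtain ⟨⟨_, _, _, h⟩, h', h''⟩ := h
    dsimp only at h h' h''
    exact ⟨max_le (by linarith) (by linarith), le_min hx (by linarith)⟩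
  · simp only [max_lt_iff] at h2
    simp only [lt_min_iff] at h3
    exact ⟨⟨h0, h1, h3.1.le, by dsimp only; linarith⟩, by dsimp only; linarith,
      by dsimp only; linarith⟩

lemma max_indexCell_length {k : ℕ} {t : ℝ} (ht : 0 < t) :
    max (min 1 (((k : ℝ) + 1) * t - 1) - max (1 - t) (k * t - 1)) 0
      = max (2 - (k : ℝ) * t) 0 - 2 * max (2 - ((k : ℝ) + 1) * t) 0
        + max (2 - ((k : ℝ) + 2) * t) 0 := by
  have h1 : ((k : ℝ) + 1) * t = k * t + t := by ring
  have h2 : ((k : ℝ) + 2) * t = k * t + 2 * t := by ring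
  rw [h1, h2]
  generalize (k : ℝ) * t = u
  grind

lemma abs_card_indexCell_sub_le {k : ℕ} (hk : 2 ≤ k) (α β : ZMod 3) {X : ℝ} (hX : 1 ≤ X) :
    |(#(latticePoints (indexCell k) α β X) : ℝ) - cellArea k * X ^ 2 / 9|
      ≤ 4 * X / (k * (k + 2)) + (4 * k + 7) / 3 := by
  have hX0 : 0 < X := by linarith
  have hk2 : (2 : ℝ) ≤ k := by exact_mod_cast hk
  have hk0 : (0 : ℝ) < k := by linarith
  set B : Finset ℕ := Icc ⌈2 * X / (k + 2)⌉₊ ⌊2 * X / k⌋₊ with hB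
  have hBcard : (#B : ℝ) ≤ 4 * X / (k * (k + 2)) + 1 := by
    have h1 : (⌊2 * X / k⌋₊ : ℝ) ≤ 2 * X / k := Nat.floor_le (by positivity)
    have h2 := Nat.le_ceil (2 * X / ((k : ℝ) + 2))
    have h3 : 2 * X / k - 2 * X / (k + 2) = 4 * X / (k * (k + 2)) := by field_simp; ring
    rw [hB, Nat.card_Icc]
    rcases le_total ⌈2 * X / ((k : ℝ) + 2)⌉₊ (⌊2 * X / k⌋₊ + 1) with h | h
    · rw [Nat.cast_sub h]
      push_cast
      linarith
    · rw [Nat.sub_eq_zero_of_le h]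
      have : 0 ≤ 4 * X / ((k : ℝ) * (k + 2)) := by positivity
      push_cast
      linarith
  have hrows := (isBetween_indexCell (k := k)).abs_card_sub_le α β hX B fun y h1 h2 h3 => by
    have hy : (0 : ℝ) < y := by exact_mod_cast h1
    rw [hB, mem_Icc, not_and_or, not_le, not_le, Nat.lt_ceil, Nat.floor_lt (by positivity),
      lt_div_iff₀ (by positivity), div_lt_iff₀ hk0] at h3
    rcases h3 with h3 | h3
    · refine (min_le_right _ _).trans_lt (lt_of_lt_of_le ?_ (le_max_left _ _))
      have : ((k : ℝ) + 2) * (y / X) < 2 := by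
        rw [← mul_div_assoc, div_lt_iff₀ hX0]; linarith
      linarith
    · refine (min_le_left _ _).trans_lt (lt_of_lt_of_le ?_ (le_max_right _ _))
      have : 2 < (k : ℝ) * (y / X) := by
        rw [← mul_div_assoc, lt_div_iff₀ hX0]; linarith
      linarith
  obtain ⟨c, -, hc⟩ := exists_abs_sum_max_sub_le α
  have hfl := (Nat.lt_floor_add_one X).le
  have hM : ∀ b : ℝ, 2 ≤ b → 2 * X ≤ b * ((⌊X⌋₊ : ℝ) + 1) := fun b hb =>
    mul_le_mul hb hfl hX0.le (by linarith)
  have s0 := hc (2 * X) k ⌊X⌋₊ (by linarith) hk0 (hM _ hk2)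
  have s1 := hc (2 * X) (k + 1) ⌊X⌋₊ (by linarith) (by linarith) (hM _ (by linarith))
  have s2 := hc (2 * X) (k + 2) ⌊X⌋₊ (by linarith) (by linarith) (hM _ (by linarith))
  have hsum : ∑ y ∈ classUpTo α ⌊X⌋₊, X * max (min 1 (((k : ℝ) + 1) * (y / X) - 1)
        - max (1 - y / X) (k * (y / X) - 1)) 0
      = ∑ y ∈ classUpTo α ⌊X⌋₊, max (2 * X - (k : ℝ) * y) 0
        - 2 * ∑ y ∈ classUpTo α ⌊X⌋₊, max (2 * X - ((k : ℝ) + 1) * y) 0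
        + ∑ y ∈ classUpTo α ⌊X⌋₊, max (2 * X - ((k : ℝ) + 2) * y) 0 := by
    rw [mul_sum, ← sum_sub_distrib, ← sum_add_distrib]
    refine sum_congr rfl fun y hy => ?_
    rw [mem_classUpTo] at hy
    have : (0 : ℝ) < y := by exact_mod_cast hy.1.1
    rw [max_indexCell_length (by positivity)]
    have e : ∀ b : ℝ, max (2 * X - b * y) 0 = X * max (2 - b * (y / X)) 0 := by
      intro b
      rw [mul_max_of_nonneg _ _ hX0.le]
      congr 1
      · field_simp
      · simp
    simp only [e]
    ring
  rw [hsum] at hrows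
  have harea : cellArea k * X ^ 2 / 9 = ((2 * X) ^ 2 / (6 * k)
      - 2 * ((2 * X) ^ 2 / (6 * (k + 1))) + (2 * X) ^ 2 / (6 * (k + 2))) / 3 := by
    unfold cellArea
    field_simp
    ring
  rw [harea]
  rw [abs_le] at hrows s0 s1 s2 ⊢
  constructor <;> linarith [hrows.1, hrows.2, s0.1, s0.2, s1.1, s1.2, s2.1, s2.2]

lemma hasDensity_indexClass (i : Fin 3) : HasDensity (indexClass i) (classArea i) 30 := by
  intro α β X hX
  have hX0 : 0 < X := by linarith
  set N := ⌈√X⌉₊ with hN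
  have hsq : √X * √X = X := Real.mul_self_sqrt hX0.le
  have hs1 : 1 ≤ √X := Real.one_le_sqrt.2 hX
  have hN1 : √X ≤ N := Nat.le_ceil _
  have hN2 : (N : ℝ) < √X + 1 := Nat.ceil_lt_add_one (by positivity)
  have hNX : X ≤ (N : ℝ) ^ 2 := by nlinarith
  have hN4 : (N : ℝ) ^ 2 ≤ 4 * X := by nlinarith
  have hN5 : (N : ℝ) ≤ 2 * X := by nlinarith
  set f : ℕ → Finset (ℕ × ℕ) := fun j => latticePoints (indexCell (3 * j + 2 + i)) α β X with hf
  have hdisj : ∀ j j' : ℕ, j < j' → Disjoint (f j) (f j') := by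
    intro j j' hj
    rw [Finset.disjoint_left]
    intro p hp hp'
    simp only [hf, mem_latticePoints, indexCell, Set.mem_ofPred_eq] at hp hp'
    obtain ⟨-, -, -, ⟨ht, -⟩, -, h1⟩ := hp
    obtain ⟨-, -, -, -, h2, -⟩ := hp'
    have h3 : (3 * j + 2 + i + 1 : ℕ) ≤ (3 * j' + 2 + i : ℕ) := by omega
    have h4 : ((3 * j + 2 + i : ℕ) : ℝ) + 1 ≤ (3 * j' + 2 + i : ℕ) := by exact_mod_cast h3
    have := mul_le_mul_of_nonneg_right h4 ht.le
    linarith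
  have hcard : #((range N).biUnion f) = ∑ j ∈ range N, #(f j) := by
    refine card_biUnion fun a _ b _ hab => ?_
    rcases lt_or_gt_of_ne hab with h | h
    · exact hdisj _ _ h
    · exact (hdisj _ _ h).symm
  have hsub : (range N).biUnion f ⊆ latticePoints (indexClass i) α β X := by
    intro p hp
    obtain ⟨j, -, hj⟩ := mem_biUnion.1 hp
    rw [hf, mem_latticePoints] at hj
    exact mem_latticePoints.2 ⟨hj.1, hj.2.1, hj.2.2.1, j, hj.2.2.2⟩
  have hsup : latticePoints (indexClass i) α β X
      ⊆ (range N).biUnion f ∪ latticePoints (indexGE (3 * N + 2)) α β X := by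
    intro p hp
    rw [mem_latticePoints] at hp
    obtain ⟨h1, h2, h3, j, hj⟩ := hp
    rw [mem_union, mem_biUnion]
    rcases lt_or_ge j N with h | h
    · exact Or.inl ⟨j, mem_range.2 h, mem_latticePoints.2 ⟨h1, h2, h3, hj⟩⟩
    · refine Or.inr (mem_latticePoints.2 ⟨h1, h2, h3, hj.1, le_trans ?_ hj.2.1⟩)
      refine mul_le_mul_of_nonneg_right ?_ hj.1.1.le
      have : 3 * N + 2 ≤ 3 * j + 2 + i := by omega
      exact_mod_cast this
  have hc1 : (∑ j ∈ range N, #(f j) : ℝ) ≤ #(latticePoints (indexClass i) α β X) := by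
    have := card_le_card hsub
    rw [hcard] at this
    exact_mod_cast this
  have hc2 : (#(latticePoints (indexClass i) α β X) : ℝ) ≤ ∑ j ∈ range N, (#(f j) : ℝ)
      + #(latticePoints (indexGE (3 * N + 2)) α β X) := by
    have := (card_le_card hsup).trans (card_union_le _ _)
    rw [hcard] at this
    exact_mod_cast this
  have htail : (#(latticePoints (indexGE (3 * N + 2)) α β X) : ℝ) ≤ 6 * X := by
    have h := (abs_le.1 (hasDensity_indexGE (k := 3 * N + 2)
      (by have : (0 : ℝ) ≤ N := by positivity
          linarith) α β X hX)).2
    have : 2 / ((3 * (N : ℝ) + 2) * (3 * N + 2 + 1)) * X ^ 2 / 9 ≤ X := by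
      rw [div_mul_eq_mul_div, div_div, div_le_iff₀ (by positivity)]
      have h0 : (0 : ℝ) ≤ N := by positivity
      nlinarith [mul_le_mul_of_nonneg_left hNX hX0.le]
    linarith
  have harea : |classArea i * X ^ 2 / 9 - ∑ j ∈ range N, cellArea (3 * j + 2 + i) * X ^ 2 / 9|
      ≤ X := by
    rw [← sum_div, ← sum_mul, ← sub_div, ← sub_mul, abs_div, abs_mul, abs_of_nonneg (sq_nonneg X),
      abs_of_pos (by norm_num : (0 : ℝ) < 9)]
    have h := mul_le_mul_of_nonneg_right (abs_classArea_sub_sum_le i N) (sq_nonneg X)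
    have : 1 / ((N : ℝ) + 1) ^ 2 * X ^ 2 ≤ X := by
      rw [div_mul_eq_mul_div, div_le_iff₀ (by positivity)]
      have h0 : (0 : ℝ) ≤ N := by positivity
      nlinarith [mul_le_mul_of_nonneg_left hNX hX0.le, mul_nonneg hX0.le h0]
    linarith
  have hcell : ∀ j ∈ range N, |(#(f j) : ℝ) - cellArea (3 * j + 2 + i) * X ^ 2 / 9|
      ≤ X * (1 / ((j : ℝ) + 1) - 1 / ((j : ℝ) + 2)) + (4 * j + 9) := by
    intro j _
    refine (abs_card_indexCell_sub_le (by omega) α β hX).trans (add_le_add ?_ ?_)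
    · have e : X * (1 / ((j : ℝ) + 1) - 1 / ((j : ℝ) + 2)) = X / ((j + 1) * (j + 2)) := by
        field_simp
        ring
      rw [e, mul_comm 4 X, ← mul_one_div X, mul_div_assoc]
      refine mul_le_mul_of_nonneg_left ?_ hX0.le
      push_cast
      rw [div_le_div_iff₀ (by positivity) (by positivity)]
      have h0 : (0 : ℝ) ≤ j := by positivity
      have h1 : (0 : ℝ) ≤ (i : ℕ) := by positivity
      nlinarith [mul_nonneg h0 h1]
    · have : ((i : ℕ) : ℝ) ≤ 2 := by exact_mod_cast Nat.lt_succ_iff.1 i.isLt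
      push_cast
      linarith
  have hsum1 : ∑ j ∈ range N, (1 / ((j : ℝ) + 1) - 1 / ((j : ℝ) + 2)) ≤ 1 := by
    have := sum_range_sub' (fun j : ℕ => 1 / ((j : ℝ) + 1)) N
    push_cast at this
    simp only [add_assoc, one_add_one_eq_two, zero_add, div_one] at this
    rw [this]
    have : 0 ≤ 1 / ((N : ℝ) + 1) := by positivity
    linarith
  have hsum2 : ∀ n : ℕ, ∑ j ∈ range n, (4 * (j : ℝ) + 9) = 2 * (n : ℝ) ^ 2 + 7 * n := by
    intro n
    induction n with
    | zero => simp
    | succ n ih => rw [sum_range_succ, ih]; push_cast; ring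
  have hcells : |∑ j ∈ range N, (#(f j) : ℝ)
      - ∑ j ∈ range N, cellArea (3 * j + 2 + i) * X ^ 2 / 9| ≤ 23 * X := by
    rw [← sum_sub_distrib]
    refine (abs_sum_le_sum_abs _ _).trans ((sum_le_sum hcell).trans ?_)
    rw [sum_add_distrib, ← mul_sum, hsum2]
    have := mul_le_mul_of_nonneg_left hsum1 hX0.le
    linarith
  rw [abs_le] at harea hcells ⊢
  constructor <;> linarith [harea.1, harea.2, hcells.1, hcells.2]

lemma indexGE_anti {k l : ℝ} (h : k ≤ l) : indexGE l ⊆ indexGE k := fun _ hp =>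
  ⟨hp.1, (mul_le_mul_of_nonneg_right h hp.1.1.le).trans hp.2⟩

lemma indexCell_eq (k : ℕ) : indexCell k = indexGE k \ indexGE (k + 1) := by
  ext p
  simp only [indexCell, indexGE, Set.mem_ofPred_eq, Set.mem_sdiff, not_and, not_le]
  tauto

lemma mem_indexGE_of_mem_indexClass {i : Fin 3} {p : ℝ × ℝ} (h : p ∈ indexClass i) :
    p ∈ indexGE (2 + (i : ℕ)) := by
  obtain ⟨j, hj⟩ := h
  rw [indexCell_eq] at hj
  refine indexGE_anti ?_ hj.1
  push_cast
  linarith [Nat.cast_nonneg (α := ℝ) j]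

lemma indexGE_diff_subset_indexClass (i : Fin 3) :
    indexGE (2 + (i : ℕ)) \ indexGE (3 + (i : ℕ)) ⊆ indexClass i := fun p hp => by
  refine ⟨0, ?_⟩
  rw [indexCell_eq]
  push_cast
  convert hp using 2
  ring_nf

lemma hasDensity_index_one_mod_three :
    HasDensity ((fareyTriangle \ indexGE 2) ∪ indexClass 2) (1 / 6 + classArea 2) 38 := by
  have h := (hasDensity_fareyTriangle.diff (hasDensity_indexGE le_rfl) fun p hp => hp.1).union
    (hasDensity_indexClass 2) ?_
  · norm_num at h
    exact h
  · rw [Set.disjoint_left]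
    intro p hp hp'
    exact hp.2 (indexGE_anti (by norm_num) (mem_indexGE_of_mem_indexClass hp'))

lemma indexGE_five_subset_wedge : indexGE 5 ⊆ wedge 2 1 := fun p hp => by
  obtain ⟨h, h'⟩ := hp
  refine ⟨h, ?_⟩
  obtain ⟨_, _, _, _⟩ := h
  linarith

lemma indexGE_four_diff_eq : indexGE 4 \ wedge 2 1 = (indexGE 4 \ indexGE 5) \ wedge 2 1 := by
  ext p
  have := @indexGE_five_subset_wedge p
  simp only [Set.mem_sdiff]
  tauto

lemma hasDensity_indexClass_two_inter :
    HasDensity (indexClass 2 ∩ wedge 2 1) (classArea 2 - 1 / 210) 40 := by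
  have h := (hasDensity_indexClass 2).diff hasDensity_indexGE_four_diff ?_
  · convert h using 1
    · ext p
      have h4 := @mem_indexGE_of_mem_indexClass 2 p
      norm_num at h4
      simp only [Set.mem_sdiff, Set.mem_inter_iff]
      tauto
    · norm_num
  · rw [indexGE_four_diff_eq]
    refine fun p hp => indexGE_diff_subset_indexClass 2 ?_
    norm_num
    exact hp.1

lemma hasDensity_indexClass_one_inter :
    HasDensity (indexClass 1 ∩ wedge 2 1) (classArea 1 - 1 / 35) 50 := by
  have h := (hasDensity_indexClass 1).diff (hasDensity_indexGE_three_diff.diff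
    hasDensity_indexGE_four_diff ?_) ?_
  · convert h using 1
    · ext p
      have h3 := @mem_indexGE_of_mem_indexClass 1 p
      norm_num at h3
      have h4 : p ∈ indexClass 1 → p ∈ indexGE 4 → p ∈ wedge 2 1 := by
        rintro ⟨j, hj⟩ h4
        refine indexGE_five_subset_wedge ?_
        rw [indexCell_eq] at hj
        rcases Nat.eq_zero_or_pos j with rfl | h0
        · refine absurd ?_ hj.2
          norm_num
          exact h4
        · refine indexGE_anti ?_ hj.1
          have : 5 ≤ 3 * j + 2 + (1 : Fin 3) := by omega
          exact_mod_cast this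
      simp only [Set.mem_sdiff, Set.mem_inter_iff]
      tauto
    · norm_num
    · norm_num
  · exact Set.sdiff_subset_sdiff_left (indexGE_anti (by norm_num))
  · refine fun p hp => indexGE_diff_subset_indexClass 1 ?_
    norm_num
    simp only [Set.mem_sdiff] at hp ⊢
    tauto

lemma hasDensity_indexClass_zero_diff :
    HasDensity (indexClass 0 ∩ indexGE 3) (classArea 0 - 1 / 6) 40 := by
  have h := (hasDensity_indexClass 0).diff ((hasDensity_indexGE le_rfl).diff
    (hasDensity_indexGE (k := 3) (by norm_num)) (indexGE_anti (by norm_num))) ?_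
  · convert h using 1
    · ext p
      have h3 := @mem_indexGE_of_mem_indexClass 0 p
      norm_num at h3
      simp only [Set.mem_sdiff, Set.mem_inter_iff]
      tauto
    · norm_num
    · norm_num
  · refine fun p hp => indexGE_diff_subset_indexClass 0 ?_
    norm_num
    exact hp

lemma hasDensity_wedge_two (n : ℕ) (hn : 1 ≤ n) :
    HasDensity (wedge 2 (2 * n - 1) \ wedge 2 (2 * n + 1))
      (2 / ((2 * n - 1) * (2 * n + 1) * (2 * n + 3))) 6 := by
  have hn' : (1 : ℝ) ≤ n := by exact_mod_cast hn
  have h := (hasDensity_wedge (a := 2) (b := 2 * n - 1) (by norm_num) (by linarith)).diff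
    (hasDensity_wedge (a := 2) (b := 2 * n + 1) (by norm_num) (by linarith))
    (fun p hp => ⟨hp.1, by linarith [hp.2, hp.1.1]⟩)
  convert h using 1
  · have : (2 * (n : ℝ) - 1) ≠ 0 := by linarith
    have : (2 : ℝ) + (2 * n - 1) ≠ 0 := by linarith
    field_simp
    ring
  · norm_num

lemma hasDensity_wedge_three_diff : HasDensity (wedge 3 7 \ wedge 2 5) (1 / 70) 6 := by
  have h := (hasDensity_wedge (a := 3) (b := 7) (by norm_num) (by norm_num)).diff
    (hasDensity_wedge (a := 2) (b := 5) (by norm_num) (by norm_num))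
    (fun p hp => ⟨hp.1, by linarith [hp.2, hp.1.1]⟩)
  norm_num at h
  exact h

lemma hasDensity_wedge_diff_three : HasDensity (wedge 2 3 \ wedge 3 7) (1 / 210) 6 := by
  have h := (hasDensity_wedge (a := 2) (b := 3) (by norm_num) (by norm_num)).diff
    (hasDensity_wedge (a := 3) (b := 7) (by norm_num) (by norm_num))
    (fun p hp => ⟨hp.1, by
      obtain ⟨⟨_, _, _, _⟩, _⟩ := hp
      linarith⟩)
  norm_num at h
  exact h

/-- The lattice points of `Q • R` with coprime coordinates. -/
noncomputable def coprimePoints (R : Set (ℝ × ℝ)) (α β : ZMod 3) (Q : ℕ) : Finset (ℕ × ℕ) :=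
  {p ∈ latticePoints R α β Q | Nat.Coprime p.1 p.2}

/-- The proportion of coprime points in a fixed nonzero residue class modulo `3`. -/
noncomputable def coprimeDensity (Q : ℕ) : ℝ :=
  ∑ d ∈ Icc 1 Q with ¬ 3 ∣ d, (ArithmeticFunction.moebius d : ℝ) / (9 * (d : ℝ) ^ 2)

lemma sum_divisors_moebius (n : ℕ) :
    ∑ d ∈ n.divisors, (ArithmeticFunction.moebius d : ℤ) = if n = 1 then 1 else 0 := by
  have h := congrArg (fun f : ArithmeticFunction ℤ => f n)
    ArithmeticFunction.coe_zeta_mul_moebius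
  rwa [ArithmeticFunction.coe_zeta_mul_apply, ArithmeticFunction.one_apply] at h

lemma card_coprimePoints_eq (R : Set (ℝ × ℝ)) (α β : ZMod 3) (Q : ℕ) :
    (#(coprimePoints R α β Q) : ℤ) = ∑ d ∈ Icc 1 Q, ArithmeticFunction.moebius d *
      #{p ∈ latticePoints R α β Q | d ∣ p.1 ∧ d ∣ p.2} := by
  have h : ∀ p ∈ latticePoints R α β Q, (if Nat.Coprime p.1 p.2 then (1 : ℤ) else 0)
      = ∑ d ∈ Icc 1 Q, if d ∣ p.1 ∧ d ∣ p.2 then ArithmeticFunction.moebius d else 0 := by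
    intro p hp
    rw [mem_latticePoints, Nat.floor_natCast] at hp
    have hg : Nat.gcd p.1 p.2 ≠ 0 := by
      rw [Ne, Nat.gcd_eq_zero_iff]
      omega
    rw [← sum_filter]
    simp only [Nat.coprime_iff_gcd_eq_one]
    rw [← sum_divisors_moebius]
    refine sum_congr ?_ fun _ _ => rfl
    ext d
    rw [Nat.mem_divisors, mem_filter, mem_Icc, Nat.dvd_gcd_iff]
    constructor
    · rintro ⟨h, -⟩
      have := Nat.le_of_dvd (by omega) h.1
      have := Nat.pos_of_dvd_of_pos h.1 (by omega)
      exact ⟨⟨by omega, by omega⟩, h⟩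
    · rintro ⟨-, h⟩
      exact ⟨h, hg⟩
  rw [coprimePoints, card_filter]
  push_cast
  rw [sum_congr rfl h, sum_comm]
  refine sum_congr rfl fun d _ => ?_
  rw [← sum_filter, sum_const, nsmul_eq_mul, mul_comm]

lemma card_filter_dvd_eq_zero {R : Set (ℝ × ℝ)} {α β : ZMod 3} (hαβ : ¬ (α = 0 ∧ β = 0)) (Q : ℕ)
    {d : ℕ} (hd : 3 ∣ d) : #{p ∈ latticePoints R α β Q | d ∣ p.1 ∧ d ∣ p.2} = 0 := by
  rw [card_eq_zero, filter_eq_empty_iff]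
  rintro p hp ⟨h1, h2⟩
  rw [mem_latticePoints] at hp
  refine hαβ ⟨?_, ?_⟩
  · rw [← hp.2.1]
    exact (ZMod.natCast_eq_zero_iff _ _).2 (hd.trans h1)
  · rw [← hp.2.2.1]
    exact (ZMod.natCast_eq_zero_iff _ _).2 (hd.trans h2)

lemma card_filter_dvd_eq (R : Set (ℝ × ℝ)) (α β : ZMod 3) (Q : ℕ) {d : ℕ} (hd : ¬ 3 ∣ d) :
    #{p ∈ latticePoints R α β Q | d ∣ p.1 ∧ d ∣ p.2}
      = #(latticePoints R ((d : ZMod 3) * α) ((d : ZMod 3) * β) ((Q : ℝ) / d)) := by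
  have hd0 : 0 < d := Nat.pos_of_ne_zero fun h => hd (h ▸ dvd_zero 3)
  have hd0' : (0 : ℝ) < d := by exact_mod_cast hd0
  have hdz : (d : ZMod 3) * d = 1 := by
    have h1 : (d : ZMod 3) ≠ 0 := fun h => hd ((ZMod.natCast_eq_zero_iff _ _).1 h)
    revert h1
    generalize (d : ZMod 3) = e
    revert e
    decide
  have hz : ∀ x a : ZMod 3, (d : ZMod 3) * x = a ↔ x = d * a := by
    intro x a
    constructor
    · rintro rfl
      rw [← mul_assoc, hdz, one_mul]
    · rintro rfl
      rw [← mul_assoc, hdz, one_mul]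
  have hfl : ⌊(Q : ℝ) / d⌋₊ = Q / d := Nat.floor_div_natCast _ _ |>.trans (by simp)
  symm
  refine card_bij (fun p _ => (d * p.1, d * p.2)) ?_ ?_ ?_
  · intro p hp
    rw [mem_latticePoints, hfl, Nat.le_div_iff_mul_le hd0, Nat.le_div_iff_mul_le hd0] at hp
    rw [mem_filter, mem_latticePoints, Nat.floor_natCast]
    obtain ⟨⟨⟨h1, h2⟩, h3, h4⟩, h5, h6, h7⟩ := hp
    refine ⟨⟨⟨⟨Nat.mul_pos hd0 h1, by dsimp only; linarith⟩, Nat.mul_pos hd0 h3,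
      by dsimp only; linarith⟩, ?_, ?_, ?_⟩, dvd_mul_right _ _, dvd_mul_right _ _⟩
    · push_cast
      rwa [hz]
    · push_cast
      rwa [hz]
    · push_cast
      convert h7 using 2 <;> field_simp
  · intro p _ q _ h
    simp only [Prod.mk.injEq] at h
    exact Prod.ext (Nat.eq_of_mul_eq_mul_left hd0 h.1) (Nat.eq_of_mul_eq_mul_left hd0 h.2)
  · rintro ⟨_, _⟩ hp
    rw [mem_filter, mem_latticePoints, Nat.floor_natCast] at hp
    obtain ⟨⟨⟨⟨h1, h2⟩, h3, h4⟩, h5, h6, h7⟩, ⟨x, rfl⟩, y, rfl⟩ := hp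
    refine ⟨(x, y), ?_, rfl⟩
    rw [mem_latticePoints, hfl, Nat.le_div_iff_mul_le hd0, Nat.le_div_iff_mul_le hd0]
    push_cast at h5 h6 h7
    rw [hz] at h5 h6
    refine ⟨⟨⟨Nat.pos_of_mul_pos_left h1, by dsimp only at h2 ⊢; linarith⟩,
      Nat.pos_of_mul_pos_left h3, by dsimp only at h4 ⊢; linarith⟩, h5, h6, ?_⟩
    convert h7 using 2 <;> field_simp

lemma HasDensity.abs_card_coprimePoints_sub_le {R : Set (ℝ × ℝ)} {a E : ℝ} (h : HasDensity R a E)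
    {α β : ZMod 3} (hαβ : ¬ (α = 0 ∧ β = 0)) (Q : ℕ) :
    |(#(coprimePoints R α β Q) : ℝ) - coprimeDensity Q * a * (Q : ℝ) ^ 2|
      ≤ E * (Q * (1 + Real.log Q)) := by
  have hE : 0 ≤ E := by
    have := (abs_nonneg _).trans (h 0 0 1 le_rfl)
    linarith
  have h1 : (#(coprimePoints R α β Q) : ℝ) = ∑ d ∈ Icc 1 Q with ¬ 3 ∣ d,
      (ArithmeticFunction.moebius d : ℝ)
        * #(latticePoints R ((d : ZMod 3) * α) ((d : ZMod 3) * β) ((Q : ℝ) / d)) := by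
    have h0 : (#(coprimePoints R α β Q) : ℝ) = ((#(coprimePoints R α β Q) : ℤ) : ℝ) := by simp
    rw [h0, card_coprimePoints_eq]
    push_cast
    rw [sum_filter]
    refine sum_congr rfl fun d _ => ?_
    split_ifs with hd
    · rw [card_filter_dvd_eq_zero hαβ _ hd]
      simp
    · rw [card_filter_dvd_eq _ _ _ _ hd]
  rw [h1, coprimeDensity, sum_mul, sum_mul, ← sum_sub_distrib]
  calc _ ≤ ∑ d ∈ Icc 1 Q with ¬ 3 ∣ d, E * (Q * (1 / (d : ℝ))) := by
        refine (abs_sum_le_sum_abs _ _).trans (sum_le_sum fun d hd => ?_)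
        rw [mem_filter, mem_Icc] at hd
        have hd0 : (0 : ℝ) < d := by exact_mod_cast hd.1.1
        have hX : 1 ≤ (Q : ℝ) / d := by
          rw [one_le_div hd0]
          exact_mod_cast hd.1.2
        have hμ : |(ArithmeticFunction.moebius d : ℝ)| ≤ 1 := by
          exact_mod_cast ArithmeticFunction.abs_moebius_le_one (n := d)
        have e : (ArithmeticFunction.moebius d : ℝ)
            * #(latticePoints R ((d : ZMod 3) * α) ((d : ZMod 3) * β) ((Q : ℝ) / d))
            - (ArithmeticFunction.moebius d : ℝ) / (9 * (d : ℝ) ^ 2) * a * (Q : ℝ) ^ 2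
            = (ArithmeticFunction.moebius d : ℝ)
              * (#(latticePoints R ((d : ZMod 3) * α) ((d : ZMod 3) * β) ((Q : ℝ) / d))
                - a * ((Q : ℝ) / d) ^ 2 / 9) := by
          field_simp
        rw [e, abs_mul, mul_one_div]
        exact (mul_le_of_le_one_left (abs_nonneg _) hμ).trans (h _ _ _ hX)
    _ ≤ ∑ d ∈ Icc 1 Q, E * (Q * (1 / (d : ℝ))) :=
        sum_le_sum_of_subset_of_nonneg (filter_subset _ _) fun _ _ _ => by positivity
    _ ≤ E * (Q * (1 + Real.log Q)) := by
        rw [← mul_sum, ← mul_sum]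
        refine mul_le_mul_of_nonneg_left (mul_le_mul_of_nonneg_left ?_ (by positivity)) hE
        have := harmonic_le_one_add_log Q
        rw [harmonic_eq_sum_Icc] at this
        push_cast at this
        simpa using this

lemma one_div_le_coprimeDensity {Q : ℕ} (hQ : 1 ≤ Q) : 1 / 36 ≤ coprimeDensity Q := by
  have htele : ∀ n : ℕ, ∑ d ∈ Icc 2 (n + 2), 1 / (d : ℝ) ^ 2 ≤ 3 / 4 - 1 / ((n : ℝ) + 2) := by
    intro n
    induction n with
    | zero => norm_num
    | succ n ih =>
      rw [sum_Icc_succ_top (by omega)]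
      push_cast
      have : 1 / ((n : ℝ) + 2 + 1) ^ 2 ≤ 1 / ((n : ℝ) + 2) - 1 / ((n : ℝ) + 1 + 2) := by
        have e : 1 / ((n : ℝ) + 2) - 1 / ((n : ℝ) + 1 + 2) = 1 / ((n + 2) * (n + 3)) := by
          field_simp
          ring
        rw [e]
        refine one_div_le_one_div_of_le (by positivity) ?_
        nlinarith [Nat.cast_nonneg (α := ℝ) n]
      linarith
  have hsum : ∑ d ∈ Icc 2 Q, 1 / (d : ℝ) ^ 2 ≤ 3 / 4 := by
    rcases Nat.lt_or_ge Q 2 with h | h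
    · rw [Icc_eq_empty (by omega)]
      norm_num
    · obtain ⟨n, rfl⟩ := Nat.exists_eq_add_of_le' h
      have := htele n
      have h0 : 0 ≤ 1 / ((n : ℝ) + 2) := by positivity
      linarith
  have hsplit : ({d ∈ Icc 1 Q | ¬ 3 ∣ d} : Finset ℕ) = insert 1 {d ∈ Icc 2 Q | ¬ 3 ∣ d} := by
    ext d
    simp only [mem_filter, mem_Icc, mem_insert]
    constructor
    · rintro ⟨⟨h1, h2⟩, h3⟩
      by_cases h : d = 1
      · exact Or.inl h
      · exact Or.inr ⟨⟨by omega, h2⟩, h3⟩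
    · rintro (rfl | ⟨⟨h1, h2⟩, h3⟩)
      · exact ⟨⟨le_rfl, hQ⟩, by norm_num⟩
      · exact ⟨⟨by omega, h2⟩, h3⟩
  have hrest : |∑ d ∈ Icc 2 Q with ¬ 3 ∣ d,
      (ArithmeticFunction.moebius d : ℝ) / (9 * (d : ℝ) ^ 2)| ≤ 1 / 12 := by
    calc _ ≤ ∑ d ∈ Icc 2 Q with ¬ 3 ∣ d, 1 / 9 * (1 / (d : ℝ) ^ 2) := by
          refine (abs_sum_le_sum_abs _ _).trans (sum_le_sum fun d hd => ?_)
          have hμ : |(ArithmeticFunction.moebius d : ℝ)| ≤ 1 := by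
            exact_mod_cast ArithmeticFunction.abs_moebius_le_one (n := d)
          rw [abs_div, abs_of_nonneg (by positivity : (0 : ℝ) ≤ 9 * (d : ℝ) ^ 2),
            one_div_mul_one_div]
          exact div_le_div_of_nonneg_right hμ (by positivity)
      _ ≤ ∑ d ∈ Icc 2 Q, 1 / 9 * (1 / (d : ℝ) ^ 2) :=
          sum_le_sum_of_subset_of_nonneg (filter_subset _ _) fun _ _ _ => by positivity
      _ ≤ 1 / 12 := by
          rw [← mul_sum]
          linarith
  rw [coprimeDensity, hsplit, sum_insert (by simp)]
  simp only [ArithmeticFunction.moebius_apply_one]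
  norm_num
  linarith [(abs_le.1 hrest).1]

/-- The pairs of denominators of consecutive Farey fractions of order `Q`. -/
def fareyPairs (Q : ℕ) : Finset (ℕ × ℕ) :=
  {p ∈ Icc 1 Q ×ˢ Icc 1 Q | Q < p.1 + p.2 ∧ Nat.Coprime p.1 p.2}

lemma mem_fareyPairs {Q : ℕ} {p : ℕ × ℕ} : p ∈ fareyPairs Q ↔
    ((1 ≤ p.1 ∧ p.1 ≤ Q) ∧ (1 ≤ p.2 ∧ p.2 ≤ Q)) ∧ Q < p.1 + p.2 ∧ Nat.Coprime p.1 p.2 := by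
  simp [fareyPairs]

/-- The index of a pair of consecutive denominators. -/
def index (Q : ℕ) (p : ℕ × ℕ) : ℕ := (Q + p.1) / p.2

/-- The pair of consecutive denominators following `p`. -/
def nextPair (Q : ℕ) (p : ℕ × ℕ) : ℕ × ℕ := (p.2, index Q p * p.2 - p.1)

lemma index_eq_of_add_eq {Q a b c k : ℕ} (h : a + c = k * b) (h1 : c ≤ Q) (h2 : Q < b + c) :
    index Q (a, b) = k := by
  unfold index
  refine Nat.div_eq_of_lt_le ?_ ?_
  · dsimp only
    omega
  · rw [add_mul, one_mul]
    dsimp only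
    omega

lemma nextPair_eq_of_add_eq {Q a b c k : ℕ} (h : a + c = k * b) (h1 : c ≤ Q) (h2 : Q < b + c) :
    nextPair Q (a, b) = (b, c) := by
  unfold nextPair
  rw [index_eq_of_add_eq h h1 h2]
  dsimp only
  rw [← h, Nat.add_sub_cancel_left]

lemma swap_mem_fareyPairs {Q : ℕ} {p : ℕ × ℕ} (hp : p ∈ fareyPairs Q) :
    p.swap ∈ fareyPairs Q := by
  rw [mem_fareyPairs] at hp ⊢
  exact ⟨⟨hp.1.2, hp.1.1⟩, by rw [Prod.fst_swap, Prod.snd_swap, add_comm]; exact hp.2.1,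
    hp.2.2.symm⟩

lemma fst_add_nextPair_snd {Q : ℕ} {p : ℕ × ℕ} (hp : p ∈ fareyPairs Q) :
    p.1 + (nextPair Q p).2 = index Q p * p.2 := by
  rw [mem_fareyPairs] at hp
  have h1 : Q + p.1 < (index Q p + 1) * p.2 := by
    rw [add_mul, one_mul, mul_comm]
    exact Nat.lt_mul_div_succ _ (by omega)
  rw [add_mul, one_mul] at h1
  show p.1 + (index Q p * p.2 - p.1) = _
  omega

lemma nextPair_mem {Q : ℕ} {p : ℕ × ℕ} (hp : p ∈ fareyPairs Q) : nextPair Q p ∈ fareyPairs Q := by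
  have h := fst_add_nextPair_snd hp
  rw [mem_fareyPairs] at hp ⊢
  have h1 : Q + p.1 < (index Q p + 1) * p.2 := by
    rw [add_mul, one_mul, mul_comm]
    exact Nat.lt_mul_div_succ _ (by omega)
  have h2 : index Q p * p.2 ≤ Q + p.1 := Nat.div_mul_le_self _ _
  rw [add_mul, one_mul] at h1
  refine ⟨⟨hp.1.2, by omega, by omega⟩, ?_, ?_⟩
  · show Q < p.2 + _
    omega
  · show Nat.Coprime p.2 _
    have hg : Nat.gcd p.2 (nextPair Q p).2 ∣ p.1 := by
      have h4 : Nat.gcd p.2 (nextPair Q p).2 ∣ p.1 + (nextPair Q p).2 := by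
        rw [h]
        exact (Nat.gcd_dvd_left _ _).mul_left _
      exact (Nat.dvd_add_left (Nat.gcd_dvd_right _ _)).1 h4
    have := Nat.dvd_gcd hg (Nat.gcd_dvd_left _ _)
    rw [hp.2.2] at this
    exact Nat.dvd_one.1 this

lemma nextPair_swap_nextPair {Q : ℕ} {p : ℕ × ℕ} (hp : p ∈ fareyPairs Q) :
    nextPair Q (nextPair Q p).swap = p.swap := by
  have h := fst_add_nextPair_snd hp
  rw [mem_fareyPairs] at hp
  rw [add_comm] at h
  exact nextPair_eq_of_add_eq h hp.1.1.2 (by rw [add_comm]; exact hp.2.1)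

lemma index_swap_nextPair {Q : ℕ} {p : ℕ × ℕ} (hp : p ∈ fareyPairs Q) :
    index Q (nextPair Q p).swap = index Q p := by
  have h := fst_add_nextPair_snd hp
  rw [mem_fareyPairs] at hp
  rw [add_comm] at h
  exact index_eq_of_add_eq h hp.1.1.2 (by rw [add_comm]; exact hp.2.1)

open Classical in
/-- The pairs of consecutive denominators with the property `C`. -/
noncomputable def pairsWith (Q : ℕ) (C : ℕ × ℕ → Prop) : Finset (ℕ × ℕ) := {p ∈ fareyPairs Q | C p}

lemma mem_pairsWith {Q : ℕ} {C : ℕ × ℕ → Prop} {p : ℕ × ℕ} :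
    p ∈ pairsWith Q C ↔ p ∈ fareyPairs Q ∧ C p := by
  simp [pairsWith]

/-- The number of pairs of consecutive denominators with the property `C`. -/
noncomputable def pairCount (Q : ℕ) (C : ℕ × ℕ → Prop) : ℕ := #(pairsWith Q C)

lemma pairCount_congr {Q : ℕ} {C C' : ℕ × ℕ → Prop} (h : ∀ p ∈ fareyPairs Q, C p ↔ C' p) :
    pairCount Q C = pairCount Q C' := by
  unfold pairCount
  congr 1
  ext p
  rw [mem_pairsWith, mem_pairsWith]
  exact and_congr_right (h p)

lemma pairCount_eq_zero {Q : ℕ} {C : ℕ × ℕ → Prop} (h : ∀ p ∈ fareyPairs Q, ¬ C p) :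
    pairCount Q C = 0 := by
  rw [pairCount, card_eq_zero, eq_empty_iff_forall_notMem]
  intro p hp
  rw [mem_pairsWith] at hp
  exact h p hp.1 hp.2

lemma pairCount_or {Q : ℕ} {C C' : ℕ × ℕ → Prop} (h : ∀ p ∈ fareyPairs Q, C p → ¬ C' p) :
    pairCount Q (fun p => C p ∨ C' p) = pairCount Q C + pairCount Q C' := by
  unfold pairCount
  rw [← card_union_of_disjoint]
  · congr 1
    ext p
    simp only [mem_union, mem_pairsWith]
    tauto
  · rw [Finset.disjoint_left]
    intro p hp hp'
    rw [mem_pairsWith] at hp hp'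
    exact h p hp.1 hp.2 hp'.2

lemma pairCount_nextPair (Q : ℕ) (C : ℕ × ℕ → Prop) :
    pairCount Q (fun p => C (nextPair Q p)) = pairCount Q C := by
  refine card_bij (fun p _ => nextPair Q p) ?_ ?_ ?_
  · intro p hp
    rw [mem_pairsWith] at hp ⊢
    exact ⟨nextPair_mem hp.1, hp.2⟩
  · intro p hp q hq h
    rw [mem_pairsWith] at hp hq
    have := nextPair_swap_nextPair hp.1
    rw [h, nextPair_swap_nextPair hq.1] at this
    exact (Prod.swap_injective this).symm
  · intro p hp
    rw [mem_pairsWith] at hp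
    refine ⟨(nextPair Q p.swap).swap, mem_pairsWith.2
      ⟨swap_mem_fareyPairs (nextPair_mem (swap_mem_fareyPairs hp.1)), ?_⟩, ?_⟩
    · rw [nextPair_swap_nextPair (swap_mem_fareyPairs hp.1), Prod.swap_swap]
      exact hp.2
    · rw [nextPair_swap_nextPair (swap_mem_fareyPairs hp.1), Prod.swap_swap]

/-- The successive denominators starting with the pair `p`. -/
def den (Q : ℕ) (p : ℕ × ℕ) (i : ℕ) : ℕ := ((nextPair Q)^[i] p).1

/-- The successive indices starting with the pair `p`. -/
def idx (Q : ℕ) (p : ℕ × ℕ) (i : ℕ) : ℕ := index Q ((nextPair Q)^[i] p)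

lemma iterate_mem {Q : ℕ} {p : ℕ × ℕ} (hp : p ∈ fareyPairs Q) (i : ℕ) :
    (nextPair Q)^[i] p ∈ fareyPairs Q := by
  induction i with
  | zero => exact hp
  | succ i ih =>
    rw [Function.iterate_succ_apply']
    exact nextPair_mem ih

lemma iterate_eq (Q : ℕ) (p : ℕ × ℕ) (i : ℕ) :
    (nextPair Q)^[i] p = (den Q p i, den Q p (i + 1)) := by
  unfold den
  rw [Function.iterate_succ_apply']
  rfl

@[simp] lemma den_zero (Q : ℕ) (p : ℕ × ℕ) : den Q p 0 = p.1 := rfl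

@[simp] lemma den_one (Q : ℕ) (p : ℕ × ℕ) : den Q p 1 = p.2 := rfl

lemma idx_nextPair (Q : ℕ) (p : ℕ × ℕ) (i : ℕ) : idx Q (nextPair Q p) i = idx Q p (i + 1) := rfl

lemma den_facts {Q : ℕ} {p : ℕ × ℕ} (hp : p ∈ fareyPairs Q) (i : ℕ) :
    1 ≤ den Q p i ∧ den Q p i ≤ Q ∧ Q < den Q p i + den Q p (i + 1) ∧
      Nat.Coprime (den Q p i) (den Q p (i + 1)) ∧
      den Q p i + den Q p (i + 2) = idx Q p i * den Q p (i + 1) := by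
  have h := iterate_mem hp i
  have h' := fst_add_nextPair_snd h
  rw [← Function.iterate_succ_apply' (nextPair Q), iterate_eq, iterate_eq] at h'
  rw [iterate_eq, mem_fareyPairs] at h
  refine ⟨h.1.1.1, h.1.1.2, h.2.1, h.2.2, ?_⟩
  rw [idx, iterate_eq]
  exact h'

lemma nextPair_iterate_swap {Q : ℕ} {p : ℕ × ℕ} (hp : p ∈ fareyPairs Q) (m i : ℕ) :
    (nextPair Q)^[i] ((nextPair Q)^[i + m] p).swap = ((nextPair Q)^[m] p).swap := by
  induction i generalizing m with
  | zero => simp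
  | succ i ih =>
    rw [Function.iterate_succ_apply', show i + 1 + m = i + (m + 1) by ring, ih,
      Function.iterate_succ_apply', nextPair_swap_nextPair (iterate_mem hp m)]

/-- The pair of denominators from which the first `m + 2` denominators after `p` are run through
in reverse. -/
def revPair (Q m : ℕ) (p : ℕ × ℕ) : ℕ × ℕ := ((nextPair Q)^[m] p).swap

lemma revPair_mem {Q : ℕ} {p : ℕ × ℕ} (hp : p ∈ fareyPairs Q) (m : ℕ) :
    revPair Q m p ∈ fareyPairs Q := swap_mem_fareyPairs (iterate_mem hp m)

lemma den_revPair {Q : ℕ} {p : ℕ × ℕ} (hp : p ∈ fareyPairs Q) {m i : ℕ} (hi : i ≤ m + 1) :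
    den Q (revPair Q m p) i = den Q p (m + 1 - i) := by
  rcases Nat.lt_or_ge m i with h | h
  · obtain rfl : i = m + 1 := by omega
    unfold den revPair
    rw [Function.iterate_succ_apply']
    have := nextPair_iterate_swap hp 0 m
    rw [add_zero] at this
    rw [this]
    simp [nextPair]
  · obtain ⟨j, rfl⟩ := Nat.exists_eq_add_of_le h
    unfold revPair
    rw [den, nextPair_iterate_swap hp j i, iterate_eq, Prod.fst_swap,
      show i + j + 1 - i = j + 1 by omega]

lemma idx_revPair {Q : ℕ} {p : ℕ × ℕ} (hp : p ∈ fareyPairs Q) {m i : ℕ} (hi : i + 1 ≤ m) :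
    idx Q (revPair Q m p) i = idx Q p (m - 1 - i) := by
  have h1 := (den_facts (revPair_mem hp m) i).2.2.2.2
  have h2 := (den_facts hp (m - 1 - i)).2.2.2.2
  have h3 := (den_facts hp (m - 1 - i + 1)).1
  rw [den_revPair hp (by omega), den_revPair hp (by omega), den_revPair hp (by omega),
    show m + 1 - i = m - 1 - i + 2 by omega, show m + 1 - (i + 2) = m - 1 - i by omega,
    show m + 1 - (i + 1) = m - 1 - i + 1 by omega, add_comm, h2] at h1
  exact (Nat.eq_of_mul_eq_mul_right h3 h1).symm

lemma revPair_revPair {Q : ℕ} {p : ℕ × ℕ} (hp : p ∈ fareyPairs Q) (m : ℕ) :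
    revPair Q m (revPair Q m p) = p := by
  have := nextPair_iterate_swap hp 0 m
  rw [add_zero] at this
  rw [revPair, revPair, this]
  simp

lemma pairCount_revPair (Q m : ℕ) (C : ℕ × ℕ → Prop) :
    pairCount Q (fun p => C (revPair Q m p)) = pairCount Q C := by
  refine card_bij (fun p _ => revPair Q m p) ?_ ?_ ?_
  · intro p hp
    rw [mem_pairsWith] at hp ⊢
    exact ⟨revPair_mem hp.1 m, hp.2⟩
  · intro p hp q hq h
    rw [mem_pairsWith] at hp hq
    rw [← revPair_revPair hp.1 m, h, revPair_revPair hq.1 m]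
  · intro p hp
    rw [mem_pairsWith] at hp
    exact ⟨revPair Q m p, mem_pairsWith.2 ⟨revPair_mem hp.1 m, by
      rw [revPair_revPair hp.1]; exact hp.2⟩, revPair_revPair hp.1 m⟩

section Dynamics

variable {Q : ℕ} {p : ℕ × ℕ}

lemma iterate_idx (m i : ℕ) : idx Q ((nextPair Q)^[m] p) i = idx Q p (m + i) := by
  unfold idx
  rw [← Function.iterate_add_apply, add_comm]

lemma le_idx_iff (hp : p ∈ fareyPairs Q) (i m : ℕ) :
    m ≤ idx Q p i ↔ m * den Q p (i + 1) ≤ Q + den Q p i := by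
  rw [idx, iterate_eq, index, Nat.le_div_iff_mul_le (den_facts hp (i + 1)).1]

lemma one_le_idx (hp : p ∈ fareyPairs Q) (i : ℕ) : 1 ≤ idx Q p i := by
  rw [le_idx_iff hp]
  have := (den_facts hp (i + 1)).2.1
  omega

lemma den_arith (hp : p ∈ fareyPairs Q) {n : ℕ} (h : ∀ l < n, idx Q p (1 + l) = 2) :
    ∀ l ≤ n + 1, (den Q p (1 + l) : ℤ) = den Q p 1 + l * ((den Q p 2 : ℤ) - den Q p 1) := by
  intro l
  induction l using Nat.strong_induction_on with
  | _ l ih =>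
    intro hl
    match l with
    | 0 => simp
    | 1 => simp
    | l + 2 =>
      have h1 := ih l (by omega) (by omega)
      have h2 := ih (l + 1) (by omega) (by omega)
      have h3 := (den_facts hp (1 + l)).2.2.2.2
      rw [h l (by omega)] at h3
      rw [show 1 + l + 2 = 1 + (l + 2) by ring, show 1 + l + 1 = 1 + (l + 1) by ring] at h3
      zify at h3
      push_cast at h2 ⊢
      linear_combination h3 - h1 + 2 * h2

lemma not_three_le_idx_twos_zero (hp : p ∈ fareyPairs Q) {n : ℕ} (h0 : 3 ≤ idx Q p 0)
    (h : ∀ l < n, idx Q p (1 + l) = 2) : idx Q p (1 + n) < 3 := by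
  by_contra! hn
  have h1 := den_arith hp h n (by omega)
  have h2 := den_arith hp h (n + 1) (by omega)
  have f0 := den_facts hp 0
  have f1 := den_facts hp 1
  have fn := den_facts hp (1 + n)
  have fn3 := den_facts hp (1 + n + 2)
  have e0 := Nat.mul_le_mul_right (den Q p 1) h0
  have en := Nat.mul_le_mul_right (den Q p (1 + n + 1)) hn
  rw [← f0.2.2.2.2] at e0
  rw [← fn.2.2.2.2] at en
  rw [← add_assoc] at h2
  have g1 := f1.2.2.1
  have g2 := fn.2.2.1
  have g3 := f0.2.1
  have g4 := fn3.2.1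
  simp only [zero_add, Nat.reduceAdd] at *
  zify at *
  linarith

/-- Between two indices at least `3` there is an index different from `2`. -/
lemma idx_lt_three_of_twos (hp : p ∈ fareyPairs Q) {i j : ℕ} (hij : i < j) (hi : 3 ≤ idx Q p i)
    (h : ∀ l, i < l → l < j → idx Q p l = 2) : idx Q p j < 3 := by
  obtain ⟨n, rfl⟩ := Nat.exists_eq_add_of_lt hij
  have := not_three_le_idx_twos_zero (iterate_mem hp i) (n := n)
    (by rw [iterate_idx]; exact hi)
    (fun l hl => by rw [iterate_idx]; exact h _ (by omega) (by omega))
  rwa [iterate_idx, show i + (1 + n) = i + n + 1 by ring] at this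

lemma idx_succ_of_five_le (hp : p ∈ fareyPairs Q) (i : ℕ) (h : 5 ≤ idx Q p i) :
    idx Q p (i + 1) = 1 := by
  have h1 := one_le_idx hp (i + 1)
  by_contra hne
  have h2 : 2 ≤ idx Q p (i + 1) := by omega
  rw [le_idx_iff hp] at h2
  have f0 := den_facts hp i
  have f1 := den_facts hp (i + 1)
  have := Nat.mul_le_mul_right (den Q p (i + 1)) h
  rw [← f0.2.2.2.2] at this
  rw [add_assoc] at h2 f1
  simp only [Nat.reduceAdd] at h2 f1
  omega

lemma idx_of_five_le_succ (hp : p ∈ fareyPairs Q) (i : ℕ) (h : 5 ≤ idx Q p (i + 1)) :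
    idx Q p i = 1 := by
  have h1 := one_le_idx hp i
  by_contra hne
  have h2 : 2 ≤ idx Q p i := by omega
  have f0 := den_facts hp i
  have f1 := den_facts hp (i + 1)
  have f3 := den_facts hp (i + 3)
  have := Nat.mul_le_mul_right (den Q p (i + 2)) h
  have e := Nat.mul_le_mul_right (den Q p (i + 1)) h2
  rw [← f0.2.2.2.2] at e
  rw [add_assoc] at f1
  simp only [Nat.reduceAdd, add_assoc] at f1
  rw [← f1.2.2.2.2] at this
  omega

lemma idx_succ_ne_one (hp : p ∈ fareyPairs Q) (i : ℕ) (h : idx Q p i = 1) :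
    idx Q p (i + 1) ≠ 1 := by
  intro h'
  have f0 := den_facts hp i
  have f1 := den_facts hp (i + 1)
  have f3 := den_facts hp (i + 3)
  rw [h] at f0
  rw [h'] at f1
  simp only [Nat.reduceAdd, add_assoc] at f0 f1
  omega

lemma den_succ_add (hp : p ∈ fareyPairs Q) (n : ℕ)
    (h : idx Q p 0 = 1 ∧ ∀ l < n, idx Q p (1 + l) = 2) :
    ∀ l ≤ n + 1, den Q p (1 + l) + l * p.1 = p.2 := by
  intro l hl
  have h1 := den_arith hp h.2 l hl
  have f0 := (den_facts hp 0).2.2.2.2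
  rw [h.1] at f0
  simp only [zero_add, den_zero, den_one, one_mul] at f0
  zify at f0 ⊢
  rw [h1, den_one]
  linear_combination (l : ℤ) * f0

lemma idx_one_twos_iff (hp : p ∈ fareyPairs Q) (n : ℕ) :
    (idx Q p 0 = 1 ∧ ∀ l < n, idx Q p (1 + l) = 2) ↔ Q + (2 * n + 1) * p.1 < 2 * p.2 := by
  induction n with
  | zero =>
    have h1 := one_le_idx hp 0
    have h2 := le_idx_iff hp 0 2
    simp only [zero_add, den_zero, den_one] at h2
    simp only [not_lt_zero, false_imp_iff, implies_true, and_true, mul_zero, zero_add, one_mul]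
    omega
  | succ n ih =>
    have key : (idx Q p 0 = 1 ∧ ∀ l < n, idx Q p (1 + l) = 2) →
        (idx Q p (1 + n) = 2 ↔ Q + (2 * (n + 1) + 1) * p.1 < 2 * p.2) := by
      intro h
      have h1 := den_succ_add hp n h n (by omega)
      have h2 := den_succ_add hp n h (n + 1) (by omega)
      have h3 := le_idx_iff hp (1 + n) 2
      have h4 := le_idx_iff hp (1 + n) 3
      have h5 := (mem_fareyPairs.1 hp).1.2.2
      rw [← add_assoc] at h2
      have e1 : (n + 1) * p.1 = n * p.1 + p.1 := by ring
      have e2 : (2 * (n + 1) + 1) * p.1 = 2 * (n * p.1) + 3 * p.1 := by ring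
      rw [e1] at h2
      rw [e2]
      generalize n * p.1 = w at *
      omega
    constructor
    · rintro ⟨h1, h2⟩
      exact (key ⟨h1, fun l hl => h2 l (by omega)⟩).1 (h2 n (by omega))
    · intro h
      have h' : Q + (2 * n + 1) * p.1 < 2 * p.2 := by
        have e : (2 * (n + 1) + 1) * p.1 = (2 * n + 1) * p.1 + 2 * p.1 := by ring
        omega
      obtain ⟨h1, h2⟩ := ih.2 h'
      refine ⟨h1, fun l hl => ?_⟩
      rcases Nat.lt_succ_iff_lt_or_eq.1 hl with hl | rfl
      · exact h2 l hl
      · exact (key ⟨h1, h2⟩).2 h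

lemma le_idx_after_twos_iff (hp : p ∈ fareyPairs Q) {n : ℕ}
    (h : Q + (2 * n + 1) * p.1 < 2 * p.2) (m : ℕ) :
    m + 1 ≤ idx Q p (1 + n) ↔ m * p.2 ≤ Q + (m * (n + 1) + 1) * p.1 := by
  have h := (idx_one_twos_iff hp n).2 h
  have h1 := den_succ_add hp n h n (by omega)
  have h2 := den_succ_add hp n h (n + 1) (by omega)
  rw [le_idx_iff hp]
  rw [← add_assoc] at h2
  rw [← h2]
  zify at h1 h2 ⊢
  constructor <;> intro h3 <;> linarith

lemma two_le_idx_after_twos (hp : p ∈ fareyPairs Q) {n : ℕ}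
    (h : Q + (2 * n + 1) * p.1 < 2 * p.2) : 2 ≤ idx Q p (1 + n) := by
  rw [le_idx_after_twos_iff hp h 1]
  have := (mem_fareyPairs.1 hp).1.2.2
  omega

lemma idx_after_twos_lt_five (hp : p ∈ fareyPairs Q) {n : ℕ} (hn : 1 ≤ n)
    (h : Q + (2 * n + 1) * p.1 < 2 * p.2) : idx Q p (1 + n) < 5 := by
  by_contra! h'
  rw [le_idx_after_twos_iff hp h 4] at h'
  have := (mem_fareyPairs.1 hp).1.2.2
  nlinarith [Nat.mul_le_mul_right p.1 hn]

lemma idx_after_twos_lt_four (hp : p ∈ fareyPairs Q) {n : ℕ} (hn : 2 ≤ n)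
    (h : Q + (2 * n + 1) * p.1 < 2 * p.2) : idx Q p (1 + n) < 4 := by
  by_contra! h'
  rw [le_idx_after_twos_iff hp h 3] at h'
  have := (mem_fareyPairs.1 hp).1.2.2
  nlinarith [Nat.mul_le_mul_right p.1 hn]

/-- Before an index at least `3`, a run of indices `≡ 2` modulo `3` consists of twos. -/
lemma idx_eq_two_of_run (hp : p ∈ fareyPairs Q) {n : ℕ} (hn : 3 ≤ idx Q p (1 + n))
    (h : ∀ l < n, idx Q p (1 + l) % 3 = 2) : ∀ l < n, idx Q p (1 + l) = 2 := by
  have key : ∀ j, ∀ l < n, n ≤ l + j → idx Q p (1 + l) = 2 := by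
    intro j
    induction j with
    | zero => intro l h1 h2; omega
    | succ j ih =>
      intro l h1 h2
      by_contra hne
      have h3 := h l h1
      have := idx_lt_three_of_twos hp (i := 1 + l) (j := 1 + n) (by omega) (by omega)
        (fun m hm hm' => by
          obtain ⟨m', rfl⟩ := Nat.exists_eq_add_of_le (show 1 ≤ m by omega)
          exact ih m' (by omega) (by omega))
      omega
  exact fun l hl => key n l hl (by omega)

end Dynamics

section

lemma mem_coprimePoints {R : Set (ℝ × ℝ)} {α β : ZMod 3} {Q : ℕ} {p : ℕ × ℕ} :
    p ∈ coprimePoints R α β Q ↔ (((1 ≤ p.1 ∧ p.1 ≤ Q) ∧ (1 ≤ p.2 ∧ p.2 ≤ Q)) ∧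
      (p.1 : ZMod 3) = α ∧ (p.2 : ZMod 3) = β ∧ ((p.1 : ℝ) / Q, (p.2 : ℝ) / Q) ∈ R) ∧
      Nat.Coprime p.1 p.2 := by
  rw [coprimePoints, mem_filter, mem_latticePoints, Nat.floor_natCast]

/-- The pairs satisfying `C Q` number `a Q²` times the density of coprime pairs, up to an error
at most `E Q (1 + log Q)`. -/
def HasPairDensity (C : ℕ → ℕ × ℕ → Prop) (a E : ℝ) : Prop :=
  ∀ Q : ℕ, |(pairCount Q (C Q) : ℝ) - coprimeDensity Q * a * (Q : ℝ) ^ 2| ≤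
    E * ((Q : ℝ) * (1 + Real.log Q))

lemma HasPairDensity.congr {C C' : ℕ → ℕ × ℕ → Prop} {a E : ℝ} (h : HasPairDensity C a E)
    (hC : ∀ Q, pairCount Q (C' Q) = pairCount Q (C Q)) : HasPairDensity C' a E := by
  intro Q
  rw [hC]
  exact h Q

lemma HasPairDensity.or {C C' : ℕ → ℕ × ℕ → Prop} {a a' E E' : ℝ} (h : HasPairDensity C a E)
    (h' : HasPairDensity C' a' E') (hC : ∀ Q, ∀ p ∈ fareyPairs Q, C Q p → ¬ C' Q p) :
    HasPairDensity (fun Q p => C Q p ∨ C' Q p) (a + a') (E + E') := by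
  intro Q
  rw [pairCount_or (hC Q)]
  have h1 := abs_le.1 (h Q)
  have h2 := abs_le.1 (h' Q)
  push_cast
  rw [abs_le]
  constructor <;> linarith [h1.1, h1.2, h2.1, h2.2]

lemma hasPairDensity_of_false {C : ℕ → ℕ × ℕ → Prop} (h : ∀ Q, ∀ p ∈ fareyPairs Q, ¬ C Q p) :
    HasPairDensity C 0 0 := by
  intro Q
  rw [pairCount_eq_zero (h Q)]
  simp

lemma HasDensity.hasPairDensity {R : Set (ℝ × ℝ)} {a E : ℝ} (h : HasDensity R a E)
    (hR : R ⊆ fareyTriangle) {α β : ZMod 3} (hαβ : ¬ (α = 0 ∧ β = 0)) :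
    HasPairDensity (fun Q p => (p.1 : ZMod 3) = α ∧ (p.2 : ZMod 3) = β ∧
      ((p.1 : ℝ) / Q, (p.2 : ℝ) / Q) ∈ R) a E := by
  intro Q
  have e : pairsWith Q (fun p => (p.1 : ZMod 3) = α ∧ (p.2 : ZMod 3) = β ∧
      ((p.1 : ℝ) / Q, (p.2 : ℝ) / Q) ∈ R) = coprimePoints R α β Q := by
    ext p
    rw [mem_pairsWith, mem_coprimePoints, mem_fareyPairs]
    constructor
    · tauto
    · rintro ⟨⟨h1, h2, h3, h4⟩, h5⟩
      have h6 := (hR h4).2.2.2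
      have hQ : (0 : ℝ) < Q := by
        have : 0 < Q := by omega
        exact_mod_cast this
      dsimp only at h6
      rw [← add_div, lt_div_iff₀ hQ, one_mul] at h6
      exact ⟨⟨h1, by exact_mod_cast h6, h5⟩, h2, h3, h4⟩
  rw [pairCount, e]
  exact h.abs_card_coprimePoints_sub_le hαβ Q

lemma HasDensity.hasPairDensity_swap {R : Set (ℝ × ℝ)} {a E : ℝ} (h : HasDensity R a E)
    (hR : R ⊆ fareyTriangle) {α β : ZMod 3} (hαβ : ¬ (α = 0 ∧ β = 0)) :
    HasPairDensity (fun Q p => (p.1 : ZMod 3) = α ∧ (p.2 : ZMod 3) = β ∧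
      ((p.2 : ℝ) / Q, (p.1 : ℝ) / Q) ∈ R) a E := by
  refine (h.hasPairDensity hR (α := β) (β := α) (by tauto)).congr ?_
  intro Q
  rw [← pairCount_revPair Q 0 (fun p => (p.1 : ZMod 3) = β ∧ (p.2 : ZMod 3) = α ∧
    ((p.1 : ℝ) / Q, (p.2 : ℝ) / Q) ∈ R)]
  refine pairCount_congr ?_
  intro p _
  simp only [revPair, Function.iterate_zero, id, Prod.fst_swap, Prod.snd_swap]
  tauto

variable {Q : ℕ} {p : ℕ × ℕ}

lemma cast_pos_of_mem (hp : p ∈ fareyPairs Q) : (0 : ℝ) < Q := by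
  rw [mem_fareyPairs] at hp
  have : 0 < Q := by omega
  exact_mod_cast this

lemma mem_fareyTriangle_of_mem (hp : p ∈ fareyPairs Q) :
    ((p.1 : ℝ) / Q, (p.2 : ℝ) / Q) ∈ fareyTriangle := by
  have hQ := cast_pos_of_mem hp
  rw [mem_fareyPairs] at hp
  obtain ⟨⟨⟨h1, h2⟩, h3, h4⟩, h5, -⟩ := hp
  refine ⟨?_, ?_, ?_, ?_⟩ <;> dsimp only
  · have : (0 : ℝ) < p.1 := by exact_mod_cast h1
    positivity
  · rw [div_le_one hQ]
    exact_mod_cast h2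
  · rw [div_le_one hQ]
    exact_mod_cast h4
  · rw [← add_div, lt_div_iff₀ hQ, one_mul]
    exact_mod_cast h5

lemma swap_mem_fareyTriangle_of_mem (hp : p ∈ fareyPairs Q) :
    ((p.2 : ℝ) / Q, (p.1 : ℝ) / Q) ∈ fareyTriangle :=
  mem_fareyTriangle_of_mem (swap_mem_fareyPairs hp)

lemma mem_wedge_iff (hp : p ∈ fareyPairs Q) (a b : ℕ) :
    ((p.1 : ℝ) / Q, (p.2 : ℝ) / Q) ∈ wedge a b ↔ Q + b * p.1 < a * p.2 := by
  have hQ := cast_pos_of_mem hp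
  have ht := mem_fareyTriangle_of_mem hp
  have e : ((a : ℝ) * ((p.2 : ℝ) / Q) - b * ((p.1 : ℝ) / Q)) = (a * p.2 - b * p.1) / Q := by ring
  constructor
  · intro h
    have h2 := h.2
    dsimp only at h2
    rw [e, lt_div_iff₀ hQ, one_mul, lt_sub_iff_add_lt] at h2
    exact_mod_cast h2
  · intro h
    refine ⟨ht, ?_⟩
    dsimp only
    rw [e, lt_div_iff₀ hQ, one_mul, lt_sub_iff_add_lt]
    exact_mod_cast h

lemma swap_mem_wedge_iff (hp : p ∈ fareyPairs Q) (a b : ℕ) :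
    ((p.2 : ℝ) / Q, (p.1 : ℝ) / Q) ∈ wedge a b ↔ Q + b * p.2 < a * p.1 :=
  mem_wedge_iff (swap_mem_fareyPairs hp) a b

lemma mem_indexGE_iff (hp : p ∈ fareyPairs Q) (k : ℕ) :
    ((p.2 : ℝ) / Q, (p.1 : ℝ) / Q) ∈ indexGE k ↔ k ≤ idx Q p 0 := by
  have hQ := cast_pos_of_mem hp
  have ht := swap_mem_fareyTriangle_of_mem hp
  have e : 1 + (p.1 : ℝ) / Q = (Q + p.1) / Q := by field_simp
  rw [le_idx_iff hp, den_zero, den_one]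
  constructor
  · intro h
    have h2 := h.2
    dsimp only at h2
    rw [e, mul_div_assoc', div_le_div_iff_of_pos_right hQ] at h2
    exact_mod_cast h2
  · intro h
    refine ⟨ht, ?_⟩
    dsimp only
    rw [e, mul_div_assoc', div_le_div_iff_of_pos_right hQ]
    exact_mod_cast h

lemma mem_indexClass_iff (hp : p ∈ fareyPairs Q) (i : Fin 3) :
    ((p.2 : ℝ) / Q, (p.1 : ℝ) / Q) ∈ indexClass i ↔
      2 + (i : ℕ) ≤ idx Q p 0 ∧ idx Q p 0 % 3 = (2 + (i : ℕ)) % 3 := by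
  have key : ∀ k : ℕ, ((p.2 : ℝ) / Q, (p.1 : ℝ) / Q) ∈ indexCell k ↔ idx Q p 0 = k := by
    intro k
    have h1 := mem_indexGE_iff hp k
    have h2 := mem_indexGE_iff hp (k + 1)
    rw [indexCell_eq, Set.mem_sdiff, h1]
    push_cast at h2
    rw [h2]
    omega
  constructor
  · rintro ⟨j, hj⟩
    rw [key] at hj
    omega
  · rintro ⟨h1, h2⟩
    refine ⟨(idx Q p 0 - (2 + i)) / 3, ?_⟩
    rw [key]
    omega

end

lemma wedge_subset (a b : ℝ) : wedge a b ⊆ fareyTriangle := fun _ h => h.1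

lemma indexClass_subset (i : Fin 3) : indexClass i ⊆ fareyTriangle := by
  rintro p ⟨j, hj⟩
  exact hj.1

lemma HasDensity.hasPairDensity_of_iff {R : Set (ℝ × ℝ)} {a E : ℝ} (h : HasDensity R a E)
    (hR : R ⊆ fareyTriangle) {α β : ZMod 3} (hαβ : ¬ (α = 0 ∧ β = 0)) {S : ℕ → ℕ × ℕ → Prop}
    (hS : ∀ Q, ∀ p ∈ fareyPairs Q, S Q p ↔ ((p.1 : ℝ) / Q, (p.2 : ℝ) / Q) ∈ R) :
    HasPairDensity (fun Q p => (p.1 : ZMod 3) = α ∧ (p.2 : ZMod 3) = β ∧ S Q p) a E :=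
  (h.hasPairDensity hR hαβ).congr fun Q => pairCount_congr fun p hp => by
    rw [hS Q p hp]

lemma HasDensity.hasPairDensity_swap_of_iff {R : Set (ℝ × ℝ)} {a E : ℝ} (h : HasDensity R a E)
    (hR : R ⊆ fareyTriangle) {α β : ZMod 3} (hαβ : ¬ (α = 0 ∧ β = 0)) {S : ℕ → ℕ × ℕ → Prop}
    (hS : ∀ Q, ∀ p ∈ fareyPairs Q, S Q p ↔ ((p.2 : ℝ) / Q, (p.1 : ℝ) / Q) ∈ R) :
    HasPairDensity (fun Q p => (p.1 : ZMod 3) = α ∧ (p.2 : ZMod 3) = β ∧ S Q p) a E :=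
  (h.hasPairDensity_swap hR hαβ).congr fun Q => pairCount_congr fun p hp => by
    rw [hS Q p hp]

lemma hasPairDensity_all {α β : ZMod 3} (hαβ : ¬ (α = 0 ∧ β = 0)) :
    HasPairDensity (fun _ p => (p.1 : ZMod 3) = α ∧ (p.2 : ZMod 3) = β) (1 / 2) 3 :=
  (hasDensity_fareyTriangle.hasPairDensity subset_rfl hαβ).congr fun Q =>
    pairCount_congr fun p hp => by
      have := mem_fareyTriangle_of_mem hp
      tauto

lemma hasPairDensity_idx_mod_one {α β : ZMod 3} (hαβ : ¬ (α = 0 ∧ β = 0)) :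
    HasPairDensity (fun Q p => (p.1 : ZMod 3) = α ∧ (p.2 : ZMod 3) = β ∧ idx Q p 0 % 3 = 1)
      (1 / 6 + classArea 2) 38 := by
  refine hasDensity_index_one_mod_three.hasPairDensity_swap_of_iff ?_ hαβ fun Q p hp => ?_
  · exact Set.union_subset (Set.sdiff_subset.trans subset_rfl) (indexClass_subset _)
  · have h1 := mem_indexGE_iff hp 2
    have h2 := mem_indexClass_iff hp 2
    have h3 := one_le_idx hp 0
    have h4 := swap_mem_fareyTriangle_of_mem hp
    norm_num at h1 h2
    rw [Set.mem_union, Set.mem_sdiff, h1, h2]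
    simp only [h4, true_and]
    omega

lemma hasPairDensity_idx_mod_two {α β : ZMod 3} (hαβ : ¬ (α = 0 ∧ β = 0)) :
    HasPairDensity (fun Q p => (p.1 : ZMod 3) = α ∧ (p.2 : ZMod 3) = β ∧ idx Q p 0 % 3 = 2)
      (classArea 0) 30 := by
  refine (hasDensity_indexClass 0).hasPairDensity_swap_of_iff (indexClass_subset _) hαβ
    fun Q p hp => ?_
  have h2 := mem_indexClass_iff hp 0
  norm_num at h2
  rw [h2]
  omega

lemma hasPairDensity_idx_mod_zero {α β : ZMod 3} (hαβ : ¬ (α = 0 ∧ β = 0)) :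
    HasPairDensity (fun Q p => (p.1 : ZMod 3) = α ∧ (p.2 : ZMod 3) = β ∧ idx Q p 0 % 3 = 0)
      (classArea 1) 30 := by
  refine (hasDensity_indexClass 1).hasPairDensity_swap_of_iff (indexClass_subset _) hαβ
    fun Q p hp => ?_
  have h2 := mem_indexClass_iff hp 1
  have h3 := one_le_idx hp 0
  norm_num at h2
  rw [h2]
  omega

lemma hasPairDensity_idx_mod_zero_inter {α β : ZMod 3} (hαβ : ¬ (α = 0 ∧ β = 0)) :
    HasPairDensity (fun Q p => (p.1 : ZMod 3) = α ∧ (p.2 : ZMod 3) = β ∧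
      (idx Q p 0 % 3 = 0 ∧ Q + p.2 < 2 * p.1)) (classArea 1 - 1 / 35) 50 := by
  refine hasDensity_indexClass_one_inter.hasPairDensity_swap_of_iff
    (Set.inter_subset_left.trans (indexClass_subset _)) hαβ fun Q p hp => ?_
  have h1 := swap_mem_wedge_iff hp 2 1
  have h2 := mem_indexClass_iff hp 1
  have h3 := one_le_idx hp 0
  norm_num at h1 h2
  rw [Set.mem_inter_iff, h1, h2]
  omega

lemma hasPairDensity_idx_mod_one_inter {α β : ZMod 3} (hαβ : ¬ (α = 0 ∧ β = 0)) :
    HasPairDensity (fun Q p => (p.1 : ZMod 3) = α ∧ (p.2 : ZMod 3) = β ∧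
      (4 ≤ idx Q p 0 ∧ idx Q p 0 % 3 = 1 ∧ Q + p.2 < 2 * p.1)) (classArea 2 - 1 / 210) 40 := by
  refine hasDensity_indexClass_two_inter.hasPairDensity_swap_of_iff
    (Set.inter_subset_left.trans (indexClass_subset _)) hαβ fun Q p hp => ?_
  have h1 := swap_mem_wedge_iff hp 2 1
  have h2 := mem_indexClass_iff hp 2
  norm_num at h1 h2
  rw [Set.mem_inter_iff, h1, h2]
  tauto

lemma hasPairDensity_idx_mod_two_of_five_le {α β : ZMod 3} (hαβ : ¬ (α = 0 ∧ β = 0)) :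
    HasPairDensity (fun Q p => (p.1 : ZMod 3) = α ∧ (p.2 : ZMod 3) = β ∧
      (5 ≤ idx Q p 0 ∧ idx Q p 0 % 3 = 2)) (classArea 0 - 1 / 6) 40 := by
  refine hasDensity_indexClass_zero_diff.hasPairDensity_swap_of_iff
    (Set.inter_subset_left.trans (indexClass_subset _)) hαβ fun Q p hp => ?_
  have h1 := mem_indexGE_iff hp 3
  have h2 := mem_indexClass_iff hp 0
  norm_num at h1 h2
  rw [Set.mem_inter_iff, h1, h2]
  omega

lemma hasPairDensity_wedge_two {α β : ZMod 3} (hαβ : ¬ (α = 0 ∧ β = 0))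
    {n : ℕ} (hn : 1 ≤ n) :
    HasPairDensity (fun Q p => (p.1 : ZMod 3) = α ∧ (p.2 : ZMod 3) = β ∧
      (Q + (2 * n - 1) * p.1 < 2 * p.2 ∧ 2 * p.2 ≤ Q + (2 * n + 1) * p.1))
      (2 / ((2 * n - 1) * (2 * n + 1) * (2 * n + 3))) 6 := by
  refine (hasDensity_wedge_two n hn).hasPairDensity_of_iff
    (Set.sdiff_subset.trans (wedge_subset _ _)) hαβ fun Q p hp => ?_
  have h1 := mem_wedge_iff hp 2 (2 * n - 1)
  have h2 := mem_wedge_iff hp 2 (2 * n + 1)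
  rw [Nat.cast_sub (by omega)] at h1
  push_cast at h1 h2
  rw [Set.mem_sdiff, h1, h2, not_lt]

lemma hasPairDensity_wedge_three_diff {α β : ZMod 3} (hαβ : ¬ (α = 0 ∧ β = 0)) :
    HasPairDensity (fun Q p => (p.1 : ZMod 3) = α ∧ (p.2 : ZMod 3) = β ∧
      (Q + 7 * p.1 < 3 * p.2 ∧ 2 * p.2 ≤ Q + 5 * p.1)) (1 / 70) 6 := by
  refine hasDensity_wedge_three_diff.hasPairDensity_of_iff
    (Set.sdiff_subset.trans (wedge_subset _ _)) hαβ fun Q p hp => ?_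
  have h1 := mem_wedge_iff hp 3 7
  have h2 := mem_wedge_iff hp 2 5
  norm_num at h1 h2
  rw [Set.mem_sdiff, h1, h2, not_lt]

lemma hasPairDensity_wedge_diff_three {α β : ZMod 3} (hαβ : ¬ (α = 0 ∧ β = 0)) :
    HasPairDensity (fun Q p => (p.1 : ZMod 3) = α ∧ (p.2 : ZMod 3) = β ∧
      (Q + 3 * p.1 < 2 * p.2 ∧ 3 * p.2 ≤ Q + 7 * p.1)) (1 / 210) 6 := by
  refine hasDensity_wedge_diff_three.hasPairDensity_of_iff
    (Set.sdiff_subset.trans (wedge_subset _ _)) hαβ fun Q p hp => ?_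
  have h1 := mem_wedge_iff hp 2 3
  have h2 := mem_wedge_iff hp 3 7
  norm_num at h1 h2
  rw [Set.mem_sdiff, h1, h2, not_lt]

section

/-- The residues modulo `3` of the successive denominators starting with the pair `p`. -/
def res (Q : ℕ) (p : ℕ × ℕ) (i : ℕ) : ZMod 3 := (den Q p i : ZMod 3)

variable {Q : ℕ} {p : ℕ × ℕ}

lemma res_zero : res Q p 0 = (p.1 : ZMod 3) := rfl

lemma res_one : res Q p 1 = (p.2 : ZMod 3) := rfl

lemma res_nextPair (i : ℕ) : res Q (nextPair Q p) i = res Q p (i + 1) := rfl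

lemma res_revPair (hp : p ∈ fareyPairs Q) {m i : ℕ} (hi : i ≤ m + 1) :
    res Q (revPair Q m p) i = res Q p (m + 1 - i) := by
  rw [res, res, den_revPair hp hi]

lemma res_add_res (hp : p ∈ fareyPairs Q) (i : ℕ) :
    res Q p i + res Q p (i + 2) = (idx Q p i : ZMod 3) * res Q p (i + 1) := by
  unfold res
  exact_mod_cast congrArg (Nat.cast : ℕ → ZMod 3) (den_facts hp i).2.2.2.2

lemma natCast_eq_zero_iff_mod (k : ℕ) : (k : ZMod 3) = 0 ↔ k % 3 = 0 := by
  have := ZMod.natCast_eq_natCast_iff' k 0 3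
  simpa using this

lemma natCast_eq_one_iff_mod (k : ℕ) : (k : ZMod 3) = 1 ↔ k % 3 = 1 := by
  have := ZMod.natCast_eq_natCast_iff' k 1 3
  simpa using this

lemma natCast_eq_two_iff_mod (k : ℕ) : (k : ZMod 3) = 2 ↔ k % 3 = 2 := by
  have := ZMod.natCast_eq_natCast_iff' k 2 3
  simpa using this

lemma res_zero_zero (hp : p ∈ fareyPairs Q) (i : ℕ) (h : res Q p i = 0) :
    res Q p (i + 1) ≠ 0 := by
  intro h'
  rw [res, ZMod.natCast_eq_zero_iff] at h h'
  have := Nat.dvd_gcd h h'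
  rw [(den_facts hp i).2.2.2.1] at this
  omega

section

variable {e : ZMod 3}

lemma res_eq_iff_of_run (hp : p ∈ fareyPairs Q) (he : e ≠ 0) (i : ℕ) (h0 : res Q p i = e)
    (h1 : res Q p (i + 1) = e) :
    (res Q p (i + 2) = e ↔ idx Q p i % 3 = 2) ∧ (res Q p (i + 2) = 0 ↔ idx Q p i % 3 = 1) ∧
      (res Q p (i + 2) = -e ↔ idx Q p i % 3 = 0) := by
  have h := res_add_res hp i
  rw [h0, h1] at h
  rw [← natCast_eq_zero_iff_mod, ← natCast_eq_one_iff_mod, ← natCast_eq_two_iff_mod]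
  generalize res Q p (i + 2) = c at *
  generalize (idx Q p i : ZMod 3) = k at *
  clear h0 h1
  revert e c k
  decide

lemma res_eq_iff_of_zero (hp : p ∈ fareyPairs Q) (he : e ≠ 0) (i : ℕ) (h0 : res Q p i = 0)
    (h1 : res Q p (i + 1) = e) :
    (res Q p (i + 2) = e ↔ idx Q p i % 3 = 1) ∧ (res Q p (i + 2) = 0 ↔ idx Q p i % 3 = 0) ∧
      (res Q p (i + 2) = -e ↔ idx Q p i % 3 = 2) := by
  have h := res_add_res hp i
  rw [h0, h1] at h
  rw [← natCast_eq_zero_iff_mod, ← natCast_eq_one_iff_mod, ← natCast_eq_two_iff_mod]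
  generalize res Q p (i + 2) = c at *
  generalize (idx Q p i : ZMod 3) = k at *
  clear h0 h1
  revert e c k
  decide

lemma res_eq_iff_of_neg (hp : p ∈ fareyPairs Q) (he : e ≠ 0) (i : ℕ) (h0 : res Q p i = -e)
    (h1 : res Q p (i + 1) = e) :
    (res Q p (i + 2) = e ↔ idx Q p i % 3 = 0) ∧ (res Q p (i + 2) = -e ↔ idx Q p i % 3 = 1) := by
  have h := res_add_res hp i
  rw [h0, h1] at h
  rw [← natCast_eq_zero_iff_mod, ← natCast_eq_one_iff_mod]
  generalize res Q p (i + 2) = c at *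
  generalize (idx Q p i : ZMod 3) = k at *
  clear h0 h1
  revert e c k
  decide

lemma run_iff (hp : p ∈ fareyPairs Q) (he : e ≠ 0) (n : ℕ) :
    (∀ i, 1 ≤ i → i ≤ n + 2 → res Q p i = e) ↔
      res Q p 1 = e ∧ res Q p 2 = e ∧ ∀ l < n, idx Q p (1 + l) % 3 = 2 := by
  induction n with
  | zero =>
    constructor
    · intro h
      exact ⟨h 1 (by omega) (by omega), h 2 (by omega) (by omega), by omega⟩
    · rintro ⟨h1, h2, -⟩ i hi hi'
      obtain rfl | rfl : i = 1 ∨ i = 2 := by omega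
      · exact h1
      · exact h2
  | succ n ih =>
    constructor
    · intro h
      have h' := ih.1 fun i hi hi' => h i hi (by omega)
      refine ⟨h'.1, h'.2.1, fun l hl => ?_⟩
      exact (res_eq_iff_of_run hp he _ (h (1 + l) (by omega) (by omega))
        (h _ (by omega) (by omega))).1.1 (h _ (by omega) (by omega))
    · rintro ⟨h1, h2, h3⟩ i hi hi'
      have h' := ih.2 ⟨h1, h2, fun l hl => h3 l (by omega)⟩
      rcases Nat.lt_or_ge (n + 2) i with hlt | hge
      · obtain rfl : i = 1 + n + 2 := by omega
        exact (res_eq_iff_of_run hp he _ (h' _ (by omega) (by omega))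
          (h' _ (by omega) (by omega))).1.2 (h3 n (by omega))
      · exact h' i hi hge

/-- The residues start with `0` and continue with `s` times `e` and then `f`. -/
def IsWord (e f : ZMod 3) (s Q : ℕ) (p : ℕ × ℕ) : Prop :=
  res Q p 0 = 0 ∧ (∀ i, 1 ≤ i → i ≤ s → res Q p i = e) ∧ res Q p (s + 1) = f

lemma isWord_neg_iff (hp : p ∈ fareyPairs Q) (he : e ≠ 0) (n : ℕ) :
    IsWord e (-e) (n + 2) Q p ↔ ((p.1 : ZMod 3) = 0 ∧ (p.2 : ZMod 3) = e) ∧ idx Q p 0 % 3 = 1 ∧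
      (∀ l < n, idx Q p (1 + l) % 3 = 2) ∧ idx Q p (1 + n) % 3 = 0 := by
  rw [IsWord, ← res_zero (Q := Q), ← res_one (Q := Q)]
  constructor
  · rintro ⟨h0, h1, h2⟩
    obtain ⟨h3, h4, h5⟩ := (run_iff hp he n).1 h1
    refine ⟨⟨h0, h3⟩, (res_eq_iff_of_zero hp he 0 h0 h3).1.1 h4, h5, ?_⟩
    refine (res_eq_iff_of_run hp he (1 + n) (h1 _ (by omega) (by omega))
      (h1 _ (by omega) (by omega))).2.2.1 ?_
    rw [← h2]
    congr 1
    ring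
  · rintro ⟨⟨h0, h3⟩, h4, h5, h6⟩
    have h1 := (run_iff hp he n).2 ⟨h3, (res_eq_iff_of_zero hp he 0 h0 h3).1.2 h4, h5⟩
    refine ⟨h0, h1, ?_⟩
    rw [← (res_eq_iff_of_run hp he (1 + n) (h1 _ (by omega) (by omega))
      (h1 _ (by omega) (by omega))).2.2.2 h6]
    congr 1
    ring

lemma isWord_zero_iff (hp : p ∈ fareyPairs Q) (he : e ≠ 0) (n : ℕ) :
    IsWord e 0 (n + 2) Q p ↔ ((p.1 : ZMod 3) = 0 ∧ (p.2 : ZMod 3) = e) ∧ idx Q p 0 % 3 = 1 ∧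
      (∀ l < n, idx Q p (1 + l) % 3 = 2) ∧ idx Q p (1 + n) % 3 = 1 := by
  rw [IsWord, ← res_zero (Q := Q), ← res_one (Q := Q)]
  constructor
  · rintro ⟨h0, h1, h2⟩
    obtain ⟨h3, h4, h5⟩ := (run_iff hp he n).1 h1
    refine ⟨⟨h0, h3⟩, (res_eq_iff_of_zero hp he 0 h0 h3).1.1 h4, h5, ?_⟩
    refine (res_eq_iff_of_run hp he (1 + n) (h1 _ (by omega) (by omega))
      (h1 _ (by omega) (by omega))).2.1.1 ?_
    rw [← h2]
    congr 1
    ring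
  · rintro ⟨⟨h0, h3⟩, h4, h5, h6⟩
    have h1 := (run_iff hp he n).2 ⟨h3, (res_eq_iff_of_zero hp he 0 h0 h3).1.2 h4, h5⟩
    refine ⟨h0, h1, ?_⟩
    rw [← (res_eq_iff_of_run hp he (1 + n) (h1 _ (by omega) (by omega))
      (h1 _ (by omega) (by omega))).2.1.2 h6]
    congr 1
    ring

lemma isWord_one_iff (e f : ZMod 3) :
    IsWord e f 1 Q p ↔ (p.1 : ZMod 3) = 0 ∧ (p.2 : ZMod 3) = e ∧ res Q p 2 = f := by
  rw [IsWord, ← res_zero (Q := Q), ← res_one (Q := Q)]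
  constructor
  · rintro ⟨h0, h1, h2⟩
    exact ⟨h0, h1 1 le_rfl le_rfl, h2⟩
  · rintro ⟨h0, h1, h2⟩
    refine ⟨h0, fun i hi hi' => ?_, h2⟩
    obtain rfl : i = 1 := by omega
    exact h1

/-- No run of equal residues is bounded by their negatives on both sides. -/
lemma not_run_between_neg (hp : p ∈ fareyPairs Q) (he : e ≠ 0) (n : ℕ) (h0 : res Q p 0 = -e)
    (h1 : ∀ i, 1 ≤ i → i ≤ n + 2 → res Q p i = e) : res Q p (n + 3) ≠ -e := by
  intro h2
  obtain ⟨h3, h4, h5⟩ := (run_iff hp he n).1 h1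
  have h6 := (res_eq_iff_of_neg hp he 0 h0 h3).1.1 h4
  have h7 := (res_eq_iff_of_run hp he (1 + n) (h1 _ (by omega) (by omega))
    (h1 _ (by omega) (by omega))).2.2.1 (by rw [← h2]; congr 1; ring)
  have h8 := one_le_idx hp 0
  have h9 := one_le_idx hp (1 + n)
  have h10 := idx_eq_two_of_run hp (n := n) (by omega) h5
  have h11 := idx_lt_three_of_twos hp (i := 0) (j := 1 + n) (by omega) (by omega) (by
    intro l hl hl'
    obtain ⟨j, rfl⟩ : ∃ j, l = 1 + j := ⟨l - 1, by omega⟩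
    exact h10 j (by omega))
  omega

end

end

section

/-- The residue `c` occurs at the positions `0` and `r + 1` and not in between. -/
def IsGap (c : ZMod 3) (r Q : ℕ) (p : ℕ × ℕ) : Prop :=
  res Q p 0 = c ∧ (∀ i, 1 ≤ i → i ≤ r → res Q p i ≠ c) ∧ res Q p (r + 1) = c

variable {Q : ℕ} {p : ℕ × ℕ} {e : ZMod 3}

lemma IsGap.revPair (hp : p ∈ fareyPairs Q) {c : ZMod 3} {r : ℕ} (h : IsGap c r Q p) :
    IsGap c r Q (revPair Q r p) := by
  obtain ⟨h0, h1, h2⟩ := h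
  refine ⟨?_, fun i hi hi' => ?_, ?_⟩
  · rw [res_revPair hp (by omega)]
    exact h2
  · rw [res_revPair hp (by omega)]
    exact h1 _ (by omega) (by omega)
  · rw [res_revPair hp le_rfl, Nat.sub_self]
    exact h0

lemma isGap_of_isWord_neg (hp : p ∈ fareyPairs Q) (he : e ≠ 0) {s : ℕ}
    (h : IsWord e (-e) (s + 1) Q (nextPair Q p)) : IsGap (-e) (s + 2) Q p := by
  obtain ⟨h0, h1, h2⟩ := h
  simp only [res_nextPair, zero_add] at h0 h1 h2
  have h3 := res_add_res hp 0
  rw [zero_add, zero_add, h0, h1 1 le_rfl (by omega), mul_zero] at h3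
  refine ⟨eq_neg_of_add_eq_zero_left h3, fun i hi hi' => ?_, h2⟩
  rcases Nat.eq_or_lt_of_le hi with rfl | hi
  · rw [h0]
    exact (neg_ne_zero.2 he).symm
  · obtain ⟨j, rfl⟩ : ∃ j, i = j + 1 := ⟨i - 1, by omega⟩
    rw [h1 j (by omega) (by omega)]
    clear h0 h1 h2 h3
    revert e
    decide

lemma isGap_of_isWord_zero (hp : p ∈ fareyPairs Q) (he : e ≠ 0) {s : ℕ}
    (h : IsWord e 0 s Q (nextPair Q p)) : IsGap (-e) (s + 2) Q p := by
  obtain ⟨h0, h1, h2⟩ := h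
  simp only [res_nextPair, zero_add] at h0 h1 h2
  rcases Nat.eq_zero_or_pos s with rfl | hs
  · exact absurd h2 (res_zero_zero hp 1 h0)
  have h3 := res_add_res hp 0
  rw [zero_add, zero_add, h0, h1 1 le_rfl (by omega), mul_zero] at h3
  have h4 := res_add_res hp (s + 1)
  rw [h2, h1 s hs le_rfl, mul_zero] at h4
  refine ⟨eq_neg_of_add_eq_zero_left h3, fun i hi hi' => ?_, eq_neg_of_add_eq_zero_right h4⟩
  rcases Nat.eq_or_lt_of_le hi with rfl | hi
  · rw [h0]
    exact (neg_ne_zero.2 he).symm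
  · rcases Nat.eq_or_lt_of_le hi' with rfl | hi'
    · rw [h2]
      exact (neg_ne_zero.2 he).symm
    obtain ⟨j, rfl⟩ : ∃ j, i = j + 1 := ⟨i - 1, by omega⟩
    rw [h1 j (by omega) (by omega)]
    clear h0 h1 h2 h3 h4
    revert e
    decide

lemma isGap_iff (hp : p ∈ fareyPairs Q) (he : e ≠ 0) (s : ℕ) :
    IsGap (-e) (s + 2) Q p ↔ (IsWord e (-e) (s + 1) Q (nextPair Q p) ∨
      IsWord e (-e) (s + 1) Q (nextPair Q (revPair Q (s + 2) p))) ∨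
      IsWord e 0 s Q (nextPair Q p) := by
  constructor
  · rintro ⟨h0, h1, h2⟩
    have key : ∀ i, 1 ≤ i → i ≤ s + 2 → res Q p i = 0 ∨ res Q p i = e := by
      intro i hi hi'
      have := h1 i hi hi'
      generalize res Q p i = x at this ⊢
      clear h0 h1 h2
      revert e x
      decide
    have mid : ∀ i, 1 ≤ i → i ≤ s → res Q p (i + 1) = e := by
      intro i hi hi'
      refine (key (i + 1) (by omega) (by omega)).resolve_left fun h => ?_
      have h3 := res_add_res hp i
      rw [h, mul_zero] at h3
      rcases key i hi (by omega) with h4 | h4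
      · exact res_zero_zero hp i h4 h
      rcases key (i + 2) (by omega) (by omega) with h5 | h5
      · exact res_zero_zero hp (i + 1) h h5
      rw [h4, h5] at h3
      clear h0 h1 h2 h4 h5 key
      revert e
      decide
    rcases key 1 le_rfl (by omega) with ha | ha <;>
      rcases key (s + 2) (by omega) le_rfl with hb | hb
    · exact Or.inr ⟨ha, mid, hb⟩
    · refine Or.inl (Or.inl ⟨ha, fun i hi hi' => ?_, h2⟩)
      rcases Nat.eq_or_lt_of_le hi' with rfl | hi'
      · exact hb
      · exact mid i hi (by omega)
    · refine Or.inl (Or.inr ⟨?_, fun i hi hi' => ?_, ?_⟩)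
      · rw [res_nextPair, res_revPair hp (by omega)]
        exact hb
      · rw [res_nextPair, res_revPair hp (by omega)]
        rcases Nat.eq_or_lt_of_le hi' with rfl | hi'
        · rw [← ha]
          congr 1
          omega
        · rw [← mid (s + 1 - i) (by omega) (by omega)]
          congr 1
          omega
      · rw [res_nextPair, res_revPair hp (by omega), ← h0]
        congr 1
        omega
    · refine absurd h2 (not_run_between_neg hp he s h0 fun i hi hi' => ?_)
      rcases Nat.eq_or_lt_of_le hi' with rfl | hi'
      · exact hb
      rcases Nat.eq_or_lt_of_le hi with rfl | hi
      · exact ha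
      obtain ⟨j, rfl⟩ : ∃ j, i = j + 1 := ⟨i - 1, by omega⟩
      exact mid j (by omega) (by omega)
  · rintro ((h | h) | h)
    · exact isGap_of_isWord_neg hp he h
    · have := (isGap_of_isWord_neg (revPair_mem hp _) he h).revPair (revPair_mem hp _)
      rwa [revPair_revPair hp] at this
    · exact isGap_of_isWord_zero hp he h

lemma HasPairDensity.nextPair {C : ℕ → ℕ × ℕ → Prop} {a E : ℝ} (h : HasPairDensity C a E) :
    HasPairDensity (fun Q p => C Q (nextPair Q p)) a E :=
  h.congr fun Q => pairCount_nextPair Q (C Q)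

lemma HasPairDensity.revPair {C : ℕ → ℕ × ℕ → Prop} {a E : ℝ} (h : HasPairDensity C a E) (m : ℕ) :
    HasPairDensity (fun Q p => C Q (revPair Q m p)) a E :=
  h.congr fun Q => pairCount_revPair Q m (C Q)

lemma hasPairDensity_isGap (he : e ≠ 0) {s : ℕ} {a a' E E' : ℝ}
    (h : HasPairDensity (IsWord e (-e) (s + 1)) a E) (h' : HasPairDensity (IsWord e 0 s) a' E') :
    HasPairDensity (IsGap (-e) (s + 2)) (a + a + a') (E + E + E') := by
  refine ((h.nextPair.or (h.nextPair.revPair (s + 2)) ?_).or h'.nextPair ?_).congr fun Q =>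
    pairCount_congr fun p hp => isGap_iff hp he s
  · rintro Q p hp ⟨h0, -, -⟩ ⟨-, h1, -⟩
    have h2 := h1 (s + 1) (by omega) le_rfl
    rw [res_nextPair, res_revPair hp (by omega)] at h2
    rw [res_nextPair] at h0
    refine he ?_
    rw [← h0, ← h2]
    congr 1
    omega
  · rintro Q p hp (⟨-, h1, -⟩ | ⟨-, h1, -⟩) ⟨h0, -, h2⟩
    · exact he ((h1 (s + 1) (by omega) le_rfl).symm.trans h2)
    · have h3 := h1 (s + 1) (by omega) le_rfl
      rw [res_nextPair, res_revPair hp (by omega)] at h3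
      rw [res_nextPair] at h0
      refine he ?_
      rw [← h0, ← h3]
      congr 1
      omega

lemma hasPairDensity_isGap_zero (he : e ≠ 0) : HasPairDensity (IsGap (-e) 0) (1 / 2) 3 :=
  (hasPairDensity_all (α := -e) (β := -e) (by simpa using he)).congr fun Q =>
    pairCount_congr fun p _ => by
      unfold IsGap
      rw [res_zero, zero_add, res_one]
      constructor
      · tauto
      · exact fun h => ⟨h.1, by omega, h.2⟩

lemma hasPairDensity_isGap_one (he : e ≠ 0) :
    HasPairDensity (IsGap (-e) 1) (1 / 6 + classArea 2) 38 :=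
  (hasPairDensity_idx_mod_one (α := -e) (β := e) (by simpa using he)).congr fun Q =>
    pairCount_congr fun p hp => by
      unfold IsGap
      rw [← res_zero (Q := Q), ← res_one (Q := Q)]
      constructor
      · rintro ⟨h0, h1, h2⟩
        have h3 := h1 1 le_rfl le_rfl
        have h4 := res_add_res hp 0
        have h5 : res Q p 1 = e := by
          rw [h0, zero_add, zero_add, h2] at h4
          generalize res Q p 1 = x at h3 h4 ⊢
          generalize (idx Q p 0 : ZMod 3) = k at h4
          clear h0 h1 h2
          revert e x k
          decide
        exact ⟨h0, h5, (res_eq_iff_of_neg hp he 0 h0 h5).2.1 h2⟩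
      · rintro ⟨h0, h1, h2⟩
        refine ⟨h0, fun i hi hi' => ?_, (res_eq_iff_of_neg hp he 0 h0 h1).2.2 h2⟩
        obtain rfl : i = 1 := by omega
        rw [h1]
        clear h0 h1
        revert e
        decide

end

section

variable {Q : ℕ} {p : ℕ × ℕ} {e : ZMod 3}

lemma isWord_neg_one_hasPairDensity (he : e ≠ 0) :
    HasPairDensity (IsWord e (-e) 1) (classArea 0) 30 :=
  (hasPairDensity_idx_mod_two (α := 0) (β := e) (by simpa using he)).congr fun Q =>
    pairCount_congr fun p hp => by
      rw [isWord_one_iff]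
      refine and_congr_right fun h0 => and_congr_right fun h1 => ?_
      exact (res_eq_iff_of_zero hp he 0 h0 h1).2.2

lemma isWord_zero_one_hasPairDensity (he : e ≠ 0) :
    HasPairDensity (IsWord e 0 1) (classArea 1) 30 :=
  (hasPairDensity_idx_mod_zero (α := 0) (β := e) (by simpa using he)).congr fun Q =>
    pairCount_congr fun p hp => by
      rw [isWord_one_iff]
      refine and_congr_right fun h0 => and_congr_right fun h1 => ?_
      exact (res_eq_iff_of_zero hp he 0 h0 h1).2.1

lemma isWord_zero_zero_hasPairDensity : HasPairDensity (IsWord e 0 0) 0 0 :=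
  hasPairDensity_of_false fun _ _ hp h => res_zero_zero hp 0 h.1 h.2.2

lemma idx_zero_eq_one_iff (hp : p ∈ fareyPairs Q) :
    idx Q p 0 = 1 ↔ Q + den Q p 2 < 2 * den Q p 1 := by
  have h := le_idx_iff (swap_mem_fareyPairs (nextPair_mem hp)) 0 2
  have h1 := one_le_idx hp 0
  have h2 : idx Q (nextPair Q p).swap 0 = idx Q p 0 := index_swap_nextPair hp
  rw [h2, den_zero, den_one, Prod.fst_swap, Prod.snd_swap] at h
  change 2 ≤ idx Q p 0 ↔ 2 * den Q p 1 ≤ Q + den Q p 2 at h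
  omega

lemma res_zero_eq_zero_iff (hp : p ∈ fareyPairs Q) (h : res Q p 1 = e) (h0 : idx Q p 0 % 3 = 1) :
    res Q p 0 = 0 ↔ res Q p 2 = e := by
  have h1 := res_add_res hp 0
  rw [zero_add, zero_add, h, (natCast_eq_one_iff_mod _).2 h0, one_mul] at h1
  constructor
  · intro h2
    rwa [h2, zero_add] at h1
  · intro h2
    rw [h2] at h1
    simpa using h1

/-- The index conditions for the residues `0, e, e` propagated to the next pair. -/
lemma residues_shift_iff (hp : p ∈ fareyPairs Q) (h0 : idx Q p 0 % 3 = 1) :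
    ((p.1 : ZMod 3) = 0 ∧ (p.2 : ZMod 3) = e) ↔
      (((nextPair Q p).1 : ZMod 3) = e ∧ ((nextPair Q p).2 : ZMod 3) = e) := by
  change (res Q p 0 = 0 ∧ res Q p 1 = e) ↔ (res Q p 1 = e ∧ res Q p 2 = e)
  constructor
  · rintro ⟨h1, h2⟩
    exact ⟨h2, (res_zero_eq_zero_iff hp h2 h0).1 h1⟩
  · rintro ⟨h1, h2⟩
    exact ⟨(res_zero_eq_zero_iff hp h1 h0).2 h2, h1⟩

lemma isWord_neg_two_hasPairDensity (he : e ≠ 0) :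
    HasPairDensity (IsWord e (-e) 2) (classArea 1 - 1 / 35) 50 :=
  (hasPairDensity_idx_mod_zero_inter (α := e) (β := e) (by tauto)).nextPair.congr fun Q =>
    pairCount_congr fun p hp => by
      rw [isWord_neg_iff hp he 0, idx_nextPair]
      have h0 := one_le_idx hp 0
      have h1 := one_le_idx hp 1
      have h2 := idx_zero_eq_one_iff hp
      change _ ↔ _ ∧ _ ∧ idx Q p (0 + 1) % 3 = 0 ∧ Q + den Q p 2 < 2 * den Q p 1
      rw [← h2]
      constructor
      · rintro ⟨h3, h4, -, h5⟩
        obtain ⟨h6, h7⟩ := (residues_shift_iff hp h4).1 h3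
        refine ⟨h6, h7, h5, ?_⟩
        have := idx_lt_three_of_twos hp (i := 0) (j := 1) (by omega)
        by_contra h8
        have := this (by omega) (by omega)
        norm_num at h5
        omega
      · rintro ⟨h3, h4, h5, h6⟩
        have h7 : idx Q p 0 % 3 = 1 := by omega
        exact ⟨(residues_shift_iff hp h7).2 ⟨h3, h4⟩, h7, by omega, h5⟩

lemma isWord_neg_iff_lt (hp : p ∈ fareyPairs Q) (he : e ≠ 0) {n : ℕ} (hn : 1 ≤ n) :
    IsWord e (-e) (n + 2) Q p ↔ (p.1 : ZMod 3) = 0 ∧ (p.2 : ZMod 3) = e ∧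
      Q + (2 * n + 1) * p.1 < 2 * p.2 ∧ 2 * p.2 ≤ Q + (2 * n + 3) * p.1 ∧
      Q + (3 * n + 4) * p.1 < 3 * p.2 := by
  rw [isWord_neg_iff hp he n, and_assoc]
  refine and_congr_right fun _ => and_congr_right fun _ => ?_
  constructor
  · rintro ⟨h0, h1, h2⟩
    have h3 := one_le_idx hp (1 + n)
    have h4 := one_le_idx hp 0
    have h5 := idx_eq_two_of_run hp (n := n) (by omega) h1
    have h6 : idx Q p 0 = 1 := by
      by_contra h7
      have := idx_lt_three_of_twos hp (i := 0) (j := 1 + n) (by omega) (by omega) (by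
        intro l hl hl'
        obtain ⟨j, rfl⟩ : ∃ j, l = 1 + j := ⟨l - 1, by omega⟩
        exact h5 j (by omega))
      omega
    have h7 := (idx_one_twos_iff hp n).1 ⟨h6, h5⟩
    have h8 := idx_after_twos_lt_five hp hn h7
    have h9 := le_idx_after_twos_iff hp h7 2
    have h10 := le_idx_after_twos_iff hp h7 3
    rw [show 2 * (n + 1) + 1 = 2 * n + 3 by ring] at h9
    rw [show 3 * (n + 1) + 1 = 3 * n + 4 by ring] at h10
    refine ⟨h7, h9.1 (by omega), ?_⟩
    by_contra h11
    have := h10.2 (by omega)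
    omega
  · rintro ⟨h0, h1, h2⟩
    have h3 := (idx_one_twos_iff hp n).2 h0
    have h9 := le_idx_after_twos_iff hp h0 2
    have h10 := le_idx_after_twos_iff hp h0 3
    rw [show 2 * (n + 1) + 1 = 2 * n + 3 by ring] at h9
    rw [show 3 * (n + 1) + 1 = 3 * n + 4 by ring] at h10
    refine ⟨by omega, fun l hl => by rw [h3.2 l hl], ?_⟩
    have := h9.2 h1
    have : ¬ 4 ≤ idx Q p (1 + n) := fun h => by
      have := h10.1 h
      omega
    omega

lemma isWord_neg_three_hasPairDensity (he : e ≠ 0) :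
    HasPairDensity (IsWord e (-e) 3) (1 / 70) 6 :=
  (hasPairDensity_wedge_three_diff (α := 0) (β := e) (by simpa using he)).congr fun Q =>
    pairCount_congr fun p hp => by
      rw [isWord_neg_iff_lt hp he (n := 1) le_rfl]
      refine and_congr_right fun _ => and_congr_right fun _ => ?_
      have := mem_fareyPairs.1 hp
      omega

lemma isWord_neg_add_hasPairDensity (he : e ≠ 0) {n : ℕ} (hn : 2 ≤ n) :
    HasPairDensity (IsWord e (-e) (n + 2)) (2 / ((2 * n + 1) * (2 * n + 3) * (2 * n + 5))) 6 := by
  have h := hasPairDensity_wedge_two (α := 0) (β := e) (by simpa using he) (n := n + 1) (by omega)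
  rw [show (2 : ℝ) / ((2 * (n + 1 : ℕ) - 1) * (2 * (n + 1 : ℕ) + 1) * (2 * (n + 1 : ℕ) + 3)) =
    2 / ((2 * n + 1) * (2 * n + 3) * (2 * n + 5)) by push_cast; congr 1; ring] at h
  refine h.congr fun Q => pairCount_congr fun p hp => ?_
  rw [isWord_neg_iff_lt hp he (n := n) (by omega)]
  refine and_congr_right fun _ => and_congr_right fun _ => ?_
  rw [show 2 * (n + 1) - 1 = 2 * n + 1 by omega, show 2 * (n + 1) + 1 = 2 * n + 3 by ring]
  constructor
  · tauto
  · rintro ⟨h0, h1⟩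
    refine ⟨h0, h1, ?_⟩
    have := (mem_fareyPairs.1 hp).1.2.2
    nlinarith [Nat.mul_le_mul_right p.1 hn]

lemma isWord_zero_two_hasPairDensity (he : e ≠ 0) :
    HasPairDensity (IsWord e 0 2) (classArea 2 - 1 / 210 + (classArea 2 - 1 / 210)) (40 + 40) := by
  have h : HasPairDensity (fun Q p => ((p.1 : ZMod 3) = 0 ∧ (p.2 : ZMod 3) = e) ∧
      idx Q p 0 = 1 ∧ 4 ≤ idx Q p 1 ∧ idx Q p 1 % 3 = 1) (classArea 2 - 1 / 210) 40 := by
    refine (hasPairDensity_idx_mod_one_inter (α := e) (β := e) (by tauto)).nextPair.congr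
      fun Q => pairCount_congr fun p hp => ?_
    rw [idx_nextPair]
    have h2 := idx_zero_eq_one_iff hp
    change _ ↔ _ ∧ _ ∧ 4 ≤ idx Q p (0 + 1) ∧ idx Q p (0 + 1) % 3 = 1 ∧
      Q + den Q p 2 < 2 * den Q p 1
    rw [← h2]
    constructor
    · rintro ⟨h3, h4, h5, h6⟩
      obtain ⟨h7, h8⟩ := (residues_shift_iff hp (by omega)).1 h3
      exact ⟨h7, h8, h5, h6, h4⟩
    · rintro ⟨h3, h4, h5, h6, h7⟩
      exact ⟨(residues_shift_iff hp (by omega)).2 ⟨h3, h4⟩, h7, h5, h6⟩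
  refine (h.or (h.revPair 2) ?_).congr fun Q => pairCount_congr fun p hp => ?_
  · rintro Q p hp ⟨-, h1, -⟩ ⟨-, -, h2, -⟩
    rw [idx_revPair hp (by omega)] at h2
    norm_num at h2
    omega
  · rw [idx_revPair hp (by omega), idx_revPair hp (by omega), ← res_zero (Q := Q),
      ← res_one (Q := Q), ← res_zero (Q := Q), ← res_one (Q := Q), res_revPair hp (by omega),
      res_revPair hp (by omega)]
    norm_num
    have h0 := one_le_idx hp 0
    have h1 := one_le_idx hp 1
    have h2 := idx_succ_ne_one hp 0
    have h3 := idx_lt_three_of_twos hp (i := 0) (j := 1) (by omega)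
    rw [zero_add] at h2
    constructor
    · intro h
      obtain ⟨-, h5, h6⟩ := id h
      obtain ⟨h7, h8, -, h9⟩ := (isWord_zero_iff hp he 0).1 h
      norm_num at h9
      have h10 := h5 2 (by omega) le_rfl
      have h11 := h5 1 (by omega) (by omega)
      have h12 := res_zero (Q := Q) (p := p)
      by_cases h13 : idx Q p 0 = 1
      · have := h2 h13
        exact Or.inl ⟨⟨h7.1, h11⟩, h13, by omega, h9⟩
      · have := h3 (by omega) (by omega)
        exact Or.inr ⟨⟨h6, h10⟩, by omega, by omega, h8⟩
    · rintro (⟨h5, h6, h7, h8⟩ | ⟨⟨h5, h6⟩, h7, h8, h9⟩)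
      · exact (isWord_zero_iff hp he 0).2 ⟨h5, by omega, by omega, h8⟩
      · have h10 := res_add_res hp 1
        norm_num at h10
        rw [h5, h6, (natCast_eq_one_iff_mod _).2 (by omega), one_mul, add_zero] at h10
        have h11 := (res_zero_eq_zero_iff hp h10 h9).2 h6
        exact (isWord_zero_iff hp he 0).2 ⟨⟨h11, h10⟩, h9, by omega, by norm_num; omega⟩

lemma isWord_zero_three_hasPairDensity (he : e ≠ 0) :
    HasPairDensity (IsWord e 0 3) (classArea 0 - 1 / 6 + (1 / 210 + 1 / 210)) (40 + (6 + 6)) := by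
  have h5 : HasPairDensity (fun Q p => ((p.1 : ZMod 3) = 0 ∧ (p.2 : ZMod 3) = e) ∧
      5 ≤ idx Q p 1 ∧ idx Q p 1 % 3 = 2) (classArea 0 - 1 / 6) 40 := by
    refine (hasPairDensity_idx_mod_two_of_five_le (α := e) (β := e) (by tauto)).nextPair.congr
      fun Q => pairCount_congr fun p hp => ?_
    rw [idx_nextPair, zero_add, ← and_assoc (a := ((nextPair Q p).1 : ZMod 3) = e)]
    refine and_congr_left fun h => ?_
    have := idx_of_five_le_succ hp 0 h.1
    exact residues_shift_iff hp (by omega)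
  have h4 : HasPairDensity (fun Q p => ((p.1 : ZMod 3) = 0 ∧ (p.2 : ZMod 3) = e) ∧
      idx Q p 0 = 1 ∧ idx Q p 1 = 2 ∧ idx Q p 2 = 4) (1 / 210) 6 := by
    refine (hasPairDensity_wedge_diff_three (α := 0) (β := e) (by simpa using he)).congr
      fun Q => pairCount_congr fun p hp => ?_
    rw [and_assoc]
    refine and_congr_right fun _ => and_congr_right fun _ => ?_
    have h0 := idx_one_twos_iff hp 1
    norm_num at h0
    rw [← and_assoc, h0]
    refine and_congr_right fun h1 => ?_
    have h2 := idx_after_twos_lt_five hp (n := 1) le_rfl (by norm_num; exact h1)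
    have h3 := le_idx_after_twos_iff hp (n := 1) (by norm_num; exact h1) 3
    norm_num at h2 h3
    omega
  refine (h5.or (h4.or (h4.revPair 3) ?_) ?_).congr fun Q => pairCount_congr fun p hp => ?_
  · rintro Q p hp ⟨-, h1, -⟩ ⟨-, -, -, h2⟩
    rw [idx_revPair hp (by omega)] at h2
    norm_num at h2
    omega
  · rintro Q p hp ⟨-, h1, -⟩ (⟨-, -, h2, -⟩ | ⟨-, -, h2, -⟩)
    · omega
    · rw [idx_revPair hp (by omega)] at h2
      norm_num at h2
      omega
  · rw [idx_revPair hp (by omega), idx_revPair hp (by omega), idx_revPair hp (by omega),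
      ← res_zero (Q := Q), ← res_one (Q := Q), ← res_zero (Q := Q), ← res_one (Q := Q),
      res_revPair hp (by omega), res_revPair hp (by omega)]
    norm_num
    have h0 := one_le_idx hp 0
    have h1 := one_le_idx hp 1
    have h2 := one_le_idx hp 2
    constructor
    · intro h
      obtain ⟨-, h6, h7⟩ := id h
      obtain ⟨h8, h9, h10, h11⟩ := (isWord_zero_iff hp he 1).1 h
      have h10 := h10 0 (by omega)
      norm_num at h10 h11
      have h12 := h6 3 (by omega) le_rfl
      by_cases h13 : 5 ≤ idx Q p 1
      · exact Or.inl ⟨h8, h13, h10⟩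
      have h14 : idx Q p 1 = 2 := by omega
      have h15 := idx_lt_three_of_twos hp (i := 0) (j := 2) (by omega)
      have h16 : ∀ l, 0 < l → l < 2 → idx Q p l = 2 := by
        intro l hl hl'
        obtain rfl : l = 1 := by omega
        exact h14
      by_cases h17 : idx Q p 0 = 1
      · have h18 := (idx_one_twos_iff hp 1).1 ⟨h17, fun l hl => h16 _ (by omega) (by omega)⟩
        have h19 := idx_after_twos_lt_five hp (n := 1) le_rfl h18
        have h20 := two_le_idx_after_twos hp (n := 1) h18
        norm_num at h19 h20
        exact Or.inr (Or.inl ⟨h8, h17, h14, by omega⟩)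
      · have h21 := h15 (by omega) h16
        have h22 := (idx_one_twos_iff (revPair_mem hp 3) 1).1 ⟨by
          rw [idx_revPair hp (by omega)]
          norm_num
          omega, fun l hl => by
          rw [idx_revPair hp (by omega)]
          exact h16 _ (by omega) (by omega)⟩
        have h19 := idx_after_twos_lt_five (revPair_mem hp 3) (n := 1) le_rfl h22
        rw [idx_revPair hp (by omega)] at h19
        norm_num at h19
        exact Or.inr (Or.inr ⟨⟨h7, h12⟩, by omega, h14, by omega⟩)
    · rintro (⟨h6, h7, h8⟩ | ⟨h6, h7, h8, h9⟩ | ⟨⟨h6, h7⟩, h8, h9, h10⟩)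
      · refine (isWord_zero_iff hp he 1).2 ⟨h6, ?_, fun l hl => ?_, ?_⟩
        · rw [idx_of_five_le_succ hp 0 h7]
        · obtain rfl : l = 0 := by omega
          exact h8
        · rw [idx_succ_of_five_le hp 1 h7]
      · refine (isWord_zero_iff hp he 1).2 ⟨h6, by omega, fun l hl => ?_, ?_⟩
        · obtain rfl : l = 0 := by omega
          norm_num
          omega
        · norm_num
          omega
      · have h11 := res_add_res hp 2
        norm_num at h11
        rw [h6, h7, (natCast_eq_one_iff_mod _).2 (by omega), one_mul, add_zero] at h11
        have h12 := res_add_res hp 1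
        norm_num at h12
        rw [h11, h7, h9] at h12
        have h13 : res Q p 1 = e := by
          push_cast at h12
          linear_combination h12
        have h14 := (res_zero_eq_zero_iff hp h13 (by omega)).2 h11
        refine (isWord_zero_iff hp he 1).2 ⟨⟨h14, h13⟩, by omega, fun l hl => ?_, ?_⟩
        · obtain rfl : l = 0 := by omega
          norm_num
          omega
        · norm_num
          omega

lemma isWord_zero_add_hasPairDensity (he : e ≠ 0) {m : ℕ} (hm : 2 ≤ m) :
    HasPairDensity (IsWord e 0 (m + 2)) 0 0 := by
  have key : ∀ {Q p}, p ∈ fareyPairs Q → idx Q p 0 = 1 → (∀ l < m, idx Q p (1 + l) = 2) →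
      idx Q p (1 + m) % 3 = 1 → False := by
    intro Q p hp h0 h1 h2
    have h3 := (idx_one_twos_iff hp m).1 ⟨h0, h1⟩
    have h4 := two_le_idx_after_twos hp h3
    have h5 := idx_after_twos_lt_four hp hm h3
    omega
  refine hasPairDensity_of_false fun Q p hp h => ?_
  obtain ⟨-, h0, h1, h2⟩ := (isWord_zero_iff hp he m).1 h
  have h3 : ∀ l < m, idx Q p (1 + l) = 2 := by
    intro l hl
    by_contra h4
    have h5 := h1 l hl
    have h6 : 5 ≤ idx Q p (1 + l) := by omega
    rcases Nat.eq_zero_or_pos l with rfl | hl0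
    · have h7 := idx_succ_of_five_le hp _ h6
      have h8 := h1 1 (by omega)
      norm_num at h7 h8
      omega
    · obtain ⟨j, rfl⟩ : ∃ j, l = j + 1 := ⟨l - 1, by omega⟩
      have h7 := idx_of_five_le_succ hp (1 + j) h6
      have h8 := h1 j (by omega)
      omega
  have h4 := one_le_idx hp 0
  have h5 := one_le_idx hp (1 + m)
  by_cases h6 : idx Q p 0 = 1
  · exact key hp h6 h3 h2
  have h7 := idx_lt_three_of_twos hp (i := 0) (j := 1 + m) (by omega) (by omega) (by
    intro l hl hl'
    obtain ⟨j, rfl⟩ : ∃ j, l = 1 + j := ⟨l - 1, by omega⟩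
    exact h3 j (by omega))
  refine key (revPair_mem hp (m + 2)) ?_ (fun l hl => ?_) ?_
  · rw [idx_revPair hp (by omega), show m + 2 - 1 - 0 = 1 + m by omega]
    omega
  · rw [idx_revPair hp (by omega), show m + 2 - 1 - (1 + l) = 1 + (m - 1 - l) by omega]
    exact h3 _ (by omega)
  · rw [idx_revPair hp (by omega), show m + 2 - 1 - (1 + m) = 0 by omega]
    exact h0

end

lemma HasPairDensity.mono {C : ℕ → ℕ × ℕ → Prop} {a a' E E' : ℝ} (h : HasPairDensity C a E)
    (ha : a = a') (hE : E ≤ E') : HasPairDensity C a' E' := by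
  subst ha
  intro Q
  refine (h Q).trans (mul_le_mul_of_nonneg_right hE ?_)
  have := Real.log_natCast_nonneg Q
  positivity

theorem hasPairDensity_isGap_nulim {e : ZMod 3} (he : e ≠ 0) (r : ℕ) :
    HasPairDensity (IsGap (-e) r) (3 / 2 * nulim r) 200 := by
  match r with
  | 0 => exact (hasPairDensity_isGap_zero he).mono (by norm_num [nulim]) (by norm_num)
  | 1 =>
    exact (hasPairDensity_isGap_one he).mono (by simp only [nulim, classArea]; ring) (by norm_num)
  | 2 =>
    exact (hasPairDensity_isGap he (isWord_neg_one_hasPairDensity he)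
      isWord_zero_zero_hasPairDensity).mono (by simp only [nulim, classArea]; ring) (by norm_num)
  | 3 =>
    exact (hasPairDensity_isGap he (isWord_neg_two_hasPairDensity he)
      (isWord_zero_one_hasPairDensity he)).mono (by simp only [nulim, classArea]; ring)
      (by norm_num)
  | 4 =>
    exact (hasPairDensity_isGap he (isWord_neg_three_hasPairDensity he)
      (isWord_zero_two_hasPairDensity he)).mono (by simp only [nulim, classArea]; ring)
      (by norm_num)
  | 5 =>
    exact (hasPairDensity_isGap he (isWord_neg_add_hasPairDensity he (n := 2) le_rfl)
      (isWord_zero_three_hasPairDensity he)).mono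
      (by simp only [nulim, classArea]; push_cast; ring) (by norm_num)
  | n + 6 =>
    refine (hasPairDensity_isGap he (isWord_neg_add_hasPairDensity he (n := n + 3) (by omega))
      (isWord_zero_add_hasPairDensity he (m := n + 2) (by omega))).mono ?_ (by norm_num)
    simp only [nulim]
    push_cast
    have h1 : 2 * ((n : ℝ) + 6) - 5 ≠ 0 := by
      have : (0 : ℝ) ≤ n := by positivity
      linarith
    have h2 : 2 * ((n : ℝ) + 6) - 3 ≠ 0 := by
      have : (0 : ℝ) ≤ n := by positivity
      linarith
    have h3 : 2 * ((n : ℝ) + 6) - 1 ≠ 0 := by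
      have : (0 : ℝ) ≤ n := by positivity
      linarith
    rw [show 2 * ((n : ℝ) + 3) + 1 = 2 * (n + 6) - 5 by ring,
      show 2 * ((n : ℝ) + 3) + 3 = 2 * (n + 6) - 3 by ring,
      show 2 * ((n : ℝ) + 3) + 5 = 2 * (n + 6) - 1 by ring]
    field_simp
    ring

section

lemma mem_farey {Q : ℕ} {x : ℚ} : x ∈ farey Q ↔ 0 ≤ x ∧ x ≤ 1 ∧ x.den ≤ Q := by
  simp only [farey, mem_biUnion, Finset.mem_Icc, mem_image, Finset.mem_range]
  constructor
  · rintro ⟨q, ⟨h1, h2⟩, a, h3, rfl⟩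
    have hq : (0 : ℚ) < q := by exact_mod_cast h1
    refine ⟨by positivity, ?_, ?_⟩
    · rw [div_le_one hq]
      exact_mod_cast Nat.le_of_lt_succ h3
    · refine (Nat.le_of_dvd h1 ?_).trans h2
      have := Rat.den_dvd (a : ℤ) (q : ℤ)
      rw [Rat.divInt_eq_div] at this
      push_cast at this
      exact_mod_cast this
  · rintro ⟨h1, h2, h3⟩
    refine ⟨x.den, ⟨x.den_pos, h3⟩, x.num.toNat, ?_, ?_⟩
    · rw [Rat.le_iff] at h2
      simp at h2
      omega
    · have h4 : ((x.num.toNat : ℤ) : ℚ) = x.num := by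
        rw [Int.toNat_of_nonneg (Rat.num_nonneg.2 h1)]
      push_cast at h4
      rw [h4]
      exact Rat.num_div_den x

/-- The rationals `x < y` are neighbours in the extended Farey sequence of order `Q`. -/
def Adj (Q : ℕ) (x y : ℚ) : Prop :=
  y.num * x.den - x.num * y.den = 1 ∧ (x.den, y.den) ∈ fareyPairs Q

variable {Q : ℕ} {x y z : ℚ}

lemma Adj.lt (h : Adj Q x y) : x < y := by
  rw [Rat.lt_iff]
  linarith [h.1]

lemma Adj.not_between (h : Adj Q x y) (hz : z.den ≤ Q) : ¬ (x < z ∧ z < y) := by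
  rintro ⟨h1, h2⟩
  rw [Rat.lt_iff] at h1 h2
  have h3 := (mem_fareyPairs.1 h.2).2.1
  have h4 := h.1
  have ha : (0 : ℤ) < x.den := by exact_mod_cast x.den_pos
  have hb : (0 : ℤ) < y.den := by exact_mod_cast y.den_pos
  have h5 : (z.den : ℤ) = x.den * (y.num * z.den - z.num * y.den) +
      y.den * (z.num * x.den - x.num * z.den) := by
    linear_combination (-(z.den : ℤ)) * h4
  have h6 : (x.den : ℤ) * 1 ≤ x.den * (y.num * z.den - z.num * y.den) :=
    mul_le_mul_of_nonneg_left (by linarith) ha.le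
  have h7 : (y.den : ℤ) * 1 ≤ y.den * (z.num * x.den - x.num * z.den) :=
    mul_le_mul_of_nonneg_left (by linarith) hb.le
  dsimp only at h3
  omega

lemma Adj.unique (h : Adj Q x y) (h' : Adj Q x z) : y = z := by
  have hy := (mem_fareyPairs.1 h.2).1.2.2
  have hz := (mem_fareyPairs.1 h'.2).1.2.2
  rcases lt_trichotomy y z with hlt | heq | hgt
  · exact absurd ⟨h.lt, hlt⟩ (h'.not_between hy)
  · exact heq
  · exact absurd ⟨h'.lt, hgt⟩ (h.not_between hz)

lemma Adj.le_one (h : Adj Q x y) (hx : x < 1) : y ≤ 1 := by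
  by_contra! hy
  refine h.not_between (z := 1) ?_ ⟨hx, hy⟩
  have := (mem_fareyPairs.1 h.2).1.1
  simp only [Rat.den_ofNat]
  omega

lemma isCoprime_num_den (x : ℚ) : IsCoprime x.num (x.den : ℤ) :=
  Int.isCoprime_iff_gcd_eq_one.2 x.reduced

lemma Adj.nextPair (h : Adj Q x y) (h' : Adj Q y z) :
    (y.den, z.den) = nextPair Q (x.den, y.den) := by
  have h1 := h.1
  have h2 := h'.1
  have h3 : (y.den : ℤ) ∣ x.den + z.den := by
    have h4 : (y.den : ℤ) ∣ (x.den + z.den) * y.num :=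
      ⟨x.num + z.num, by linear_combination h1 - h2⟩
    refine IsCoprime.dvd_of_dvd_mul_right ?_ h4
    exact (isCoprime_num_den y).symm
  have h5 : y.den ∣ x.den + z.den := by exact_mod_cast h3
  obtain ⟨k, hk⟩ := h5
  have h6 := mem_fareyPairs.1 h'.2
  exact (nextPair_eq_of_add_eq (by rw [hk, mul_comm]) h6.1.2.2 h6.2.1).symm

lemma coprime_of_det_eq_one {a b : ℕ} {m n : ℤ} (h : n * a - m * b = 1) : Nat.Coprime a b := by
  rw [← Nat.isCoprime_iff_coprime]
  exact ⟨n, -m, by linarith⟩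

lemma num_den_div_of_isCoprime {m : ℤ} {a : ℕ} (ha : 0 < a) (h : IsCoprime m (a : ℤ)) :
    ((m : ℚ) / a).num = m ∧ ((m : ℚ) / a).den = a := by
  have ha' : (0 : ℤ) < a := by exact_mod_cast ha
  have h' : Nat.Coprime m.natAbs (a : ℤ).natAbs := Int.isCoprime_iff_gcd_eq_one.1 h
  have h1 := Rat.num_div_eq_of_coprime ha' h'
  have h2 := Rat.den_div_eq_of_coprime ha' h'
  push_cast at h1 h2
  exact ⟨h1, by exact_mod_cast h2⟩

lemma exists_adj (hx : x.den ≤ Q) : ∃ y, Adj Q x y := by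
  obtain ⟨u, w, huw⟩ := isCoprime_num_den x
  have ha : (0 : ℤ) < x.den := by exact_mod_cast x.den_pos
  set t : ℤ := (Q + u) / x.den with ht
  have h1 := Int.emod_add_mul_ediv (Q + u) x.den
  have h2 := Int.emod_nonneg (Q + u) ha.ne'
  have h3 := Int.emod_lt_of_pos (Q + u) ha
  rw [← ht] at h1
  have hx' : (x.den : ℤ) ≤ Q := by exact_mod_cast hx
  obtain ⟨v, hv⟩ : ∃ v : ℕ, (v : ℤ) = -u + x.den * t := ⟨(-u + x.den * t).toNat, by omega⟩
  have hv0 : 0 < v := by omega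
  have hdet : (w + x.num * t) * x.den - x.num * v = 1 := by
    rw [hv]
    linear_combination huw
  obtain ⟨h4, h5⟩ := num_den_div_of_isCoprime (m := w + x.num * t) hv0
    ⟨x.den, -x.num, by linarith⟩
  refine ⟨((w + x.num * t : ℤ) : ℚ) / v, ?_, ?_⟩
  · rw [h4, h5]
    exact hdet
  · rw [h5, mem_fareyPairs]
    refine ⟨⟨⟨x.den_pos, hx⟩, hv0, by omega⟩, ?_, coprime_of_det_eq_one hdet⟩
    dsimp only
    omega

lemma exists_adj_of_mem {p : ℕ × ℕ} (hp : p ∈ fareyPairs Q) :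
    ∃ x y : ℚ, 0 ≤ x ∧ x < 1 ∧ Adj Q x y ∧ x.den = p.1 ∧ y.den = p.2 := by
  have hp' := hp
  rw [mem_fareyPairs] at hp
  obtain ⟨u, w, huw⟩ := Nat.isCoprime_iff_coprime.2 hp.2.2.symm
  have ha : (0 : ℤ) < p.1 := by exact_mod_cast hp.1.1.1
  set t : ℤ := (-u) / p.1 with ht
  have h1 := Int.emod_add_mul_ediv (-u) p.1
  have h2 := Int.emod_nonneg (-u) ha.ne'
  have h3 := Int.emod_lt_of_pos (-u) ha
  rw [← ht] at h1
  set m : ℤ := (-u) % p.1 with hm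
  have hdet : (w - t * p.2) * p.1 - m * p.2 = 1 := by
    linear_combination huw - p.2 * h1
  obtain ⟨h4, h5⟩ := num_den_div_of_isCoprime (m := m) hp.1.1.1
    ⟨-p.2, w - t * p.2, by linarith⟩
  obtain ⟨h6, h7⟩ := num_den_div_of_isCoprime (m := w - t * p.2) hp.1.2.1
    ⟨p.1, -m, by linarith⟩
  refine ⟨(m : ℚ) / p.1, ((w - t * p.2 : ℤ) : ℚ) / p.2, ?_, ?_, ⟨?_, ?_⟩, h5, h7⟩
  · have : (0 : ℚ) ≤ m := by exact_mod_cast h2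
    positivity
  · rw [div_lt_one (by exact_mod_cast ha)]
    exact_mod_cast h3
  · rw [h4, h5, h6, h7]
    exact hdet
  · rw [h5, h7]
    exact hp'

/-- A pair of neighbours is determined by the denominators if the first one lies in `[0, 1)`. -/
lemma Adj.eq_of_den_eq {x' y' : ℚ} (h : Adj Q x y) (h' : Adj Q x' y') (hx : x.den = x'.den)
    (hy : y.den = y'.den) (h0 : 0 ≤ x) (h1 : x < 1) (h0' : 0 ≤ x') (h1' : x' < 1) : x = x' := by
  have e := h.1
  have e' := h'.1
  rw [← hx, ← hy] at e'
  have hd : (x.den : ℤ) ∣ x.num - x'.num := by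
    have h4 : (x.den : ℤ) ∣ (x.num - x'.num) * y.den :=
      ⟨y.num - y'.num, by linear_combination e' - e⟩
    refine IsCoprime.dvd_of_dvd_mul_right ?_ h4
    exact Nat.isCoprime_iff_coprime.2 (mem_fareyPairs.1 h.2).2.2
  rw [Rat.lt_iff] at h1 h1'
  rw [← Rat.num_nonneg] at h0 h0'
  rw [← hx] at h1'
  simp at h1 h1'
  have h5 := Int.eq_zero_of_abs_lt_dvd hd (by rw [abs_lt]; omega)
  exact Rat.ext (by omega) hx

/-- Consecutive elements of the Farey series are neighbours. -/
lemma adj_of_mem_farey (hx : x ∈ farey Q) (hy : y ∈ farey Q) (hxy : x < y)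
    (h : ∀ z ∈ farey Q, ¬ (x < z ∧ z < y)) : Adj Q x y := by
  rw [mem_farey] at hx hy
  obtain ⟨z, hz⟩ := exists_adj hx.2.2
  have hz1 := hz.le_one (hxy.trans_le hy.2.1)
  have hzQ := (mem_fareyPairs.1 hz.2).1.2.2
  rcases lt_trichotomy y z with hlt | rfl | hgt
  · exact absurd ⟨hxy, hlt⟩ (hz.not_between hy.2.2)
  · exact hz
  · exact absurd ⟨hz.lt, hgt⟩ (h z (mem_farey.2 ⟨hx.1.trans hz.lt.le, hz1, hzQ⟩))

end

section

/-- The tuples counted by `NN Q r 3 c0`. -/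
def gapTuples (Q r c0 : ℕ) : Set (Fin (r + 2) → ℚ) :=
  {f | (∀ i, f i ∈ farey Q) ∧
    (∀ i : Fin (r + 1), f i.castSucc < f i.succ ∧
      ∀ z ∈ farey Q, ¬ (f i.castSucc < z ∧ z < f i.succ)) ∧
    (f 0).den % 3 = c0 % 3 ∧
    (f (Fin.last (r + 1))).den % 3 = c0 % 3 ∧
    ∀ i : Fin (r + 2), i ≠ 0 → i ≠ Fin.last (r + 1) → (f i).den % 3 ≠ c0 % 3}

lemma NN_eq (Q r c0 : ℕ) : NN Q r 3 c0 = (gapTuples Q r c0).ncard := rfl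

variable {Q r c0 : ℕ} {f : Fin (r + 2) → ℚ}

lemma adj_of_mem_gapTuples (hf : f ∈ gapTuples Q r c0) (i : ℕ) (hi : i + 1 < r + 2) :
    Adj Q (f ⟨i, by omega⟩) (f ⟨i + 1, hi⟩) := by
  have h := hf.2.1 ⟨i, by omega⟩
  exact adj_of_mem_farey (hf.1 _) (hf.1 _) h.1 h.2

lemma iterate_eq_of_adj (h : ∀ i (hi : i + 1 < r + 2), Adj Q (f ⟨i, by omega⟩) (f ⟨i + 1, hi⟩))
    (i : ℕ) (hi : i + 1 < r + 2) :
    (nextPair Q)^[i] ((f 0).den, (f 1).den) = ((f ⟨i, by omega⟩).den, (f ⟨i + 1, hi⟩).den) := by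
  induction i with
  | zero => rfl
  | succ i ih =>
    rw [Function.iterate_succ_apply', ih (by omega)]
    exact ((h i (by omega)).nextPair (h (i + 1) hi)).symm

lemma den_eq_of_adj (h : ∀ i (hi : i + 1 < r + 2), Adj Q (f ⟨i, by omega⟩) (f ⟨i + 1, hi⟩))
    (i : ℕ) (hi : i < r + 2) : den Q ((f 0).den, (f 1).den) i = (f ⟨i, hi⟩).den := by
  cases i with
  | zero => rfl
  | succ i =>
    have := iterate_eq_of_adj h i hi
    rw [iterate_eq] at this
    exact congrArg Prod.snd this

lemma residues_iff (h : ∀ i (hi : i + 1 < r + 2), Adj Q (f ⟨i, by omega⟩) (f ⟨i + 1, hi⟩)) :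
    ((f 0).den % 3 = c0 % 3 ∧ (f (Fin.last (r + 1))).den % 3 = c0 % 3 ∧
      ∀ i : Fin (r + 2), i ≠ 0 → i ≠ Fin.last (r + 1) → (f i).den % 3 ≠ c0 % 3) ↔
      IsGap (c0 : ZMod 3) r Q ((f 0).den, (f 1).den) := by
  have key : ∀ i (hi : i < r + 2), res Q ((f 0).den, (f 1).den) i = (c0 : ZMod 3) ↔
      (f ⟨i, hi⟩).den % 3 = c0 % 3 := by
    intro i hi
    rw [res, den_eq_of_adj h i hi, ZMod.natCast_eq_natCast_iff']
  unfold IsGap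
  constructor
  · rintro ⟨h0, h1, h2⟩
    refine ⟨(key 0 (by omega)).2 h0, fun i hi hi' => ?_, (key (r + 1) (by omega)).2 h1⟩
    rw [Ne, key i (by omega)]
    refine h2 ⟨i, by omega⟩ ?_ ?_
    · rw [Ne, Fin.ext_iff]
      exact Nat.one_le_iff_ne_zero.1 hi
    · rw [Ne, Fin.ext_iff]
      simp only [Fin.val_last]
      omega
  · rintro ⟨h0, h1, h2⟩
    refine ⟨(key 0 (by omega)).1 h0, (key (r + 1) (by omega)).1 h2, fun i hi hi' => ?_⟩
    rw [Ne, Fin.ext_iff, Fin.val_zero] at hi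
    rw [Ne, Fin.ext_iff, Fin.val_last] at hi'
    rw [Ne, ← key i i.2]
    exact h1 i (by omega) (by omega)

lemma lt_one_of_mem_gapTuples (hf : f ∈ gapTuples Q r c0) : f 0 < 1 :=
  (adj_of_mem_gapTuples hf 0 (by omega)).lt.trans_le (mem_farey.1 (hf.1 _)).2.1

lemma injOn_gapTuples :
    Set.InjOn (fun f : Fin (r + 2) → ℚ => ((f 0).den, (f 1).den)) (gapTuples Q r c0) := by
  intro f hf g hg h
  have hf' := adj_of_mem_gapTuples hf
  have hg' := adj_of_mem_gapTuples hg
  rw [Prod.ext_iff] at h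
  have h0 : f 0 = g 0 := (hf' 0 (by omega)).eq_of_den_eq (hg' 0 (by omega)) h.1 h.2
    (mem_farey.1 (hf.1 0)).1 (lt_one_of_mem_gapTuples hf) (mem_farey.1 (hg.1 0)).1
    (lt_one_of_mem_gapTuples hg)
  have key : ∀ i (hi : i < r + 2), f ⟨i, hi⟩ = g ⟨i, hi⟩ := by
    intro i
    induction i with
    | zero => exact fun _ => h0
    | succ i ih =>
      intro hi
      refine (hf' i hi).unique ?_
      rw [ih (by omega)]
      exact hg' i hi
  exact funext fun i => key i i.2

lemma mapsTo_gapTuples :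
    Set.MapsTo (fun f : Fin (r + 2) → ℚ => ((f 0).den, (f 1).den)) (gapTuples Q r c0)
      (pairsWith Q (IsGap (c0 : ZMod 3) r Q) : Set (ℕ × ℕ)) := by
  intro f hf
  rw [mem_coe, mem_pairsWith]
  have h := adj_of_mem_gapTuples hf
  exact ⟨(h 0 (by omega)).2, (residues_iff h).1 hf.2.2⟩

lemma NN_le_pairCount (Q r c0 : ℕ) : NN Q r 3 c0 ≤ pairCount Q (IsGap (c0 : ZMod 3) r Q) := by
  rw [NN_eq, pairCount, ← Set.ncard_coe_finset]
  exact Set.ncard_le_ncard_of_injOn _ mapsTo_gapTuples injOn_gapTuples (finite_toSet _)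

lemma exists_gapTuple {p : ℕ × ℕ} (hp : p ∈ fareyPairs Q) (hg : IsGap (c0 : ZMod 3) r Q p)
    (h1 : ∀ i, 1 ≤ i → i ≤ r → den Q p i ≠ 1) :
    ∃ f ∈ gapTuples Q r c0, ((f 0).den, (f 1).den) = p := by
  obtain ⟨x, y, hx0, hx1, hxy, hx, hy⟩ := exists_adj_of_mem hp
  have hn : ∀ z : ℚ, ∃ w, z.den ≤ Q → Adj Q z w := by
    intro z
    by_cases hz : z.den ≤ Q
    · obtain ⟨w, hw⟩ := exists_adj hz
      exact ⟨w, fun _ => hw⟩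
    · exact ⟨0, fun h => absurd h hz⟩
  choose nxt hnxt using hn
  have hQ : ∀ i, (nxt^[i] x).den ≤ Q := by
    intro i
    induction i with
    | zero => exact (mem_fareyPairs.1 hxy.2).1.1.2
    | succ i ih =>
      rw [Function.iterate_succ_apply']
      exact (mem_fareyPairs.1 (hnxt _ ih).2).1.2.2
  have hadj : ∀ i, Adj Q (nxt^[i] x) (nxt^[i + 1] x) := by
    intro i
    rw [Function.iterate_succ_apply']
    exact hnxt _ (hQ i)
  set f : Fin (r + 2) → ℚ := fun i => nxt^[(i : ℕ)] x with hf
  have hadj' : ∀ i (hi : i + 1 < r + 2), Adj Q (f ⟨i, by omega⟩) (f ⟨i + 1, hi⟩) :=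
    fun i _ => hadj i
  have hpf : ((f 0).den, (f 1).den) = p := by
    have h0 : f 0 = x := rfl
    have h2 : f 1 = y := (hadj 0).unique hxy
    rw [h0, h2, hx, hy]
  have hden := den_eq_of_adj hadj'
  rw [hpf] at hden
  have hlt : ∀ i, i ≤ r → nxt^[i] x < 1 := by
    intro i
    induction i with
    | zero => exact fun _ => hx1
    | succ i ih =>
      intro hi
      refine lt_of_le_of_ne ((hadj i).le_one (ih (by omega))) fun h => ?_
      refine h1 (i + 1) (by omega) hi ?_
      rw [hden _ (by omega)]
      change (nxt^[i + 1] x).den = 1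
      rw [h]
      rfl
  have hle : ∀ i, i < r + 2 → nxt^[i] x ≤ 1 := by
    intro i hi
    cases i with
    | zero => exact hx1.le
    | succ i => exact (hadj i).le_one (hlt i (by omega))
  have hnn : ∀ i, 0 ≤ nxt^[i] x := by
    intro i
    induction i with
    | zero => exact hx0
    | succ i ih => exact ih.trans (hadj i).lt.le
  refine ⟨f, ⟨fun i => mem_farey.2 ⟨hnn _, hle _ i.2, hQ _⟩, fun i => ⟨(hadj i).lt, fun z hz =>
    (hadj i).not_between (mem_farey.1 hz).2.2⟩, (residues_iff hadj').2 (by rw [hpf]; exact hg)⟩,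
    hpf⟩

lemma pairCount_den_eq_one_le (Q i : ℕ) : pairCount Q (fun p => den Q p i = 1) ≤ 1 := by
  rw [pairCount, card_le_one]
  intro p hp q hq
  rw [mem_pairsWith] at hp hq
  have key : ∀ {p}, p ∈ fareyPairs Q → den Q p i = 1 → revPair Q i p = (Q, 1) := by
    intro p hp h
    have h1 := den_facts hp i
    have h2 := den_facts hp (i + 1)
    rw [revPair, iterate_eq, h]
    refine Prod.ext ?_ rfl
    dsimp only [Prod.swap]
    omega
  rw [← revPair_revPair hp.1 i, key hp.1 hp.2, ← key hq.1 hq.2, revPair_revPair hq.1 i]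

lemma pairCount_le_NN_add (Q r c0 : ℕ) :
    pairCount Q (IsGap (c0 : ZMod 3) r Q) ≤ NN Q r 3 c0 + r := by
  have h1 : pairsWith Q (IsGap (c0 : ZMod 3) r Q) ⊆
      pairsWith Q (fun p => IsGap (c0 : ZMod 3) r Q p ∧ ∀ i, 1 ≤ i → i ≤ r → den Q p i ≠ 1) ∪
        (Finset.Icc 1 r).biUnion fun i => pairsWith Q (fun p => den Q p i = 1) := by
    intro p hp
    rw [mem_pairsWith] at hp
    simp only [mem_union, mem_biUnion, mem_pairsWith, Finset.mem_Icc]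
    by_cases h : ∀ i, 1 ≤ i → i ≤ r → den Q p i ≠ 1
    · exact Or.inl ⟨hp.1, hp.2, h⟩
    · push Not at h
      obtain ⟨i, h1, h2, h3⟩ := h
      exact Or.inr ⟨i, ⟨h1, h2⟩, hp.1, h3⟩
  refine (card_le_card h1).trans ((card_union_le _ _).trans (Nat.add_le_add ?_ ?_))
  · rw [NN_eq, ← Set.ncard_coe_finset]
    have hfin : (gapTuples Q r c0).Finite :=
      Set.Finite.of_injOn mapsTo_gapTuples injOn_gapTuples (finite_toSet _)
    refine (Set.ncard_le_ncard ?_ (hfin.image _)).trans (Set.ncard_image_le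
      (f := fun f : Fin (r + 2) → ℚ => ((f 0).den, (f 1).den)) hfin)
    intro p hp
    rw [mem_coe, mem_pairsWith] at hp
    exact exists_gapTuple hp.1 hp.2.1 hp.2.2
  · refine card_biUnion_le.trans ((sum_le_card_nsmul _ _ 1 fun i _ => ?_).trans ?_)
    · exact pairCount_den_eq_one_le Q i
    · simp

lemma card_farey_lt_one (Q c0 : ℕ) :
    #{x ∈ farey Q | x.den % 3 = c0 % 3 ∧ x < 1} =
      pairCount Q (fun p => (p.1 : ZMod 3) = (c0 : ZMod 3)) := by
  symm
  have hs : ∀ p : ℕ × ℕ, ∃ x : ℚ, p ∈ fareyPairs Q →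
      ∃ y, 0 ≤ x ∧ x < 1 ∧ Adj Q x y ∧ x.den = p.1 ∧ y.den = p.2 := by
    intro p
    by_cases hp : p ∈ fareyPairs Q
    · obtain ⟨x, y, h⟩ := exists_adj_of_mem hp
      exact ⟨x, fun _ => ⟨y, h⟩⟩
    · exact ⟨0, fun h => absurd h hp⟩
  choose g hg using hs
  refine card_bij (fun p _ => g p) ?_ ?_ ?_
  · intro p hp
    rw [mem_pairsWith] at hp
    obtain ⟨y, h0, h1, h2, h3, h4⟩ := hg p hp.1
    rw [mem_filter, mem_farey, h3, ← ZMod.natCast_eq_natCast_iff']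
    exact ⟨⟨h0, h1.le, (mem_fareyPairs.1 hp.1).1.1.2⟩, hp.2, h1⟩
  · intro p hp q hq h
    rw [mem_pairsWith] at hp hq
    obtain ⟨y, -, -, h2, h3, h4⟩ := hg p hp.1
    obtain ⟨z, -, -, h5, h6, h7⟩ := hg q hq.1
    rw [h] at h2 h3
    obtain rfl := h2.unique h5
    exact Prod.ext (h3.symm.trans h6) (h4.symm.trans h7)
  · intro x hx
    rw [mem_filter, mem_farey] at hx
    obtain ⟨⟨h0, -, h2⟩, h3, h4⟩ := hx
    obtain ⟨y, hy⟩ := exists_adj h2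
    refine ⟨(x.den, y.den), mem_pairsWith.2 ⟨hy.2, ?_⟩, ?_⟩
    · exact (ZMod.natCast_eq_natCast_iff' _ _ _).2 h3
    · obtain ⟨z, h5, h6, h7, h8, h9⟩ := hg _ hy.2
      exact h7.eq_of_den_eq hy h8 h9 h5 h6 h0 h4

lemma pairCount_le_ND (Q c0 : ℕ) :
    pairCount Q (fun p => (p.1 : ZMod 3) = (c0 : ZMod 3)) ≤ ND Q 3 c0 := by
  rw [← card_farey_lt_one]
  refine card_le_card fun x hx => ?_
  rw [mem_filter] at hx ⊢
  exact ⟨hx.1, hx.2.1⟩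

lemma ND_le_pairCount_add (Q c0 : ℕ) :
    ND Q 3 c0 ≤ pairCount Q (fun p => (p.1 : ZMod 3) = (c0 : ZMod 3)) + 1 := by
  rw [← card_farey_lt_one]
  refine (card_le_card (t := insert 1 _) fun x hx => ?_).trans (card_insert_le 1 _)
  rw [mem_filter] at hx
  rw [mem_insert, mem_filter]
  rcases (mem_farey.1 hx.1).2.1.eq_or_lt with h | h
  · exact Or.inl h
  · exact Or.inr ⟨hx.1, hx.2, h⟩

lemma one_le_ND {Q c0 : ℕ} (hc : c0 = 1 ∨ c0 = 2) (hQ : 2 ≤ Q) : 1 ≤ ND Q 3 c0 := by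
  refine card_pos.2 ?_
  rcases hc with rfl | rfl
  · refine ⟨0, mem_filter.2 ⟨mem_farey.2 ⟨le_rfl, zero_le_one, ?_⟩, ?_⟩⟩
    · simp
      omega
    · simp
  · have hd : ((1 : ℚ) / 2).den = 2 := by norm_num
    refine ⟨1 / 2, mem_filter.2 ⟨mem_farey.2 ⟨by norm_num, by norm_num, ?_⟩, ?_⟩⟩
    · rw [hd]
      exact hQ
    · rw [hd]

end

lemma hasPairDensity_fst {c : ZMod 3} (hc : c ≠ 0) :
    HasPairDensity (fun _ p => (p.1 : ZMod 3) = c) (3 / 2) 9 := by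
  have h (β : ZMod 3) := hasPairDensity_all (α := c) (β := β) fun h => hc h.1
  refine ((((h 0).or (h 1) ?_).or (h 2) ?_).congr ?_).mono (by norm_num) (by norm_num)
  · rintro Q p - ⟨-, h0⟩ ⟨-, h1⟩
    rw [h0] at h1
    exact absurd h1 (by decide)
  · rintro Q p - (⟨-, h0⟩ | ⟨-, h0⟩) ⟨-, h1⟩ <;> rw [h0] at h1 <;> exact absurd h1 (by decide)
  · intro Q
    refine pairCount_congr fun p _ => ?_
    have : ∀ b : ZMod 3, b = 0 ∨ b = 1 ∨ b = 2 := by decide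
    have := this (p.2 : ZMod 3)
    tauto

lemma exists_abs_nulim_le : ∃ M : ℝ, 0 ≤ M ∧ ∀ r, |nulim r| ≤ M := by
  refine ⟨∑ r ∈ Finset.range 6, |nulim r| + 1, by positivity, fun r => ?_⟩
  rcases lt_or_ge r 6 with h | h
  · have := single_le_sum (f := fun r => |nulim r|) (fun i _ => abs_nonneg _)
      (Finset.mem_range.2 h)
    linarith
  · have hs : 0 ≤ ∑ r ∈ Finset.range 6, |nulim r| := by positivity
    have hr : (6 : ℝ) ≤ r := by exact_mod_cast h
    have hn : nulim r = 8 / (3 * (2 * (r : ℝ) - 5) * (2 * (r : ℝ) - 3) * (2 * (r : ℝ) - 1)) := by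
      match r, h with
      | r + 6, _ => rfl
    have h5 : 7 ≤ 2 * (r : ℝ) - 5 := by linarith
    have h3 : 9 ≤ 2 * (r : ℝ) - 3 := by linarith
    have h1 : 11 ≤ 2 * (r : ℝ) - 1 := by linarith
    have hd : 3 * 7 * 9 * 11 ≤ 3 * (2 * (r : ℝ) - 5) * (2 * (r : ℝ) - 3) * (2 * (r : ℝ) - 1) := by
      gcongr
    rw [hn, abs_of_nonneg (div_nonneg (by norm_num) (by linarith))]
    have := (div_le_one (by linarith)).2 (show (8 : ℝ) ≤ 3 * (2 * (r : ℝ) - 5) *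
      (2 * (r : ℝ) - 3) * (2 * (r : ℝ) - 1) by linarith)
    linarith

lemma natCast_ne_zero_of_eq {c0 : ℕ} (hc : c0 = 1 ∨ c0 = 2) : (c0 : ZMod 3) ≠ 0 := by
  rcases hc with rfl | rfl <;> decide

lemma sq_le_ND {c0 Q : ℕ} (hc : c0 = 1 ∨ c0 = 2) (hQ : 2 ≤ Q) :
    (Q : ℝ) ^ 2 / 1296 ^ 4 ≤ ND Q 3 c0 := by
  have hQ0 : (2 : ℝ) ≤ Q := by exact_mod_cast hQ
  have h1 : (1 : ℝ) ≤ ND Q 3 c0 := by exact_mod_cast one_le_ND hc hQ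
  set s := √(Q : ℝ) with hs
  have hss : s * s = Q := Real.mul_self_sqrt (by linarith)
  have hs0 : 0 ≤ s := Real.sqrt_nonneg _
  rcases le_or_gt s 1296 with h | h
  · rw [← hss]
    have : s ^ 4 ≤ 1296 ^ 4 := by gcongr
    rw [div_le_iff₀ (by norm_num)]
    nlinarith
  · have hlog : Real.log Q ≤ 2 * s := by
      have := Real.log_le_sub_one_of_pos (show 0 < s by linarith)
      rw [hs, Real.log_sqrt (by linarith), ← hs] at this
      linarith
    have hd := abs_le.1 (hasPairDensity_fst (natCast_ne_zero_of_eq hc) Q)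
    have hP : (pairCount Q (fun p => (p.1 : ZMod 3) = (c0 : ZMod 3)) : ℝ) ≤ ND Q 3 c0 := by
      exact_mod_cast pairCount_le_ND Q c0
    have hk : 1 / 36 * (3 / 2) * (Q : ℝ) ^ 2 ≤ coprimeDensity Q * (3 / 2) * (Q : ℝ) ^ 2 := by
      gcongr
      exact one_div_le_coprimeDensity (by omega)
    have hX : (Q : ℝ) * (1 + Real.log Q) ≤ Q * (3 * s) := by
      gcongr
      linarith
    have hX' : (Q : ℝ) * (3 * s) ≤ Q ^ 2 / 432 := by
      have : s * 1296 ≤ Q := by rw [← hss]; gcongr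
      nlinarith
    rw [div_le_iff₀ (by norm_num)]
    nlinarith [sq_nonneg (Q : ℝ)]

lemma le_two_mul_of_le_rpow {Q r : ℕ} (hQ : 2 ≤ Q)
    (hr : (r : ℝ) ≤ ((Q : ℝ) / Real.log Q) ^ ((1 : ℝ) / 3)) : (r : ℝ) ≤ 2 * Q := by
  have hQ0 : (2 : ℝ) ≤ Q := by exact_mod_cast hQ
  have hl : 1 / 2 ≤ Real.log Q :=
    (by linarith [Real.log_two_gt_d9] : (1 : ℝ) / 2 ≤ Real.log 2).trans
      (Real.log_le_log (by norm_num) hQ0)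
  have h1 : 1 ≤ (Q : ℝ) / Real.log Q := by
    rw [le_div_iff₀ (by linarith)]
    linarith [Real.log_le_sub_one_of_pos (show (0 : ℝ) < Q by linarith)]
  calc (r : ℝ) ≤ _ := hr
    _ ≤ ((Q : ℝ) / Real.log Q) ^ (1 : ℝ) := Real.rpow_le_rpow_of_exponent_le h1 (by norm_num)
    _ = (Q : ℝ) / Real.log Q := Real.rpow_one _
    _ ≤ Q / (1 / 2) := by gcongr
    _ = 2 * Q := by ring

lemma abs_NN_sub_le {c0 Q r : ℕ} {M : ℝ} (hc : c0 = 1 ∨ c0 = 2) (hM : |nulim r| ≤ M) :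
    |(NN Q r 3 c0 : ℝ) - nulim r * ND Q 3 c0| ≤
      r + 200 * (Q * (1 + Real.log Q)) + M * (9 * (Q * (1 + Real.log Q)) + 1) := by
  have hc' := natCast_ne_zero_of_eq hc
  have hG := hasPairDensity_isGap_nulim (neg_ne_zero.2 hc') r Q
  rw [neg_neg] at hG
  have hP := hasPairDensity_fst hc' Q
  set G := pairCount Q (IsGap (c0 : ZMod 3) r Q)
  set P := pairCount Q (fun p => (p.1 : ZMod 3) = (c0 : ZMod 3))
  have hN1 : (NN Q r 3 c0 : ℝ) ≤ G := by exact_mod_cast NN_le_pairCount Q r c0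
  have hN2 : (G : ℝ) ≤ NN Q r 3 c0 + r := by exact_mod_cast pairCount_le_NN_add Q r c0
  have hD1 : (P : ℝ) ≤ ND Q 3 c0 := by exact_mod_cast pairCount_le_ND Q c0
  have hD2 : (ND Q 3 c0 : ℝ) ≤ P + 1 := by exact_mod_cast ND_le_pairCount_add Q c0
  have hD : |coprimeDensity Q * (3 / 2) * (Q : ℝ) ^ 2 - ND Q 3 c0| ≤
      9 * (Q * (1 + Real.log Q)) + 1 := by
    rw [abs_le] at hP ⊢
    constructor <;> linarith
  have hN : |(NN Q r 3 c0 : ℝ) - coprimeDensity Q * (3 / 2 * nulim r) * (Q : ℝ) ^ 2| ≤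
      r + 200 * (Q * (1 + Real.log Q)) := by
    have : (0 : ℝ) ≤ r := Nat.cast_nonneg r
    rw [abs_le] at hG ⊢
    constructor <;> linarith
  calc |(NN Q r 3 c0 : ℝ) - nulim r * ND Q 3 c0|
      = |((NN Q r 3 c0 : ℝ) - coprimeDensity Q * (3 / 2 * nulim r) * (Q : ℝ) ^ 2) +
          nulim r * (coprimeDensity Q * (3 / 2) * (Q : ℝ) ^ 2 - ND Q 3 c0)| := by ring_nf
    _ ≤ _ := (abs_add_le _ _).trans (add_le_add hN ?_)
  rw [abs_mul]
  exact mul_le_mul hM hD (abs_nonneg _) ((abs_nonneg _).trans hM)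

end FareyGap

/-- Main theorem: for c₀ ∈ {1,2} there is an absolute constant C such that for all Q ≥ 2 and
r ≥ 0 with r ≤ (Q/ln Q)^{1/3}, one has |ν(Q;r,3,c₀) − ν(r;3,c₀)| ≤ C·(ln Q)/Q. -/
theorem farey_gap_distribution :
    ∃ C : ℝ, 0 < C ∧ ∀ c0 : ℕ, (c0 = 1 ∨ c0 = 2) → ∀ Q r : ℕ, 2 ≤ Q →
      (r : ℝ) ≤ ((Q : ℝ) / Real.log Q) ^ ((1 : ℝ) / 3) →
      |nuQ Q r 3 c0 - nulim r| ≤ C * Real.log Q / Q := by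
  obtain ⟨M, hM0, hM⟩ := FareyGap.exists_abs_nulim_le
  refine ⟨(604 + 29 * M) * 1296 ^ 4, by positivity, fun c0 hc Q r hQ hr => ?_⟩
  have hQ0 : (2 : ℝ) ≤ Q := by exact_mod_cast hQ
  have hl : 1 / 2 ≤ Real.log Q :=
    (by linarith [Real.log_two_gt_d9] : (1 : ℝ) / 2 ≤ Real.log 2).trans
      (Real.log_le_log (by norm_num) hQ0)
  have hr' := FareyGap.le_two_mul_of_le_rpow hQ hr
  have hD := FareyGap.sq_le_ND hc hQ
  have hN := FareyGap.abs_NN_sub_le (Q := Q) hc (hM r)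
  have hX : (Q : ℝ) * (1 + Real.log Q) ≤ 3 * (Q * Real.log Q) := by nlinarith
  have hY : (Q : ℝ) ≤ 2 * (Q * Real.log Q) := by nlinarith
  have hNY : |(NN Q r 3 c0 : ℝ) - nulim r * ND Q 3 c0| ≤
      (604 + 29 * M) * (Q * Real.log Q) := by
    have : M * (9 * (Q * (1 + Real.log Q)) + 1) ≤ M * (29 * (Q * Real.log Q)) :=
      mul_le_mul_of_nonneg_left (by linarith) hM0
    linarith
  have hQ2 : (0 : ℝ) < (Q : ℝ) ^ 2 / 1296 ^ 4 := by positivity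
  have hD0 : (0 : ℝ) < ND Q 3 c0 := hQ2.trans_le hD
  calc |nuQ Q r 3 c0 - nulim r|
      = |(NN Q r 3 c0 : ℝ) - nulim r * ND Q 3 c0| / ND Q 3 c0 := by
        rw [← abs_of_pos hD0, ← abs_div, abs_of_pos hD0, sub_div,
          mul_div_cancel_right₀ _ hD0.ne', nuQ]
    _ ≤ (604 + 29 * M) * (Q * Real.log Q) / ((Q : ℝ) ^ 2 / 1296 ^ 4) := by gcongr
    _ = (604 + 29 * M) * 1296 ^ 4 * Real.log Q / Q := by
        field_simp
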